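/- arXiv:1504.06213 — 2 statements merged into one kernel-verified Lean document; each statement's English description precedes it below -/
import Mathlib

section
/- Let F be a field of characteristic zero and let μ be a constant with 0 ≤ μ < 1. There exist constants c > 0 and n₀ (depending only on μ) such that for all n ≥ n₀ the following holds: with N = n·ψ the number of variables of NW_{n,μ}, if NW_{n,μ} = ∑_{i=1}^{T} ∏_{j=1}^{d} Q_{ij} where each Q_{ij} ∈ F[X_1,…,X_N] depends on at most N^μ of the variables, then T·d ≥ n^{c·√n}. -/
open MvPolynomial

/-- The parameter `γ` in the definition of the Nisan–Wigderson polynomial,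
with `δ = (1-μ)/2`. -/
noncomputable def nwGamma (μ : ℝ) : ℝ :=
  (2 * (μ + (1 - μ) / 2) + 1) / (1 - (μ + (1 - μ) / 2))

/-- The degree parameter `D` of the Nisan–Wigderson polynomial `NW_{n,μ}`:
`D = ((γ+ρ)/(2(1+γ)))·n` with `ρ = (μ+δ)·log N/log n`. -/
noncomputable def nwDreal (μ : ℝ) (n N : ℕ) : ℝ :=
  (nwGamma μ + (μ + (1 - μ) / 2) * Real.log N / Real.log n) / (2 * (1 + nwGamma μ)) * n

/-- The Nisan–Wigderson polynomial `NW_{n,μ}` on the variables `X_{i,j}`,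
`i ∈ [n]`, `j ∈ F_ψ`: the sum, over all univariate polynomials `f` over `F_ψ` of
degree at most `D - 1` (encoded by their coefficient vectors), of `∏ i, X_{i, f(i)}`. -/
noncomputable def NWpoly (F : Type*) [Field F] (μ : ℝ) (n ψ : ℕ) [NeZero ψ] :
    MvPolynomial (Fin n × ZMod ψ) F :=
  ∑ c : Fin ⌊nwDreal μ n (n * ψ)⌋₊ → ZMod ψ,
    ∏ i : Fin n, X (i, ∑ k : Fin ⌊nwDreal μ n (n * ψ)⌋₊, c k * ((i : ℕ) : ZMod ψ) ^ (k : ℕ))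

/-!
A random map `s : I × A → J` pulls a code of words over `J` back to the code of those words `a`
over a small alphabet `A` for which `i ↦ s (i, a i)` is a codeword. Correspondingly, the
substitution `X_{i,j} ↦ c_{i,j} + ∑_{s(i,a) = j} z_{i,a}` turns the generating polynomial of the
first code into one whose squarefree part of top degree generates the second. For a generic shift
`c` every nonzero factor has a nonzero constant term, and since a factor depends on at most `N ^ μ`
variables, with high probability it depends on fewer than `r` of the `z_{i,a}`.

Let `S` be a set of all but `k` of the positions and `Y = S × A`. The complexity measure is the
dimension of the span of the vectors of squarefree coefficients in `Y` of `z^L * ∂_B φ`, for `k`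
variables `B` outside `Y` and at most `ℓ` variables `L` in `Y`. It is subadditive in `φ`.

Dividing a factor with nonzero constant term by its `Y`-part leaves a power series whose squarefree
monomials all have degree in `Y` at most `r` times their degree outside `Y`. A product of such
factors is therefore `G * W` with `G` in the variables `Y` and with `∂_B W` of degree at most
`r * k` in `Y`, so its measure is at most the number of subsets of `Y` of size at most `ℓ + r * k`.

Conversely, let `K ⊆ Y` have size `ℓ + #S` and be isolating: it contains the graph on `S` of a
codeword `a`, and `K` minus this graph meets the graph of every other codeword that agrees with `a`
outside `S`. The shifted derivatives belonging to the isolating sets form an identity matrix on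
those sets, so the measure is at least their number. The codewords are nearly equidistributed,
hence a second moment estimate bounds the expected number of isolating sets from below.

For the Nisan–Wigderson polynomial the measure separates with `r ≈ √n`, `k ≈ √n / 4`, and an
alphabet of polynomial size at which a random set of size `ℓ + #S` contains the graphs on `S` of a
bounded but not vanishing number of codewords on average.
-/

/-- The exponent of the squarefree monomial with support `S`. -/
noncomputable def sqfreeExp {σ : Type*} (S : Finset σ) : σ →₀ ℕ :=
  ∑ i ∈ S, Finsupp.single i 1

/-- The coefficient of the squarefree monomial with support `S`. Polynomials are treated as power
series so that those with nonzero constant term become invertible. -/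
noncomputable def sqfreeCoeff {σ R : Type*} [Semiring R] (φ : MvPowerSeries σ R) (S : Finset σ) :
    R :=
  MvPowerSeries.coeff (sqfreeExp S) φ

/-- All squarefree monomials occurring in `φ` have a support satisfying `P`. -/
def SqfreeSupported {σ R : Type*} [Semiring R] (P : Finset σ → Prop) (φ : MvPowerSeries σ R) :
    Prop :=
  ∀ S, sqfreeCoeff φ S ≠ 0 → P S

/-- The part of a power series that involves only the variables in `Y`. -/
noncomputable def restrictVars {σ R : Type*} [Semiring R] [DecidableEq σ] (Y : Finset σ)
    (φ : MvPowerSeries σ R) : MvPowerSeries σ R :=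
  fun e => if e.support ⊆ Y then MvPowerSeries.coeff e φ else 0

section SquarefreeCoefficients

open scoped Finset

variable {σ R F : Type*}

lemma sqfreeExp_apply [DecidableEq σ] (S : Finset σ) (i : σ) :
    sqfreeExp S i = if i ∈ S then 1 else 0 := by
  simp [sqfreeExp, Finsupp.finsetSum_apply, Finsupp.single_apply]

lemma support_sqfreeExp (S : Finset σ) : (sqfreeExp S).support = S := by
  classical
  ext i
  simp [sqfreeExp_apply]

lemma sqfreeExp_injective : Function.Injective (sqfreeExp : Finset σ → σ →₀ ℕ) :=
  Function.LeftInverse.injective support_sqfreeExp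

variable [DecidableEq σ]

lemma add_eq_sqfreeExp_iff {S : Finset σ} {p q : σ →₀ ℕ} :
    p + q = sqfreeExp S ↔ ∃ T ⊆ S, p = sqfreeExp T ∧ q = sqfreeExp (S \ T) := by
  simp only [DFunLike.ext_iff, Finsupp.add_apply, sqfreeExp_apply, Finset.mem_sdiff]
  constructor
  · intro h
    refine ⟨p.support, fun i hi => ?_, fun i => ?_, fun i => ?_⟩
    · have := h i
      rw [Finsupp.mem_support_iff] at hi
      grind
    all_goals
      have := h i
      simp only [Finsupp.mem_support_iff]
      grind
  · rintro ⟨T, hTS, hp, hq⟩ i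
    have := @hTS i
    grind

section Semiring

variable [Semiring R]

lemma sqfreeCoeff_mul (φ ψ : MvPowerSeries σ R) (S : Finset σ) :
    sqfreeCoeff (φ * ψ) S = ∑ T ∈ S.powerset, sqfreeCoeff φ T * sqfreeCoeff ψ (S \ T) := by
  rw [sqfreeCoeff, MvPowerSeries.coeff_mul]
  symm
  refine Finset.sum_bij (fun T _ => (sqfreeExp T, sqfreeExp (S \ T))) (fun T hT => ?_)
    (fun T _ T' _ h => sqfreeExp_injective (Prod.ext_iff.mp h).1) ?_ fun T _ => rfl
  · rw [Finset.HasAntidiagonal.mem_antidiagonal, add_eq_sqfreeExp_iff]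
    exact ⟨T, Finset.mem_powerset.mp hT, rfl, rfl⟩
  · rintro ⟨p, q⟩ h
    obtain ⟨T, hTS, rfl, rfl⟩ :=
      add_eq_sqfreeExp_iff.mp (Finset.HasAntidiagonal.mem_antidiagonal.mp h)
    exact ⟨T, Finset.mem_powerset.mpr hTS, rfl⟩

lemma sqfreeCoeff_empty {σ : Type*} (φ : MvPowerSeries σ R) :
    sqfreeCoeff φ ∅ = MvPowerSeries.constantCoeff φ := by
  rw [sqfreeCoeff, sqfreeExp, Finset.sum_empty, MvPowerSeries.coeff_zero_eq_constantCoeff]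

lemma sqfreeCoeff_one (S : Finset σ) :
    sqfreeCoeff (1 : MvPowerSeries σ R) S = if S = ∅ then 1 else 0 := by
  have hzero : (0 : σ →₀ ℕ) = sqfreeExp ∅ := by simp [sqfreeExp]
  rw [sqfreeCoeff, MvPowerSeries.coeff_one, hzero]
  simp only [sqfreeExp_injective.eq_iff]

lemma sqfreeCoeff_restrictVars (Y : Finset σ) (φ : MvPowerSeries σ R) (S : Finset σ) :
    sqfreeCoeff (restrictVars Y φ) S = if S ⊆ Y then sqfreeCoeff φ S else 0 := by
  change (if (sqfreeExp S).support ⊆ Y then _ else _) = _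
  rw [support_sqfreeExp, sqfreeCoeff]

lemma constantCoeff_restrictVars (Y : Finset σ) (φ : MvPowerSeries σ R) :
    MvPowerSeries.constantCoeff (restrictVars Y φ) = MvPowerSeries.constantCoeff φ := by
  rw [← sqfreeCoeff_empty, sqfreeCoeff_restrictVars, if_pos (Finset.empty_subset Y),
    sqfreeCoeff_empty]

lemma sqfreeSupported_restrictVars (Y : Finset σ) (φ : MvPowerSeries σ R) :
    SqfreeSupported (· ⊆ Y) (restrictVars Y φ) := fun S hS => by
  rw [sqfreeCoeff_restrictVars] at hS
  exact (ite_ne_right_iff.mp hS).1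

lemma SqfreeSupported.restrictVars {P : Finset σ → Prop} {φ : MvPowerSeries σ R}
    (h : SqfreeSupported P φ) (Y : Finset σ) : SqfreeSupported P (restrictVars Y φ) := by
  intro S hS
  rw [sqfreeCoeff_restrictVars] at hS
  exact h S (ite_ne_right_iff.mp hS).2

lemma SqfreeSupported.mul {P : Finset σ → Prop} {φ ψ : MvPowerSeries σ R}
    (hφ : SqfreeSupported P φ) (hψ : SqfreeSupported P ψ)
    (hP : ∀ S T, Disjoint S T → P S → P T → P (S ∪ T)) : SqfreeSupported P (φ * ψ) := by
  intro S hS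
  rw [sqfreeCoeff_mul] at hS
  obtain ⟨T, hT, hne⟩ := Finset.exists_ne_zero_of_sum_ne_zero hS
  rw [← Finset.union_sdiff_of_subset (Finset.mem_powerset.mp hT)]
  exact hP _ _ Finset.disjoint_sdiff (hφ T (left_ne_zero_of_mul hne))
    (hψ _ (right_ne_zero_of_mul hne))

omit [DecidableEq σ] in
lemma sqfreeSupported_one {P : Finset σ → Prop} (hP : P ∅) :
    SqfreeSupported P (1 : MvPowerSeries σ R) := fun S hS => by
  classical
  rw [sqfreeCoeff_one] at hS
  rwa [(ite_ne_right_iff.mp hS).1]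

end Semiring

lemma SqfreeSupported.prod [CommSemiring R] {P : Finset σ → Prop} (hP0 : P ∅)
    (hP : ∀ S T, Disjoint S T → P S → P T → P (S ∪ T)) {ι : Type*} {s : Finset ι}
    {u : ι → MvPowerSeries σ R} (hu : ∀ j ∈ s, SqfreeSupported P (u j)) :
    SqfreeSupported P (∏ j ∈ s, u j) :=
  Finset.prod_induction u (SqfreeSupported P) (fun _ _ h h' => h.mul h' hP)
    (sqfreeSupported_one hP0) hu

omit [DecidableEq σ] in
lemma sqfreeSupported_vars [CommSemiring R] (p : MvPolynomial σ R) :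
    SqfreeSupported (· ⊆ p.vars) (p : MvPowerSeries σ R) := by
  intro S hS i hi
  rw [sqfreeCoeff, coeff_coe] at hS
  exact (mem_vars_iff_mem_support i).mpr
    ⟨sqfreeExp S, mem_support_iff.mpr hS, by rwa [support_sqfreeExp]⟩

section Field

variable [Field F]

lemma SqfreeSupported.inv {P : Finset σ → Prop} (hP0 : P ∅)
    (hP : ∀ S T, Disjoint S T → P S → P T → P (S ∪ T)) {φ : MvPowerSeries σ F}
    (hφ : SqfreeSupported P φ) (h0 : MvPowerSeries.constantCoeff φ ≠ 0) :
    SqfreeSupported P φ⁻¹ := by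
  intro S
  induction S using Finset.strongInduction with
  | H S ih =>
  intro hS
  rcases S.eq_empty_or_nonempty with rfl | hne
  · exact hP0
  have hsum := sqfreeCoeff_mul φ φ⁻¹ S
  rw [MvPowerSeries.mul_inv_cancel φ h0, sqfreeCoeff_one, if_neg hne.ne_empty,
    ← Finset.add_sum_erase _ _ (Finset.empty_mem_powerset S), sqfreeCoeff_empty,
    Finset.sdiff_empty] at hsum
  have hrest : ∑ T ∈ S.powerset.erase ∅, sqfreeCoeff φ T * sqfreeCoeff φ⁻¹ (S \ T) ≠ 0 :=
    fun h => mul_ne_zero h0 hS (by rw [hsum, h, add_zero])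
  obtain ⟨T, hT, hTne⟩ := Finset.exists_ne_zero_of_sum_ne_zero hrest
  obtain ⟨hT0, hTS⟩ := Finset.mem_erase.mp hT
  have hTS := Finset.mem_powerset.mp hTS
  rw [← Finset.union_sdiff_of_subset hTS]
  exact hP _ _ Finset.disjoint_sdiff (hφ T (left_ne_zero_of_mul hTne))
    (ih _ (Finset.sdiff_ssubset hTS (Finset.nonempty_iff_ne_empty.mpr hT0))
      (right_ne_zero_of_mul hTne))

lemma card_inter_le_mul_card_sdiff_union {r : ℕ} {Y S T : Finset σ} (hST : Disjoint S T)
    (hS : #(S ∩ Y) ≤ r * #(S \ Y)) (hT : #(T ∩ Y) ≤ r * #(T \ Y)) :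
    #((S ∪ T) ∩ Y) ≤ r * #((S ∪ T) \ Y) := by
  rw [Finset.union_inter_distrib_right, Finset.union_sdiff_distrib,
    Finset.card_union_of_disjoint (hST.mono Finset.inter_subset_left Finset.inter_subset_left),
    Finset.card_union_of_disjoint (hST.mono Finset.sdiff_subset Finset.sdiff_subset), mul_add]
  exact add_le_add hS hT

/-- A nonempty monomial of `u * (restrictVars Y u)⁻¹` must leave `Y`, because the `Y`-part of that
quotient is `1`. -/
lemma sqfreeSupported_mul_inv_restrictVars {u : MvPowerSeries σ F} {V : Finset σ} {r : ℕ}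
    (Y : Finset σ) (hr : #V ≤ r) (h0 : MvPowerSeries.constantCoeff u ≠ 0)
    (hV : SqfreeSupported (· ⊆ V) u) :
    SqfreeSupported (fun S => #(S ∩ Y) ≤ r * #(S \ Y)) (u * (restrictVars Y u)⁻¹) := by
  intro S hS
  have h0' : MvPowerSeries.constantCoeff (restrictVars Y u) ≠ 0 := by
    rwa [constantCoeff_restrictVars]
  have hunion : ∀ S T : Finset σ, Disjoint S T → S ⊆ V → T ⊆ V → S ∪ T ⊆ V :=
    fun _ _ _ => Finset.union_subset
  have hSV : S ⊆ V :=
    hV.mul ((hV.restrictVars Y).inv (Finset.empty_subset V) hunion h0') hunion S hS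
  by_cases hSY : S ⊆ Y
  · have hcoeff : sqfreeCoeff (u * (restrictVars Y u)⁻¹) S
        = sqfreeCoeff (restrictVars Y u * (restrictVars Y u)⁻¹) S := by
      rw [sqfreeCoeff_mul, sqfreeCoeff_mul]
      refine Finset.sum_congr rfl fun T hT => ?_
      rw [sqfreeCoeff_restrictVars, if_pos ((Finset.mem_powerset.mp hT).trans hSY)]
    rw [hcoeff, MvPowerSeries.mul_inv_cancel _ h0'] at hS
    simp [sqfreeSupported_one (P := (· = ∅)) rfl S hS]
  · calc #(S ∩ Y) ≤ #V := Finset.card_le_card (Finset.inter_subset_left.trans hSV)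
      _ ≤ r * 1 := by omega
      _ ≤ r * #(S \ Y) :=
        Nat.mul_le_mul_left r (Finset.card_pos.mpr (Finset.sdiff_nonempty.mpr hSY))

lemma exists_prod_eq_mul {ι : Type*} {s : Finset ι} {u : ι → MvPowerSeries σ F}
    {V : ι → Finset σ} {r : ℕ} (Y : Finset σ) (hr : ∀ j ∈ s, #(V j) ≤ r)
    (h0 : ∀ j ∈ s, MvPowerSeries.constantCoeff (u j) ≠ 0)
    (hV : ∀ j ∈ s, SqfreeSupported (· ⊆ V j) (u j)) :
    ∃ G W : MvPowerSeries σ F, ∏ j ∈ s, u j = G * W ∧ SqfreeSupported (· ⊆ Y) G ∧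
      SqfreeSupported (fun S => #(S ∩ Y) ≤ r * #(S \ Y)) W := by
  refine ⟨∏ j ∈ s, restrictVars Y (u j), ∏ j ∈ s, u j * (restrictVars Y (u j))⁻¹, ?_,
    .prod (Finset.empty_subset Y) (fun _ _ _ => Finset.union_subset)
      fun j _ => sqfreeSupported_restrictVars Y (u j),
    .prod (by simp) (fun _ _ => card_inter_le_mul_card_sdiff_union)
      fun j hj => sqfreeSupported_mul_inv_restrictVars Y (hr j hj) (h0 j hj) (hV j hj)⟩
  rw [← Finset.prod_mul_distrib]
  refine Finset.prod_congr rfl fun j hj => ?_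
  rw [mul_left_comm, MvPowerSeries.mul_inv_cancel, mul_one]
  rw [constantCoeff_restrictVars]
  exact h0 j hj

end Field

end SquarefreeCoefficients

/-- The derivative of `φ` by the squarefree monomial of `B`, multiplied by that of `L` and projected
to the squarefree monomials in the variables of `Y`, as a vector of coefficients. -/
noncomputable def shiftedPartial {σ R : Type*} [Semiring R] [DecidableEq σ] (Y : Finset σ)
    (φ : MvPowerSeries σ R) (B L : Finset σ) : Finset σ → R :=
  fun K => if L ⊆ K ∧ K ⊆ Y then sqfreeCoeff φ (B ∪ K \ L) else 0

/-- The projected shifted partials of `φ`: derivatives by `k` variables outside `Y`, shifts by at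
most `ℓ` variables of `Y`. -/
def shiftedPartialSpan {σ R : Type*} [Semiring R] [DecidableEq σ] (Y : Finset σ) (k ℓ : ℕ)
    (φ : MvPowerSeries σ R) : Submodule R (Finset σ → R) :=
  Submodule.span R
    {v | ∃ B L, Disjoint B Y ∧ B.card = k ∧ L ⊆ Y ∧ L.card ≤ ℓ ∧ v = shiftedPartial Y φ B L}

section ShiftedPartials

open scoped Finset

lemma card_le_finrank_of_forall_exists_mem {κ F : Type*} [Field F] [Finite κ]
    (U : Submodule F (κ → F)) (𝒦 : Finset κ)
    (h : ∀ K ∈ 𝒦, ∃ v ∈ U, v K ≠ 0 ∧ ∀ K' ∈ 𝒦, K' ≠ K → v K' = 0) :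
    #𝒦 ≤ Module.finrank F U := by
  choose! v hvU hvK hv using h
  have hli : LinearIndependent F fun K : 𝒦 => (⟨v K, hvU K K.2⟩ : U) := by
    refine linearIndependent_iff'.mpr fun s g hg K hK => ?_
    have heval := congrFun (congrArg Subtype.val hg) (K : κ)
    simp only [AddSubmonoidClass.coe_finsetSum, SetLike.val_smul, Finset.sum_apply, Pi.smul_apply,
      smul_eq_mul, ZeroMemClass.coe_zero, Pi.zero_apply] at heval
    rw [Finset.sum_eq_single_of_mem K hK fun K' _ hne =>
      mul_eq_zero_of_right _ (hv K' K'.2 K K.2 fun h => hne (Subtype.ext h.symm))] at heval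
    exact (mul_eq_zero.mp heval).resolve_right (hvK K K.2)
  simpa using hli.fintype_card_le_finrank

variable {σ R F : Type*} [DecidableEq σ] {Y : Finset σ} {k ℓ : ℕ}

lemma shiftedPartial_add [Semiring R] (φ ψ : MvPowerSeries σ R) (B L : Finset σ) :
    shiftedPartial Y (φ + ψ) B L = shiftedPartial Y φ B L + shiftedPartial Y ψ B L := by
  ext K
  simp only [shiftedPartial, sqfreeCoeff, map_add, Pi.add_apply]
  split_ifs <;> simp

lemma shiftedPartial_mem_shiftedPartialSpan [Semiring R] (φ : MvPowerSeries σ R) {B L : Finset σ}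
    (hBY : Disjoint B Y) (hB : #B = k) (hLY : L ⊆ Y) (hL : #L ≤ ℓ) :
    shiftedPartial Y φ B L ∈ shiftedPartialSpan Y k ℓ φ :=
  Submodule.subset_span ⟨B, L, hBY, hB, hLY, hL, rfl⟩

lemma shiftedPartialSpan_add_le [Semiring R] (φ ψ : MvPowerSeries σ R) :
    shiftedPartialSpan Y k ℓ (φ + ψ) ≤ shiftedPartialSpan Y k ℓ φ ⊔ shiftedPartialSpan Y k ℓ ψ := by
  refine Submodule.span_le.mpr ?_
  rintro _ ⟨B, L, hBY, hB, hLY, hL, rfl⟩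
  rw [shiftedPartial_add]
  exact Submodule.add_mem_sup (shiftedPartial_mem_shiftedPartialSpan φ hBY hB hLY hL)
    (shiftedPartial_mem_shiftedPartialSpan ψ hBY hB hLY hL)

lemma shiftedPartialSpan_zero [Semiring R] :
    shiftedPartialSpan Y k ℓ (0 : MvPowerSeries σ R) = ⊥ := by
  refine Submodule.span_eq_bot.mpr ?_
  rintro _ ⟨B, L, -, -, -, -, rfl⟩
  ext K
  simp [shiftedPartial, sqfreeCoeff]

lemma finrank_shiftedPartialSpan_sum_le [Field F] [Finite σ] {ι : Type*} (s : Finset ι)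
    (φ : ι → MvPowerSeries σ F) :
    Module.finrank F (shiftedPartialSpan Y k ℓ (∑ i ∈ s, φ i))
      ≤ ∑ i ∈ s, Module.finrank F (shiftedPartialSpan Y k ℓ (φ i)) :=
  Finset.le_sum_of_subadditive (fun φ => Module.finrank F (shiftedPartialSpan Y k ℓ φ))
    (by rw [shiftedPartialSpan_zero, finrank_bot])
    (fun φ ψ => (Submodule.finrank_mono (shiftedPartialSpan_add_le φ ψ)).trans
      (Submodule.finrank_add_le_finrank_add_finrank _ _)) s φ

lemma sqfreeCoeff_mul_union_sdiff [CommSemiring R] {G : MvPowerSeries σ R}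
    (hG : SqfreeSupported (· ⊆ Y) G) (W : MvPowerSeries σ R) {B L K : Finset σ}
    (hBY : Disjoint B Y) (hLK : L ⊆ K) (hKY : K ⊆ Y) :
    sqfreeCoeff (G * W) (B ∪ K \ L)
      = ∑ H ∈ Finset.Icc L K, sqfreeCoeff W (B ∪ H \ L) * sqfreeCoeff G (K \ H) := by
  have hBK : Disjoint B K := hBY.mono_right hKY
  have hsub : (K \ L).powerset ⊆ (B ∪ K \ L).powerset :=
    Finset.powerset_mono.mpr Finset.subset_union_right
  rw [sqfreeCoeff_mul, ← Finset.sum_subset hsub fun T hT hT' => ?_]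
  · refine Finset.sum_bij' (fun T _ => K \ T) (fun H _ => K \ H) ?_ ?_ ?_ ?_ ?_
    · intro T hT
      rw [Finset.mem_powerset, Finset.subset_sdiff] at hT
      exact Finset.mem_Icc.mpr
        ⟨Finset.subset_sdiff.mpr ⟨hLK, hT.2.symm⟩, Finset.sdiff_subset⟩
    · intro H hH
      exact Finset.mem_powerset.mpr (Finset.sdiff_subset_sdiff subset_rfl (Finset.mem_Icc.mp hH).1)
    · intro T hT
      exact Finset.sdiff_sdiff_eq_self ((Finset.mem_powerset.mp hT).trans Finset.sdiff_subset)
    · intro H hH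
      exact Finset.sdiff_sdiff_eq_self (Finset.mem_Icc.mp hH).2
    · intro T hT
      have hTK : T ⊆ K := (Finset.mem_powerset.mp hT).trans Finset.sdiff_subset
      rw [Finset.sdiff_sdiff_eq_self hTK, mul_comm, Finset.union_sdiff_distrib,
        Finset.sdiff_eq_self_of_disjoint (hBK.mono_right hTK), sdiff_right_comm]
  · rw [Finset.mem_powerset] at hT hT'
    refine mul_eq_zero_of_left (not_imp_comm.mp (hG T) fun hTY => hT' ?_) _
    exact (hBY.symm.mono_left hTY).left_le_of_le_sup_left hT

/-- A factor in the variables of `Y` is not touched by the derivative, so the vectors on the right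
depend on neither `B` nor `L`. -/
lemma shiftedPartial_mul [CommSemiring R] {G : MvPowerSeries σ R}
    (hG : SqfreeSupported (· ⊆ Y) G) (W : MvPowerSeries σ R) {B : Finset σ} (L : Finset σ)
    (hBY : Disjoint B Y) :
    shiftedPartial Y (G * W) B L
      = ∑ H ∈ Finset.Icc L Y, sqfreeCoeff W (B ∪ H \ L) • shiftedPartial Y G ∅ H := by
  ext K
  simp only [Finset.sum_apply, Pi.smul_apply, smul_eq_mul, shiftedPartial, Finset.empty_union]
  split_ifs with hK
  · rw [sqfreeCoeff_mul_union_sdiff hG W hBY hK.1 hK.2]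
    simp only [mul_ite, mul_zero, ← Finset.sum_filter]
    refine Finset.sum_congr (Finset.ext fun H => ?_) fun _ _ => rfl
    simp only [Finset.mem_Icc, Finset.mem_filter]
    exact ⟨fun h => ⟨⟨h.1, h.2.trans hK.2⟩, h.2, hK.2⟩, fun h => ⟨h.1.1, h.2.1⟩⟩
  · refine (Finset.sum_eq_zero fun H hH => ?_).symm
    rw [if_neg fun h => hK ⟨(Finset.mem_Icc.mp hH).1.trans h.1, h.2⟩, mul_zero]

lemma shiftedPartialSpan_mul_le [CommSemiring R] {G W : MvPowerSeries σ R} {r : ℕ}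
    (hG : SqfreeSupported (· ⊆ Y) G)
    (hW : SqfreeSupported (fun S => #(S ∩ Y) ≤ r * #(S \ Y)) W) :
    shiftedPartialSpan Y k ℓ (G * W)
      ≤ Submodule.span R (shiftedPartial Y G ∅ '' {H | H ⊆ Y ∧ #H ≤ ℓ + r * k}) := by
  refine Submodule.span_le.mpr ?_
  rintro _ ⟨B, L, hBY, hB, -, hL, rfl⟩
  rw [shiftedPartial_mul hG W L hBY]
  refine Submodule.sum_mem _ fun H hH => ?_
  obtain ⟨hLH, hHY⟩ := Finset.mem_Icc.mp hH
  by_cases hne : sqfreeCoeff W (B ∪ H \ L) = 0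
  · rw [hne, zero_smul]
    exact Submodule.zero_mem _
  · refine Submodule.smul_mem _ _ (Submodule.subset_span (Set.mem_image_of_mem _ ⟨hHY, ?_⟩))
    have hLHY : H \ L ⊆ Y := Finset.sdiff_subset.trans hHY
    have hdeg : #((B ∪ H \ L) ∩ Y) ≤ r * #((B ∪ H \ L) \ Y) := hW _ hne
    rw [Finset.union_inter_distrib_right, Finset.disjoint_iff_inter_eq_empty.mp hBY,
      Finset.empty_union, Finset.inter_eq_left.mpr hLHY, Finset.union_sdiff_distrib,
      Finset.sdiff_eq_self_of_disjoint hBY, Finset.sdiff_eq_empty_iff_subset.mpr hLHY,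
      Finset.union_empty, hB] at hdeg
    rw [← Finset.card_sdiff_add_card_eq_card hLH]
    omega

lemma finrank_shiftedPartialSpan_prod_le [Field F] {ι : Type*} {s : Finset ι}
    {u : ι → MvPowerSeries σ F} {V : ι → Finset σ} {r : ℕ} (hr : ∀ j ∈ s, #(V j) ≤ r)
    (h0 : ∀ j ∈ s, MvPowerSeries.constantCoeff (u j) ≠ 0)
    (hV : ∀ j ∈ s, SqfreeSupported (· ⊆ V j) (u j)) :
    Module.finrank F (shiftedPartialSpan Y k ℓ (∏ j ∈ s, u j))
      ≤ #{H ∈ Y.powerset | #H ≤ ℓ + r * k} := by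
  classical
  obtain ⟨G, W, hGW, hG, hW⟩ := exists_prod_eq_mul Y hr h0 hV
  have hle := shiftedPartialSpan_mul_le (k := k) (ℓ := ℓ) hG hW
  have himage : shiftedPartial Y G ∅ '' {H | H ⊆ Y ∧ #H ≤ ℓ + r * k}
      = ({H ∈ Y.powerset | #H ≤ ℓ + r * k}.image (shiftedPartial Y G ∅) : Finset _) := by
    ext
    simp
  rw [himage] at hle
  rw [hGW]
  exact (Submodule.finrank_mono hle).trans
    ((finrank_span_finset_le_card _).trans Finset.card_image_le)

end ShiftedPartials

/-- The graph of the restriction of the word `a` to the coordinates in `S`. -/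
def graphOn {I A : Type*} (S : Finset I) (a : I → A) : Finset (I × A) :=
  S.map ⟨fun i => (i, a i), fun _ _ h => congrArg Prod.fst h⟩

/-- The set `K` contains the tail (the graph over `S`) of a word `a` of the code `𝒜`, and the rest
of `K` meets the tail of every other word of `𝒜` with the same head (the part outside `S`). -/
def IsIsolating {I A : Type*} [DecidableEq I] [DecidableEq A] (𝒜 : Finset (I → A)) (S : Finset I)
    (K : Finset (I × A)) : Prop :=
  ∃ a ∈ 𝒜, graphOn S a ⊆ K ∧
    ∀ b ∈ 𝒜, b ≠ a → (∀ i ∉ S, b i = a i) → ¬ Disjoint (K \ graphOn S a) (graphOn S b)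

/-- The sets of size `κ` over the coordinates in `S` which isolate a word of the code `𝒜`. -/
noncomputable def isolatingSets {I A : Type*} [DecidableEq I] [DecidableEq A] [Fintype A]
    (𝒜 : Finset (I → A)) (S : Finset I) (κ : ℕ) : Finset (Finset (I × A)) :=
  open Classical in {K ∈ (S ×ˢ Finset.univ).powersetCard κ | IsIsolating 𝒜 S K}

/-- The substitution `X (i, j) ↦ c (i, j) + ∑ x with s (i, x) = j, X (i, x)`: a map `s` to the
letters of a large alphabet turns into a map from variables to linear forms, shifted by the point
`c` so that polynomials not vanishing at `c` acquire nonzero constant terms. -/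
noncomputable def liftVars {R I A J : Type*} [CommSemiring R] [Fintype A] [DecidableEq J]
    (s : I × A → J) (c : I × J → R) : MvPolynomial (I × J) R →ₐ[R] MvPolynomial (I × A) R :=
  aeval fun p => C (c p) + ∑ x : A with s (p.1, x) = p.2, X (p.1, x)

/-- The set-multilinear polynomial whose monomials are the graphs of the words `f x`. -/
noncomputable def codePoly (R : Type*) {ι I J : Type*} [CommSemiring R] [Fintype ι] [Fintype I]
    (f : ι → I → J) : MvPolynomial (I × J) R :=
  ∑ x, ∏ i, X (i, f x i)

/-- The words `a` whose image `i ↦ s (i, a i)` under `s` is one of the words `f x`. -/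
noncomputable def wordCode {ι I A J : Type*} [Fintype I] [DecidableEq I] [Fintype A]
    (f : ι → I → J) (s : I × A → J) : Finset (I → A) :=
  open Classical in {a | ∃ x, ∀ i, s (i, a i) = f x i}

section Substitution

open scoped Finset

variable {R F ι I A J : Type*}

lemma mem_graphOn {S : Finset I} {a : I → A} {z : I × A} :
    z ∈ graphOn S a ↔ z.1 ∈ S ∧ a z.1 = z.2 := by
  simp only [graphOn, Finset.mem_map, Prod.ext_iff]
  exact ⟨fun ⟨i, hi, h, h'⟩ => h ▸ ⟨hi, h'⟩, fun h => ⟨z.1, h.1, rfl, h.2⟩⟩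

lemma card_graphOn (S : Finset I) (a : I → A) : #(graphOn S a) = #S :=
  Finset.card_map _

lemma graphOn_subset_product [Fintype A] (S : Finset I) (a : I → A) :
    graphOn S a ⊆ S ×ˢ Finset.univ := fun z hz =>
  Finset.mem_product.mpr ⟨(mem_graphOn.mp hz).1, Finset.mem_univ z.2⟩

lemma graphOn_sdiff_graphOn [DecidableEq I] [DecidableEq A] (S : Finset I) (a b : I → A) :
    graphOn S b \ graphOn S a = graphOn {i ∈ S | b i ≠ a i} b := by
  ext z
  simp only [Finset.mem_sdiff, mem_graphOn, Finset.mem_filter, ne_eq]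
  grind

lemma graphOn_univ_injective [Fintype I] :
    Function.Injective (graphOn Finset.univ : (I → A) → Finset (I × A)) := fun a b h =>
  funext fun i => (mem_graphOn.mp (h ▸ mem_graphOn.mpr ⟨Finset.mem_univ i, rfl⟩ :
    (i, b i) ∈ graphOn Finset.univ a)).2

lemma graphOn_compl_union_graphOn [Fintype I] [DecidableEq I] [DecidableEq A] (S : Finset I)
    (a : I → A) : graphOn Sᶜ a ∪ graphOn S a = graphOn Finset.univ a := by
  ext z
  simp only [Finset.mem_union, mem_graphOn, Finset.mem_compl, Finset.mem_univ, true_and]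
  tauto

lemma disjoint_graphOn_compl_product [Fintype I] [Fintype A] [DecidableEq I] (S : Finset I)
    (a : I → A) : Disjoint (graphOn Sᶜ a) (S ×ˢ Finset.univ) :=
  Finset.disjoint_left.mpr fun _ hz hz' =>
    Finset.mem_compl.mp (mem_graphOn.mp hz).1 (Finset.mem_product.mp hz').1

lemma mem_wordCode [Fintype I] [DecidableEq I] [Fintype A] {f : ι → I → J} {s : I × A → J}
    {a : I → A} : a ∈ wordCode f s ↔ ∃ x, ∀ i, s (i, a i) = f x i := by
  simp [wordCode]

lemma mem_isolatingSets [DecidableEq I] [DecidableEq A] [Fintype A] {𝒜 : Finset (I → A)}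
    {S : Finset I} {κ : ℕ} {K : Finset (I × A)} :
    K ∈ isolatingSets 𝒜 S κ ↔ (K ⊆ S ×ˢ Finset.univ ∧ #K = κ) ∧ IsIsolating 𝒜 S K := by
  simp only [isolatingSets, Finset.mem_filter, Finset.mem_powersetCard]

/-- If `B ∪ K' \ L` is the graph of a word `b`, then `b` has the head of the word `a` isolated by
`K`, and its tail `K' \ L` avoids `L`. -/
lemma IsIsolating.exists_sdiff_unique [Fintype I] [Fintype A] [DecidableEq I] [DecidableEq A]
    {𝒜 : Finset (I → A)} {S : Finset I} {K : Finset (I × A)} (hK : IsIsolating 𝒜 S K) :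
    ∃ a ∈ 𝒜, graphOn S a ⊆ K ∧ ∀ K' ⊆ S ×ˢ Finset.univ, K \ graphOn S a ⊆ K' →
      ∀ b ∈ 𝒜, graphOn Sᶜ a ∪ K' \ (K \ graphOn S a) = graphOn Finset.univ b → K' = K := by
  obtain ⟨a, ha, haK, hiso⟩ := hK
  refine ⟨a, ha, haK, fun K' hK'S hLK' b hb hgraph => ?_⟩
  have htail : K' \ (K \ graphOn S a) = graphOn S b := by
    ext z
    have hz : z ∈ graphOn Sᶜ a ∪ K' \ (K \ graphOn S a) ↔ z ∈ graphOn Finset.univ b := by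
      rw [hgraph]
    have hzS : z ∈ K' → z.1 ∈ S := fun h => (Finset.mem_product.mp (hK'S h)).1
    simp only [Finset.mem_union, mem_graphOn, Finset.mem_compl, Finset.mem_univ, true_and,
      Finset.mem_sdiff] at hz ⊢
    tauto
  have hhead : ∀ i ∉ S, b i = a i := fun i hi => by
    have hia : (i, a i) ∈ graphOn Finset.univ b :=
      hgraph ▸ Finset.mem_union_left _ (mem_graphOn.mpr ⟨Finset.mem_compl.mpr hi, rfl⟩)
    exact (mem_graphOn.mp hia).2
  have hba : b = a := not_imp_comm.mp (fun hba => hiso b hb hba hhead)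
    (not_not.mpr (htail ▸ Finset.disjoint_sdiff))
  rw [← Finset.union_sdiff_of_subset hLK', htail, hba, Finset.sdiff_union_of_subset haK]

lemma degree_sqfreeExp {σ : Type*} (S : Finset σ) : (sqfreeExp S).degree = #S := by
  simp [sqfreeExp, map_sum]

lemma prod_X_eq_monomial [CommSemiring R] [Fintype I] (a : I → A) :
    (∏ i, X (i, a i) : MvPolynomial (I × A) R)
      = monomial (sqfreeExp (graphOn Finset.univ a)) 1 := by
  rw [sqfreeExp, graphOn, Finset.sum_map, monomial_sum_one]
  rfl

section CommSemiring

variable [CommSemiring R] [Fintype A] [DecidableEq J]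

lemma constantCoeff_liftVars (s : I × A → J) (c : I × J → R) (Q : MvPolynomial (I × J) R) :
    constantCoeff (liftVars s c Q) = eval c Q := by
  have hcomp : (constantCoeff (σ := I × A)).comp (liftVars s c).toRingHom = eval c :=
    ringHom_ext (by simp [liftVars]) (by simp [liftVars])
  exact DFunLike.congr_fun hcomp Q

lemma mem_vars_of_mem_vars_liftVars [Nontrivial R] {s : I × A → J} {c : I × J → R}
    {Q : MvPolynomial (I × J) R} {z : I × A} (hz : z ∈ (liftVars s c Q).vars) :
    (z.1, s z) ∈ Q.vars := by
  classical
  obtain ⟨p, hp, hzp⟩ := mem_vars_bind₁ _ Q hz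
  have hzp := vars_add_subset _ _ hzp
  rw [vars_C, Finset.empty_union] at hzp
  obtain ⟨x, hx, hzx⟩ := Finset.mem_biUnion.mp (vars_sum_subset _ _ hzp)
  obtain rfl : z = (p.1, x) := by simpa using hzx
  rwa [(Finset.mem_filter.mp hx).2]

/-- Only the monomials of full degree matter, and these avoid the constants `c`. -/
lemma coeff_liftVars_prod_X [Fintype I] [DecidableEq I] [DecidableEq A] (s : I × A → J)
    (c : I × J → R) (f : I → J) {S : Finset (I × A)} (hS : #S = Fintype.card I) :
    coeff (sqfreeExp S) (liftVars s c (∏ i, X (i, f i)))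
      = #{a : I → A | graphOn Finset.univ a = S ∧ ∀ i, s (i, a i) = f i} := by
  have hlift : liftVars s c (∏ i, X (i, f i))
      = ∏ i, (C (c (i, f i)) + ∑ x : A with s (i, x) = f i, X (i, x)) := by
    simp only [liftVars, map_prod, aeval_X]
  have hzero : ∀ t ∈ Finset.univ.powerset, t ≠ ∅ → coeff (sqfreeExp S)
      ((∏ i ∈ t, C (c (i, f i))) *
        ∏ i ∈ Finset.univ \ t, ∑ x : A with s (i, x) = f i, X (i, x)) = 0 := by
    intro t _ ht
    have hhom := (IsHomogeneous.prod t (fun i => C (c (i, f i))) (fun _ => 0)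
      fun i _ => isHomogeneous_C (I × A) _).mul
      (IsHomogeneous.prod (Finset.univ \ t)
        (fun i => ∑ x : A with s (i, x) = f i, X (R := R) (i, x))
        (fun _ => 1) fun i _ => IsHomogeneous.sum _ _ 1 fun x _ => isHomogeneous_X R (i, x))
    refine hhom.coeff_eq_zero ?_
    have htcard := Finset.card_sdiff_add_card_eq_card (Finset.subset_univ t)
    have htpos := Finset.card_pos.mpr (Finset.nonempty_iff_ne_empty.mpr ht)
    rw [Finset.card_univ] at htcard
    simp only [degree_sqfreeExp, Finset.sum_const, smul_eq_mul, mul_zero, mul_one, hS]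
    omega
  rw [hlift, Finset.prod_add, coeff_sum,
    Finset.sum_eq_single_of_mem ∅ (Finset.empty_mem_powerset _) hzero, Finset.prod_empty, one_mul,
    Finset.sdiff_empty, Finset.prod_univ_sum, coeff_sum]
  simp only [prod_X_eq_monomial, coeff_monomial, sqfreeExp_injective.eq_iff]
  rw [Finset.sum_boole]
  congr 2
  ext a
  simp [Fintype.mem_piFinset, and_comm]

lemma sqfreeCoeff_liftVars_codePoly [Fintype ι] [Fintype I] [DecidableEq I] [DecidableEq A]
    {f : ι → I → J} (hf : Function.Injective f) (s : I × A → J) (c : I × J → R)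
    {S : Finset (I × A)} (hS : #S = Fintype.card I) :
    sqfreeCoeff (liftVars s c (codePoly R f) : MvPowerSeries (I × A) R) S
      = #{a ∈ wordCode f s | graphOn Finset.univ a = S} := by
  classical
  rw [sqfreeCoeff, coeff_coe, codePoly, map_sum, coeff_sum]
  simp only [coeff_liftVars_prod_X s c _ hS]
  rw [← Nat.cast_sum, ← Finset.card_biUnion]
  · congr 2
    ext a
    simp only [Finset.mem_biUnion, Finset.mem_filter, Finset.mem_univ, true_and, mem_wordCode]
    exact ⟨fun ⟨x, ha, hx⟩ => ⟨⟨x, hx⟩, ha⟩, fun ⟨⟨x, hx⟩, ha⟩ => ⟨x, ha, hx⟩⟩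
  · intro x _ y _ hxy
    refine Finset.disjoint_left.mpr fun a hax hay => hxy (hf (funext fun i => ?_))
    rw [← (Finset.mem_filter.mp hax).2.2 i, (Finset.mem_filter.mp hay).2.2 i]

end CommSemiring

lemma exists_forall_eval_ne_zero [CommRing R] [IsDomain R] [Infinite R] {κ σ : Type*}
    [Finite κ] (Q : κ → MvPolynomial σ R) : ∃ c : σ → R, ∀ j, Q j ≠ 0 → eval c (Q j) ≠ 0 := by
  classical
  have := Fintype.ofFinite κ
  have hprod : ∏ j with Q j ≠ 0, Q j ≠ 0 :=
    Finset.prod_ne_zero_iff.mpr fun j hj => (Finset.mem_filter.mp hj).2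
  obtain ⟨c, hc⟩ := Function.ne_iff.mp fun h => hprod (MvPolynomial.funext (congrFun h))
  rw [map_prod, map_zero, Finset.prod_ne_zero_iff] at hc
  exact ⟨c, fun j hj => hc j (Finset.mem_filter.mpr ⟨Finset.mem_univ j, hj⟩)⟩

section Field

variable [Field F] [Fintype I] [Fintype A] [DecidableEq I] [DecidableEq A] [DecidableEq J]
  {f : ι → I → J} {s : I × A → J} {c : I × J → F}

/-- Deriving by the head of the word isolated by `K` and shifting by the rest of `K` gives a vector
supported, within the isolating sets, on `K` alone. -/
lemma card_isolatingSets_le_finrank [Fintype ι] (hf : Function.Injective f) (S : Finset I)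
    (ℓ : ℕ) :
    #(isolatingSets (wordCode f s) S (ℓ + #S)) ≤
      Module.finrank F (shiftedPartialSpan (S ×ˢ Finset.univ) #Sᶜ ℓ
        (liftVars s c (codePoly F f) : MvPowerSeries (I × A) F)) := by
  refine card_le_finrank_of_forall_exists_mem _ _ fun K hK => ?_
  obtain ⟨⟨hKS, hKcard⟩, hiso⟩ := mem_isolatingSets.mp hK
  obtain ⟨a, ha, haK, huniq⟩ := hiso.exists_sdiff_unique
  set L := K \ graphOn S a with hL
  have hLcard : #L = ℓ := by
    rw [hL, Finset.card_sdiff_of_subset haK, card_graphOn, hKcard, Nat.add_sub_cancel]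
  have hcoeff : ∀ K' ∈ isolatingSets (wordCode f s) S (ℓ + #S), L ⊆ K' →
      sqfreeCoeff (liftVars s c (codePoly F f) : MvPowerSeries (I × A) F)
        (graphOn Sᶜ a ∪ K' \ L)
        = #{b ∈ wordCode f s | graphOn Finset.univ b = graphOn Sᶜ a ∪ K' \ L} := by
    intro K' hK' hLK'
    obtain ⟨⟨hKS', hKcard'⟩, -⟩ := mem_isolatingSets.mp hK'
    refine sqfreeCoeff_liftVars_codePoly hf s c ?_
    rw [Finset.card_union_of_disjoint ((disjoint_graphOn_compl_product S a).mono_right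
      (Finset.sdiff_subset.trans hKS')), card_graphOn, Finset.card_sdiff_of_subset hLK',
      hLcard, hKcard', Nat.add_sub_cancel_left, Finset.card_compl_add_card]
  refine ⟨_, shiftedPartial_mem_shiftedPartialSpan _ (disjoint_graphOn_compl_product S a)
    (card_graphOn _ _) (Finset.sdiff_subset.trans hKS) hLcard.le, ?_, fun K' hK' hne => ?_⟩
  · have hgraph : graphOn Sᶜ a ∪ K \ L = graphOn Finset.univ a := by
      rw [hL, Finset.sdiff_sdiff_eq_self haK, graphOn_compl_union_graphOn]
    rw [shiftedPartial, if_pos ⟨Finset.sdiff_subset, hKS⟩, hcoeff K hK Finset.sdiff_subset, hgraph]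
    simp [graphOn_univ_injective.eq_iff, Finset.filter_eq', ha]
  · rw [shiftedPartial, ite_eq_right_iff]
    rintro ⟨hLK', -⟩
    rw [hcoeff K' hK' hLK', Finset.filter_eq_empty_iff.mpr fun b hb hgraph =>
      hne (huniq K' (mem_isolatingSets.mp hK').1.1 hLK' b hb hgraph.symm)]
    simp

lemma finrank_shiftedPartialSpan_liftVars_le {T D : Type*} [Fintype T] [Fintype D]
    {Q : T → D → MvPolynomial (I × J) F} (Y : Finset (I × A)) {r k ℓ : ℕ}
    (hs : ∀ i j, #{z : I × A | (z.1, s z) ∈ (Q i j).vars} ≤ r)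
    (hc : ∀ i j, Q i j ≠ 0 → eval c (Q i j) ≠ 0) :
    Module.finrank F (shiftedPartialSpan Y k ℓ
      (liftVars s c (∑ i, ∏ j, Q i j) : MvPowerSeries (I × A) F))
      ≤ Fintype.card T * #{H ∈ Y.powerset | #H ≤ ℓ + r * k} := by
  have hcoe : ((liftVars s c (∑ i, ∏ j, Q i j) : MvPolynomial (I × A) F) :
      MvPowerSeries (I × A) F) = ∑ i, ∏ j, (liftVars s c (Q i j) : MvPowerSeries (I × A) F) := by
    simp only [map_sum, map_prod, ← coeToMvPowerSeries.ringHom_apply]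
  rw [hcoe, Fintype.card, ← smul_eq_mul]
  refine (finrank_shiftedPartialSpan_sum_le _ _).trans
    (Finset.sum_le_card_nsmul _ _ _ fun i _ => ?_)
  by_cases hQ : ∃ j, Q i j = 0
  · obtain ⟨j, hj⟩ := hQ
    rw [Finset.prod_eq_zero (Finset.mem_univ j) (by rw [hj, map_zero, coe_zero]),
      shiftedPartialSpan_zero, finrank_bot]
    exact Nat.zero_le _
  · push Not at hQ
    refine finrank_shiftedPartialSpan_prod_le
      (fun j _ => (Finset.card_le_card fun z hz => ?_).trans (hs i j)) (fun j _ => ?_)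
      fun j _ => sqfreeSupported_vars _
    · exact Finset.mem_filter.mpr ⟨Finset.mem_univ z, mem_vars_of_mem_vars_liftVars hz⟩
    · rw [← MvPowerSeries.coeff_zero_eq_constantCoeff_apply, coeff_coe, ← constantCoeff_eq,
        constantCoeff_liftVars]
      exact hc i j (hQ j)

theorem card_isolatingSets_le [Infinite F] [Fintype ι] (hf : Function.Injective f)
    {T D : Type*} [Fintype T] [Fintype D] {Q : T → D → MvPolynomial (I × J) F}
    (hQ : codePoly F f = ∑ i, ∏ j, Q i j) {S : Finset I} {r ℓ : ℕ}
    (hs : ∀ i j, #{z : I × A | (z.1, s z) ∈ (Q i j).vars} ≤ r) :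
    #(isolatingSets (wordCode f s) S (ℓ + #S)) ≤ Fintype.card T *
      #{H ∈ (S ×ˢ (Finset.univ : Finset A)).powerset | #H ≤ ℓ + r * #Sᶜ} := by
  obtain ⟨c, hc⟩ := exists_forall_eval_ne_zero fun p : T × D => Q p.1 p.2
  refine (card_isolatingSets_le_finrank (c := c) hf S ℓ).trans ?_
  rw [hQ]
  exact finrank_shiftedPartialSpan_liftVars_le _ hs fun i j => hc (i, j)

end Field

end Substitution

/-- The weight `∏ i, w i` over the coordinates `i` in which the word `b` differs from `a`. -/
def mismatchWeight {I A : Type*} [Fintype I] [DecidableEq A] (w : I → ℝ) (a b : I → A) : ℝ :=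
  ∏ i, if b i = a i then 1 else w i

section Counting

open scoped Finset

lemma choose_mul_pow_le_choose_mul_pow {x R : ℕ} (h : x ≤ R) (e : ℕ) :
    x.choose e * R ^ e ≤ R.choose e * x ^ e := by
  induction e with
  | zero => simp
  | succ e ih =>
    have hstep : (x - e) * R ≤ (R - e) * x := by
      rw [Nat.sub_mul, Nat.sub_mul, mul_comm x R]
      exact Nat.sub_le_sub_left (Nat.mul_le_mul_left e h) _
    refine le_of_mul_le_mul_right (a := e + 1) ?_ e.succ_pos
    calc x.choose (e + 1) * R ^ (e + 1) * (e + 1)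
        = x.choose e * R ^ e * ((x - e) * R) := by
          rw [mul_mul_mul_comm, ← Nat.choose_succ_right_eq]; ring
      _ ≤ R.choose e * x ^ e * ((R - e) * x) := Nat.mul_le_mul ih hstep
      _ = R.choose (e + 1) * x ^ (e + 1) * (e + 1) := by
          rw [mul_mul_mul_comm, ← Nat.choose_succ_right_eq]; ring

lemma choose_sub_sub_mul_pow_le {R l e : ℕ} (hl : l ≤ R) (he : e ≤ l) :
    (R - e).choose (l - e) * R ^ e ≤ R.choose l * l ^ e := by
  refine le_of_mul_le_mul_left (a := R.choose e) ?_ (Nat.choose_pos (he.trans hl))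
  calc R.choose e * ((R - e).choose (l - e) * R ^ e)
      = R.choose l * (l.choose e * R ^ e) := by rw [← mul_assoc, ← Nat.choose_mul he, mul_assoc]
    _ ≤ R.choose l * (R.choose e * l ^ e) :=
      Nat.mul_le_mul_left _ (choose_mul_pow_le_choose_mul_pow hl e)
    _ = R.choose e * (R.choose l * l ^ e) := by ring

lemma choose_sub_mul_pow_le {R l : ℕ} (hl : l ≤ R) (e : ℕ) :
    (R - e).choose l * R ^ e ≤ R.choose l * (R - l) ^ e := by
  rcases le_or_gt e (R - l) with he | he
  · have h := choose_sub_sub_mul_pow_le (Nat.sub_le R l) he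
    rwa [Nat.choose_symm hl, Nat.sub_right_comm, Nat.choose_symm (by omega)] at h
  · rcases Nat.eq_zero_or_pos l with rfl | hl0
    · simp
    · rw [Nat.choose_eq_zero_of_lt (by omega), zero_mul]
      exact Nat.zero_le _

lemma choose_add_mul_pow_le {R l : ℕ} (hl : l ≤ R) (t : ℕ) :
    (R + t).choose (l + t) * l ^ t ≤ R.choose l * R ^ t := by
  induction t with
  | zero => simp
  | succ t ih =>
    have hstep : (R + t + 1) * l ≤ (l + t + 1) * R := by nlinarith
    refine le_of_mul_le_mul_left (a := l + t + 1) ?_ (Nat.succ_pos _)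
    calc (l + t + 1) * ((R + t + 1).choose (l + t + 1) * l ^ (t + 1))
        = ((R + t + 1) * l) * ((R + t).choose (l + t) * l ^ t) := by
          rw [mul_mul_mul_comm, Nat.add_one_mul_choose_eq]; ring
      _ ≤ ((l + t + 1) * R) * (R.choose l * R ^ t) := Nat.mul_le_mul hstep ih
      _ = (l + t + 1) * (R.choose l * R ^ (t + 1)) := by ring

lemma choose_mul_sub_pow_le {M h j : ℕ} (hM : h + j ≤ M) :
    M.choose h * (M - (h + j)) ^ j ≤ M.choose (h + j) * (h + j) ^ j := by
  induction j generalizing h with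
  | zero => simp
  | succ j ih =>
    have hih := ih (h := h + 1) (by omega)
    rw [add_right_comm, add_assoc] at hih
    calc M.choose h * (M - (h + (j + 1))) ^ (j + 1)
        = M.choose h * (M - (h + (j + 1))) * (M - (h + (j + 1))) ^ j := by ring
      _ ≤ M.choose h * (M - h) * (M - (h + (j + 1))) ^ j := by gcongr; omega
      _ = (h + 1) * (M.choose (h + 1) * (M - (h + (j + 1))) ^ j) := by
          rw [← Nat.choose_succ_right_eq]; ring
      _ ≤ (h + (j + 1)) * (M.choose (h + (j + 1)) * (h + (j + 1)) ^ j) :=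
          Nat.mul_le_mul (by omega) hih
      _ = M.choose (h + (j + 1)) * (h + (j + 1)) ^ (j + 1) := by ring

section Powerset

variable {α : Type*} [DecidableEq α] {Y U V : Finset α} {l : ℕ}

lemma card_filter_powersetCard_subset_disjoint_le (hU : U ⊆ Y) (hV : V ⊆ Y) (hUV : Disjoint U V)
    (hl : l < #Y - #U) :
    (#{K ∈ Y.powersetCard (l + #U) | U ⊆ K ∧ Disjoint K V} : ℝ)
      ≤ (#Y - #U).choose l * (1 - l / (#Y - #U : ℕ)) ^ #V := by
  have hset : {K ∈ Y.powersetCard (l + #U) | U ⊆ K ∧ Disjoint K V}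
      = {K ∈ (Y \ V).powersetCard (l + #U) | U ⊆ K} := by
    ext K
    simp only [Finset.mem_filter, Finset.mem_powersetCard, Finset.subset_sdiff]
    tauto
  rw [hset, Finset.card_filter_powersetCard_subset _ _ _ (Finset.subset_sdiff.mpr ⟨hU, hUV⟩)
    (Nat.le_add_left _ _), Nat.add_sub_cancel, Finset.card_sdiff_of_subset hV, Nat.sub_right_comm]
  have hR : (0 : ℝ) < (#Y - #U : ℕ) := by exact_mod_cast (Nat.zero_le l).trans_lt hl
  rw [one_sub_div hR.ne', ← Nat.cast_sub hl.le, div_pow, ← mul_div_assoc,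
    le_div_iff₀ (by positivity)]
  exact_mod_cast choose_sub_mul_pow_le hl.le #V

lemma card_filter_powersetCard_subset_subset_le (hU : U ⊆ Y) (hV : V ⊆ Y) (hUV : Disjoint U V)
    (hl : l < #Y - #U) :
    (#{K ∈ Y.powersetCard (l + #U) | U ⊆ K ∧ V ⊆ K} : ℝ)
      ≤ (#Y - #U).choose l * (l / (#Y - #U : ℕ)) ^ #V := by
  simp only [← Finset.union_subset_iff]
  rcases lt_or_ge l #V with hVl | hVl
  · rw [Finset.filter_false_of_mem fun K hK h => ?_, Finset.card_empty, Nat.cast_zero]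
    · positivity
    · have := Finset.card_le_card h
      rw [Finset.card_union_of_disjoint hUV, (Finset.mem_powersetCard.mp hK).2] at this
      omega
  · have hcard := Finset.card_union_of_disjoint hUV
    rw [Finset.card_filter_powersetCard_subset _ _ _ (Finset.union_subset hU hV) (by omega), hcard,
      ← Nat.sub_sub, show l + #U - (#U + #V) = l - #V by omega]
    have hR : (0 : ℝ) < (#Y - #U : ℕ) := by exact_mod_cast (Nat.zero_le l).trans_lt hl
    rw [div_pow, ← mul_div_assoc, le_div_iff₀ (by positivity)]
    exact_mod_cast choose_sub_sub_mul_pow_le hl.le hVl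

end Powerset

section MismatchWeight

variable {I A : Type*} [Fintype I] [DecidableEq A] {w : I → ℝ}

lemma mismatchWeight_nonneg (hw : ∀ i, 0 ≤ w i) (a b : I → A) : 0 ≤ mismatchWeight w a b :=
  Finset.prod_nonneg fun i _ => by
    split_ifs
    exacts [zero_le_one, hw i]

lemma mismatchWeight_le_one (hw : ∀ i, 0 ≤ w i) (hw' : ∀ i, w i ≤ 1) (a b : I → A) :
    mismatchWeight w a b ≤ 1 :=
  Finset.prod_le_one (fun i _ => by split_ifs; exacts [zero_le_one, hw i])
    fun i _ => by split_ifs; exacts [le_rfl, hw' i]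

lemma mismatchWeight_self (w : I → ℝ) (a : I → A) : mismatchWeight w a a = 1 :=
  Finset.prod_eq_one fun _ _ => if_pos rfl

lemma sum_mismatchWeight [DecidableEq I] [Fintype A] (w : I → ℝ) (a : I → A) :
    ∑ b, mismatchWeight w a b = ∏ i, (1 + ((Fintype.card A : ℝ) - 1) * w i) := by
  simp only [mismatchWeight]
  rw [← Fintype.prod_sum fun i x => if x = a i then 1 else w i]
  refine Finset.prod_congr rfl fun i _ => ?_
  rw [← Finset.add_sum_erase _ _ (Finset.mem_univ (a i)), if_pos rfl,
    Finset.sum_congr rfl fun x hx => if_neg (Finset.ne_of_mem_erase hx), Finset.sum_const,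
    Finset.card_erase_of_mem (Finset.mem_univ _), Finset.card_univ, nsmul_eq_mul,
    Nat.cast_pred (Fintype.card_pos_iff.mpr ⟨a i⟩)]

lemma mismatchWeight_const (x : ℝ) (a b : I → A) :
    mismatchWeight (fun _ => x) a b = x ^ #{i | b i ≠ a i} := by
  rw [mismatchWeight, ← Finset.prod_const, Finset.prod_filter]
  exact Finset.prod_congr rfl fun i _ => by rw [ite_not]

lemma pow_card_graphOn_sdiff [DecidableEq I] (S : Finset I) (x : ℝ) (a b : I → A) :
    x ^ #(graphOn S b \ graphOn S a) = mismatchWeight (fun i => if i ∈ S then x else 1) a b := by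
  rw [graphOn_sdiff_graphOn, card_graphOn, mismatchWeight, ← Finset.prod_const,
    Finset.prod_filter, ← Finset.prod_subset (Finset.subset_univ S) fun i _ hi => by simp [hi]]
  exact Finset.prod_congr rfl fun i hi => by simp only [hi, if_true, ite_not, ne_eq]

end MismatchWeight

end Counting

section Isolating

open scoped Finset

variable {I A : Type*} [Fintype I] [DecidableEq I] [DecidableEq A]

-- If `K` contains the tails of `N` words, then either `K` is isolating and `N ≤ 1 + N (N - 1)`, or
-- each of the `N` words is obstructed by another one.
open scoped Classical in
lemma card_filter_graphOn_subset_le (𝒜 : Finset (I → A)) (S : Finset I) (K : Finset (I × A)) :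
    #{a ∈ 𝒜 | graphOn S a ⊆ K} ≤ (if IsIsolating 𝒜 S K then 1 else 0)
      + (#{p ∈ 𝒜.offDiag | (∀ i ∉ S, p.2 i = p.1 i) ∧ graphOn S p.1 ⊆ K ∧
          Disjoint K (graphOn S p.2 \ graphOn S p.1)}
        + #{p ∈ 𝒜.offDiag | graphOn S p.1 ⊆ K ∧ graphOn S p.2 \ graphOn S p.1 ⊆ K}) := by
  set B := {a ∈ 𝒜 | graphOn S a ⊆ K} with hB
  split_ifs with hK
  · have hpairs : B.offDiag ⊆
        {p ∈ 𝒜.offDiag | graphOn S p.1 ⊆ K ∧ graphOn S p.2 \ graphOn S p.1 ⊆ K} := by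
      intro p hp
      simp only [hB, Finset.mem_offDiag, Finset.mem_filter] at hp ⊢
      exact ⟨⟨hp.1.1, hp.2.1.1, hp.2.2⟩, hp.1.2, Finset.sdiff_subset.trans hp.2.1.2⟩
    have hcard := Finset.card_le_card hpairs
    rw [Finset.offDiag_card] at hcard
    have : #B ≤ 1 + (#B * #B - #B) := by
      rcases Nat.lt_or_ge #B 2 with h | h
      · omega
      · have := Nat.mul_le_mul_right #B h
        omega
    omega
  · refine le_trans ?_ (Nat.le_add_left _ _)
    refine le_trans ?_ (Nat.le_add_right _ _)
    refine (Finset.card_le_card fun a ha => ?_).trans (Finset.card_image_le (f := Prod.fst))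
    obtain ⟨ha𝒜, haK⟩ := Finset.mem_filter.mp ha
    simp only [IsIsolating, not_exists, not_and, not_forall, not_not] at hK
    obtain ⟨b, hb, hba, hhead, hdis⟩ := hK a ha𝒜 haK
    refine Finset.mem_image.mpr ⟨(a, b), Finset.mem_filter.mpr
      ⟨Finset.mem_offDiag.mpr ⟨ha𝒜, hb, hba.symm⟩, hhead, haK, ?_⟩, rfl⟩
    rw [Finset.disjoint_left] at hdis ⊢
    exact fun z hz hz' => hdis (Finset.mem_sdiff.mpr ⟨hz, (Finset.mem_sdiff.mp hz').2⟩)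
      (Finset.mem_sdiff.mp hz').1

variable [Fintype A] {S : Finset I} {R l : ℕ}

lemma card_filter_graphOn_subset_subset_le (hR : #S * Fintype.card A = R + #S) (hl : l < R)
    (a b : I → A) :
    (#{K ∈ (S ×ˢ (Finset.univ : Finset A)).powersetCard (l + #S) |
        graphOn S a ⊆ K ∧ graphOn S b \ graphOn S a ⊆ K} : ℝ)
      ≤ R.choose l * mismatchWeight (fun i => if i ∈ S then (l : ℝ) / R else 1) a b := by
  have hcard : #(S ×ˢ (Finset.univ : Finset A)) - #(graphOn S a) = R := by
    rw [Finset.card_product, Finset.card_univ, hR, card_graphOn, Nat.add_sub_cancel]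
  have h := card_filter_powersetCard_subset_subset_le (graphOn_subset_product S a)
    (Finset.sdiff_subset.trans (graphOn_subset_product S b)) Finset.disjoint_sdiff
    (hl.trans_eq hcard.symm)
  rwa [hcard, card_graphOn, pow_card_graphOn_sdiff] at h

lemma card_filter_graphOn_subset_disjoint_le (hR : #S * Fintype.card A = R + #S) (hl : l < R)
    (a b : I → A) :
    (#{K ∈ (S ×ˢ (Finset.univ : Finset A)).powersetCard (l + #S) |
        (∀ i ∉ S, b i = a i) ∧ graphOn S a ⊆ K ∧ Disjoint K (graphOn S b \ graphOn S a)} : ℝ)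
      ≤ R.choose l * mismatchWeight (fun i => if i ∈ S then 1 - (l : ℝ) / R else 0) a b := by
  by_cases hhead : ∀ i ∉ S, b i = a i
  · have hcard : #(S ×ˢ (Finset.univ : Finset A)) - #(graphOn S a) = R := by
      rw [Finset.card_product, Finset.card_univ, hR, card_graphOn, Nat.add_sub_cancel]
    have h := card_filter_powersetCard_subset_disjoint_le (graphOn_subset_product S a)
      (Finset.sdiff_subset.trans (graphOn_subset_product S b)) Finset.disjoint_sdiff
      (hl.trans_eq hcard.symm)
    rw [hcard, card_graphOn, pow_card_graphOn_sdiff] at h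
    simp only [iff_true_intro hhead, true_and]
    refine h.trans_eq (congrArg _ (Finset.prod_congr rfl fun i _ => ?_))
    by_cases hi : i ∈ S
    · simp only [hi, if_true]
    · simp only [hhead i hi, if_true]
  · have hq : (l : ℝ) / R ≤ 1 := div_le_one_of_le₀ (by exact_mod_cast hl.le) (Nat.cast_nonneg R)
    rw [Finset.filter_false_of_mem fun K _ h => hhead h.1, Finset.card_empty, Nat.cast_zero]
    exact mul_nonneg (Nat.cast_nonneg _) (mismatchWeight_nonneg (fun i => by
      split_ifs
      exacts [sub_nonneg.mpr hq, le_rfl]) a b)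

lemma card_mul_choose_le_card_isolatingSets_add (hR : #S * Fintype.card A = R + #S) (hl : l < R)
    (𝒜 : Finset (I → A)) :
    (#𝒜 : ℝ) * R.choose l ≤
      #(isolatingSets 𝒜 S (l + #S))
      + R.choose l * ∑ p ∈ 𝒜.offDiag,
        (mismatchWeight (fun i => if i ∈ S then 1 - (l : ℝ) / R else 0) p.1 p.2
          + mismatchWeight (fun i => if i ∈ S then (l : ℝ) / R else 1) p.1 p.2) := by
  set P := (S ×ˢ (Finset.univ : Finset A)).powersetCard (l + #S)
  classical
  have hcontain : ∀ a ∈ 𝒜, #{K ∈ P | graphOn S a ⊆ K} = R.choose l := fun a _ => by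
    rw [Finset.card_filter_powersetCard_subset _ _ _ (graphOn_subset_product S a)
      ((card_graphOn S a).trans_le (Nat.le_add_left _ _)), card_graphOn, Finset.card_product,
      Finset.card_univ, hR, Nat.add_sub_cancel, Nat.add_sub_cancel]
  have hsum := Finset.sum_le_sum fun K (_ : K ∈ P) => card_filter_graphOn_subset_le 𝒜 S K
  have hcomm : ∀ {X : Type _} (s : Finset X) (r : X → Finset (I × A) → Prop)
      [∀ x K, Decidable (r x K)],
      ∑ K ∈ P, #{x ∈ s | r x K} = ∑ x ∈ s, #{K ∈ P | r x K} := fun s r _ =>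
    (Finset.sum_card_bipartiteAbove_eq_sum_card_bipartiteBelow r).symm
  rw [Finset.sum_add_distrib, Finset.sum_add_distrib, hcomm 𝒜 fun a K => graphOn S a ⊆ K,
    Finset.sum_congr rfl hcontain, Finset.sum_const, smul_eq_mul,
    hcomm 𝒜.offDiag fun p K => (∀ i ∉ S, p.2 i = p.1 i) ∧ graphOn S p.1 ⊆ K ∧
      Disjoint K (graphOn S p.2 \ graphOn S p.1),
    hcomm 𝒜.offDiag fun p K => graphOn S p.1 ⊆ K ∧ graphOn S p.2 \ graphOn S p.1 ⊆ K,
    ← Finset.card_filter, ← isolatingSets] at hsum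
  rw [← Nat.cast_le (α := ℝ), Nat.cast_mul] at hsum
  refine hsum.trans ?_
  push_cast
  rw [Finset.mul_sum, ← Finset.sum_add_distrib]
  refine add_le_add_right (Finset.sum_le_sum fun p _ => ?_) _
  rw [mul_add]
  exact add_le_add (card_filter_graphOn_subset_disjoint_le hR hl p.1 p.2)
    (card_filter_graphOn_subset_subset_le hR hl p.1 p.2)

end Isolating

section RandomCode

open scoped Finset BigOperators

section Expectation

variable {Ω X : Type*} [Fintype Ω] [Fintype X] [DecidableEq X]

lemma expect_card (𝒜 : Ω → Finset X) :
    𝔼 s, (#(𝒜 s) : ℝ) = ∑ x, 𝔼 s, if x ∈ 𝒜 s then (1 : ℝ) else 0 := by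
  rw [← Finset.expect_sum_comm]
  exact Finset.expect_congr rfl fun s _ => by
    rw [Finset.sum_boole, Finset.filter_univ_mem]

lemma expect_sum_offDiag (𝒜 : Ω → Finset X) (c : X × X → ℝ) :
    𝔼 s, ∑ p ∈ (𝒜 s).offDiag, c p = ∑ p ∈ (Finset.univ : Finset X).offDiag,
      (𝔼 s, if p.1 ∈ 𝒜 s ∧ p.2 ∈ 𝒜 s then (1 : ℝ) else 0) * c p := by
  simp only [Finset.expect_mul]
  rw [← Finset.expect_sum_comm]
  refine Finset.expect_congr rfl fun s _ => ?_
  simp only [ite_mul, one_mul, zero_mul]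
  rw [← Finset.sum_filter]
  refine Finset.sum_congr (Finset.ext fun p => ?_) fun _ _ => rfl
  simp only [Finset.mem_offDiag, Finset.mem_filter, Finset.mem_univ, true_and]
  tauto

omit [DecidableEq X] in
lemma sum_univ_offDiag (c : X → X → ℝ) :
    ∑ p ∈ (Finset.univ : Finset X).offDiag, c p.1 p.2 = ∑ x, (∑ y, c x y - c x x) := by
  classical
  rw [Finset.sum_sub_distrib, eq_sub_iff_add_eq', ← Finset.sum_product',
    ← Finset.diag_union_offDiag, Finset.sum_union (Finset.disjoint_diag_offDiag _),
    Finset.sum_diag]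

end Expectation

variable {I A : Type*} [Fintype I] [DecidableEq I] [Fintype A] [DecidableEq A]

lemma sum_mismatchWeight_ite (S : Finset I) (x y : ℝ) (a : I → A) :
    ∑ b, mismatchWeight (fun i => if i ∈ S then x else y) a b
      = (1 + ((Fintype.card A : ℝ) - 1) * x) ^ #S * (1 + ((Fintype.card A : ℝ) - 1) * y) ^ #Sᶜ := by
  rw [sum_mismatchWeight, ← Finset.prod_mul_prod_compl S, ← Finset.prod_const, ← Finset.prod_const]
  congr 1 <;> refine Finset.prod_congr rfl fun i hi => ?_
  · rw [if_pos hi]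
  · rw [if_neg (Finset.mem_compl.mp hi)]

lemma sum_offDiag_mismatchWeight_le {S : Finset I} {q τ θ : ℝ} (hq : 0 ≤ q) (hq' : q ≤ 1)
    (hτ : 0 ≤ τ) (hθ : 0 ≤ θ) :
    ∑ p ∈ (Finset.univ : Finset (I → A)).offDiag,
        (τ ^ 2 + τ * mismatchWeight (fun _ => θ) p.1 p.2) *
          (mismatchWeight (fun i => if i ∈ S then 1 - q else 0) p.1 p.2
            + mismatchWeight (fun i => if i ∈ S then q else 1) p.1 p.2)
      ≤ (Fintype.card A : ℝ) ^ Fintype.card I * τ *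
        (τ * (Fintype.card A : ℝ) ^ #Sᶜ * (1 + ((Fintype.card A : ℝ) - 1) * q) ^ #S
          + τ * (1 + ((Fintype.card A : ℝ) - 1) * (1 - q)) ^ #S
          + 2 * ((1 + ((Fintype.card A : ℝ) - 1) * θ) ^ Fintype.card I - 1)) := by
  set u := mismatchWeight (A := A) fun i => if i ∈ S then 1 - q else 0
  set v := mismatchWeight (A := A) fun i => if i ∈ S then q else 1
  set ω := mismatchWeight (I := I) (A := A) fun _ => θ
  have hω : ∀ a b, 0 ≤ ω a b := mismatchWeight_nonneg fun _ => hθ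
  have hu : ∀ a b, u a b ≤ 1 := mismatchWeight_le_one
    (fun i => by split_ifs <;> linarith) fun i => by split_ifs <;> linarith
  have hv : ∀ a b, v a b ≤ 1 := mismatchWeight_le_one
    (fun i => by split_ifs <;> linarith) fun i => by split_ifs <;> linarith
  have hpoint : ∀ a b, (τ ^ 2 + τ * ω a b) * (u a b + v a b)
      ≤ τ * (τ * u a b + τ * v a b + 2 * ω a b) := fun a b => by
    nlinarith [mul_nonneg (mul_nonneg hτ (hω a b)) (sub_nonneg.mpr (hu a b)),
      mul_nonneg (mul_nonneg hτ (hω a b)) (sub_nonneg.mpr (hv a b))]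
  refine (Finset.sum_le_sum fun p _ => hpoint p.1 p.2).trans ?_
  rw [← Finset.mul_sum, sum_univ_offDiag fun a b => τ * u a b + τ * v a b + 2 * ω a b]
  have hrow : ∀ a, ∑ b, (τ * u a b + τ * v a b + 2 * ω a b) - (τ * u a a + τ * v a a + 2 * ω a a)
      ≤ τ * (Fintype.card A : ℝ) ^ #Sᶜ * (1 + ((Fintype.card A : ℝ) - 1) * q) ^ #S
        + τ * (1 + ((Fintype.card A : ℝ) - 1) * (1 - q)) ^ #S
        + 2 * ((1 + ((Fintype.card A : ℝ) - 1) * θ) ^ Fintype.card I - 1) := fun a => by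
    simp only [Finset.sum_add_distrib, ← Finset.mul_sum, u, v, ω, sum_mismatchWeight_ite,
      mismatchWeight_self]
    rw [sum_mismatchWeight, Finset.prod_const, Finset.card_univ, mul_zero, add_zero, one_pow,
      mul_one, mul_one, add_sub_cancel]
    linarith
  refine (mul_le_mul_of_nonneg_left (Finset.sum_le_sum fun a _ => hrow a) hτ).trans_eq ?_
  rw [Finset.sum_const, Finset.card_univ, Fintype.card_fun, nsmul_eq_mul, Nat.cast_pow]
  ring

theorem le_expect_card_isolatingSets {Ω : Type*} [Fintype Ω] {S : Finset I} {R l : ℕ}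
    (hR : #S * Fintype.card A = R + #S) (hl : l < R) {𝒜 : Ω → Finset (I → A)} {τ θ : ℝ}
    (hτ : 0 ≤ τ) (hθ : 0 ≤ θ) (hmem : ∀ a, 𝔼 s, (if a ∈ 𝒜 s then (1 : ℝ) else 0) = τ)
    (hpair : ∀ a b, 𝔼 s, (if a ∈ 𝒜 s ∧ b ∈ 𝒜 s then (1 : ℝ) else 0)
      ≤ τ ^ 2 + τ * mismatchWeight (fun _ => θ) a b) :
    (Fintype.card A : ℝ) ^ Fintype.card I * τ * R.choose l *
      (1 - τ * (Fintype.card A : ℝ) ^ #Sᶜ * (1 + ((Fintype.card A : ℝ) - 1) * (l / R)) ^ #S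
        - τ * (1 + ((Fintype.card A : ℝ) - 1) * (1 - l / R)) ^ #S
        - 2 * ((1 + ((Fintype.card A : ℝ) - 1) * θ) ^ Fintype.card I - 1))
      ≤ 𝔼 s, (#(isolatingSets (𝒜 s) S (l + #S)) : ℝ) := by
  have hq : (0 : ℝ) ≤ l / R := by positivity
  have hq' : (l / R : ℝ) ≤ 1 := div_le_one_of_le₀ (by exact_mod_cast hl.le) (Nat.cast_nonneg R)
  have hpairs := sum_offDiag_mismatchWeight_le (A := A) (S := S) hq hq' hτ hθ
  have hcount := Finset.expect_le_expect fun s (_ : s ∈ (Finset.univ : Finset Ω)) =>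
    card_mul_choose_le_card_isolatingSets_add hR hl (𝒜 s)
  rw [← Finset.expect_mul, Finset.expect_add_distrib, ← Finset.mul_expect, expect_card,
    Finset.sum_congr rfl fun a _ => hmem a, Finset.sum_const, Finset.card_univ, Fintype.card_fun,
    nsmul_eq_mul, Nat.cast_pow, expect_sum_offDiag] at hcount
  have hoff := (Finset.sum_le_sum fun p (_ : p ∈ (Finset.univ : Finset (I → A)).offDiag) =>
    mul_le_mul_of_nonneg_right (hpair p.1 p.2) (add_nonneg
      (mismatchWeight_nonneg (w := fun i => if i ∈ S then 1 - (l / R : ℝ) else 0)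
        (fun i => by split_ifs <;> linarith) p.1 p.2)
      (mismatchWeight_nonneg (w := fun i => if i ∈ S then (l / R : ℝ) else 1)
        (fun i => by split_ifs <;> linarith) p.1 p.2))).trans hpairs
  have := mul_le_mul_of_nonneg_left hoff (Nat.cast_nonneg (α := ℝ) (R.choose l))
  linarith

end RandomCode

/-- A code `f` whose words are distinct and equidistributed up to an error of one word: at most
`|ι| / |J| ^ |E| + 1` of them agree with a given one on a set `E` of coordinates. Every maximum
distance separable code has this property. -/
structure IsNearlyEquidistributed {ι I J : Type*} [Fintype ι] [Fintype J] [DecidableEq J]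
    (f : ι → I → J) : Prop where
  injective : Function.Injective f
  card_agree_le : ∀ x (E : Finset I), (Finset.card {y | ∀ i ∈ E, f x i = f y i} : ℝ)
    ≤ Fintype.card ι / (Fintype.card J : ℝ) ^ E.card + 1

lemma forall_graphOn_univ_iff {I A : Type*} [Fintype I] {P : I × A → Prop} {a : I → A} :
    (∀ z ∈ graphOn Finset.univ a, P z) ↔ ∀ i, P (i, a i) := by
  simp only [mem_graphOn, Finset.mem_univ, true_and, Prod.forall]
  exact ⟨fun h i => h i _ rfl, fun h i _ hx => hx ▸ h i⟩

section RandomSubstitution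

open scoped Finset BigOperators

variable {α ι I A J : Type*} [Fintype J] [DecidableEq J] [Nonempty J]

section Product

variable [Fintype α] [DecidableEq α]

lemma expect_forall_mem (V : Finset α) (B : α → Finset J) :
    𝔼 s : α → J, (if ∀ z ∈ V, s z ∈ B z then (1 : ℝ) else 0)
      = ∏ z ∈ V, (#(B z) : ℝ) / Fintype.card J := by
  have hset : ({s | ∀ z ∈ V, s z ∈ B z} : Finset (α → J))
      = Fintype.piFinset fun z => if z ∈ V then B z else Finset.univ := by
    ext s
    simp only [Finset.mem_filter, Finset.mem_univ, true_and, Fintype.mem_piFinset]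
    refine forall_congr' fun z => ?_
    split_ifs with hz <;> simp [hz]
  rw [Fintype.expect_eq_sum_div_card, Finset.sum_boole, hset, Fintype.card_piFinset,
    Fintype.card_fun, Nat.cast_prod, Nat.cast_pow, ← Finset.card_univ (α := α),
    ← Finset.prod_const, ← Finset.prod_div_distrib, ← Finset.prod_subset (Finset.subset_univ V)]
  · exact Finset.prod_congr rfl fun z hz => by rw [if_pos hz]
  · intro z _ hz
    rw [if_neg hz, Finset.card_univ, div_self (Nat.cast_ne_zero.mpr Fintype.card_ne_zero)]

lemma expect_forall_eq (V : Finset α) (w : α → J) :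
    𝔼 s : α → J, (if ∀ z ∈ V, s z = w z then (1 : ℝ) else 0) = (Fintype.card J : ℝ)⁻¹ ^ #V := by
  have h := expect_forall_mem V fun z => ({w z} : Finset J)
  simpa only [Finset.mem_singleton, Finset.card_singleton, Nat.cast_one, Finset.prod_const,
    one_div] using h

-- Union bound over the ordered `r`-tuples of distinct coordinates.
lemma expect_le_card_filter_le (B : α → Finset J) (r : ℕ) :
    𝔼 s : α → J, (if r ≤ #{z | s z ∈ B z} then (1 : ℝ) else 0)
      ≤ ((∑ z, (#(B z) : ℝ)) / Fintype.card J) ^ r := by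
  have hunion : ∀ s : α → J, (if r ≤ #{z | s z ∈ B z} then (1 : ℝ) else 0)
      ≤ ∑ g : Fin r ↪ α, if ∀ z ∈ Finset.univ.map g, s z ∈ B z then (1 : ℝ) else 0 := by
    intro s
    split_ifs with hr
    · obtain ⟨g⟩ := Function.Embedding.nonempty_of_card_le (α := Fin r)
        (β := ({z | s z ∈ B z} : Finset α)) (by rwa [Fintype.card_fin, Fintype.card_coe])
      refine le_trans ?_ (Finset.single_le_sum (fun g _ => by positivity)
        (Finset.mem_univ (g.trans (Function.Embedding.subtype _))))
      rw [if_pos fun z hz => ?_]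
      obtain ⟨i, -, rfl⟩ := Finset.mem_map.mp hz
      exact (Finset.mem_filter.mp (g i).2).2
    · positivity
  calc 𝔼 s : α → J, (if r ≤ #{z | s z ∈ B z} then (1 : ℝ) else 0)
      ≤ ∑ g : Fin r ↪ α, ∏ i, (#(B (g i)) : ℝ) / Fintype.card J := by
        refine (Finset.expect_le_expect fun s _ => hunion s).trans_eq ?_
        rw [Finset.expect_sum_comm]
        simp only [expect_forall_mem, Finset.prod_map]
    _ ≤ ∑ g : Fin r → α, ∏ i, (#(B (g i)) : ℝ) / Fintype.card J := by
        rw [← Finset.sum_image (f := fun g : Fin r → α => ∏ i, (#(B (g i)) : ℝ) / Fintype.card J)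
          (g := fun g : Fin r ↪ α => g) DFunLike.coe_injective.injOn]
        exact Finset.sum_le_sum_of_subset_of_nonneg (Finset.subset_univ _) fun g _ _ => by
          positivity
    _ = ((∑ z, (#(B z) : ℝ)) / Fintype.card J) ^ r := by
        rw [← Fintype.prod_sum fun (_ : Fin r) z => (#(B z) : ℝ) / Fintype.card J,
          Finset.prod_const, Finset.card_univ, Fintype.card_fin, ← Finset.sum_div]

end Product

variable [Fintype ι] [Fintype I] [DecidableEq I] [Fintype A] [DecidableEq A]

lemma expect_le_card_filter_mem_le (V : Finset (I × J)) (r : ℕ) :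
    𝔼 s : I × A → J, (if r ≤ #{z : I × A | (z.1, s z) ∈ V} then (1 : ℝ) else 0)
      ≤ (Fintype.card A * #V / Fintype.card J : ℝ) ^ r := by
  have hfiber : ∀ i, #{x | (i, x) ∈ V} = #{p ∈ V | p.1 = i} := fun i =>
    Finset.card_bij (fun x _ => (i, x)) (by simp) (by simp) (by rintro ⟨j, x⟩; aesop)
  have hcard : ∑ z : I × A, #{x | (z.1, x) ∈ V} = Fintype.card A * #V := by
    rw [Finset.card_eq_sum_card_fiberwise (f := Prod.fst) (t := Finset.univ) (by simp),
      Fintype.sum_prod_type, Finset.mul_sum]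
    refine Finset.sum_congr rfl fun i _ => ?_
    simp only [Finset.sum_const, Finset.card_univ, smul_eq_mul, hfiber]
  have h := expect_le_card_filter_le (fun z : I × A => ({x | (z.1, x) ∈ V} : Finset J)) r
  simp only [Finset.mem_filter, Finset.mem_univ, true_and] at h
  rwa [← Nat.cast_sum, hcard, Nat.cast_mul] at h

omit [DecidableEq J] in
lemma expect_mem_wordCode {f : ι → I → J} (hf : Function.Injective f) (a : I → A) :
    𝔼 s : I × A → J, (if a ∈ wordCode f s then (1 : ℝ) else 0)
      = Fintype.card ι / (Fintype.card J : ℝ) ^ Fintype.card I := by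
  classical
  have hword : ∀ s : I × A → J, (if a ∈ wordCode f s then (1 : ℝ) else 0)
      = ∑ x, if ∀ z ∈ graphOn Finset.univ a, s z = f x z.1 then (1 : ℝ) else 0 := by
    intro s
    by_cases ha : a ∈ wordCode f s
    · obtain ⟨x, hx⟩ := mem_wordCode.mp ha
      rw [if_pos ha, Fintype.sum_eq_single x, if_pos (forall_graphOn_univ_iff.mpr hx)]
      exact fun y hy => if_neg fun h => hy <| hf <| funext fun i =>
        (forall_graphOn_univ_iff.mp h i).symm.trans (hx i)
    · rw [if_neg ha]
      exact (Finset.sum_eq_zero fun x _ => if_neg fun h =>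
        ha (mem_wordCode.mpr ⟨x, forall_graphOn_univ_iff.mp h⟩)).symm
  have hcodeword : ∀ x, 𝔼 s : I × A → J,
      (if ∀ z ∈ graphOn Finset.univ a, s z = f x z.1 then (1 : ℝ) else 0)
      = (Fintype.card J : ℝ)⁻¹ ^ Fintype.card I := fun x => by
    rw [expect_forall_eq (graphOn Finset.univ a) fun z => f x z.1, card_graphOn, Finset.card_univ]
  simp only [hword, Finset.expect_sum_comm]
  rw [Fintype.sum_congr _ _ hcodeword, Finset.sum_const, Finset.card_univ, nsmul_eq_mul, inv_pow,
    div_eq_mul_inv]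

lemma expect_forall_eq_and_forall_eq_le (a b : I → A) (w w' : I → J) :
    𝔼 s : I × A → J, (if (∀ i, s (i, a i) = w i) ∧ ∀ i, s (i, b i) = w' i then (1 : ℝ) else 0)
      ≤ (if ∀ i ∈ ({i | b i = a i} : Finset I), w i = w' i then 1 else 0) *
        (Fintype.card J : ℝ)⁻¹ ^ (Fintype.card I + #{i | b i ≠ a i}) := by
  split_ifs with hagree
  · have hcard : #(graphOn Finset.univ a ∪ graphOn Finset.univ b)
        = Fintype.card I + #{i | b i ≠ a i} := by
      rw [← Finset.union_sdiff_self_eq_union, Finset.card_union_of_disjoint Finset.disjoint_sdiff,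
        graphOn_sdiff_graphOn, card_graphOn, card_graphOn, Finset.card_univ]
    rw [one_mul, ← hcard, ← expect_forall_eq _
      fun z : I × A => if a z.1 = z.2 then w z.1 else w' z.1]
    refine Finset.expect_le_expect fun s _ => ?_
    split_ifs with h h'
    · exact le_rfl
    · refine absurd (fun z hz => ?_) h'
      split_ifs with hz'
      · rw [← h.1 z.1, hz']
      · have := (mem_graphOn.mp ((Finset.mem_union.mp hz).resolve_left
          fun h => hz' (mem_graphOn.mp h).2)).2
        rw [← h.2 z.1, this]
    · exact zero_le_one
    · exact le_rfl
  · rw [zero_mul]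
    refine (Finset.expect_eq_zero fun s _ => if_neg fun h => hagree fun i hi => ?_).le
    rw [← h.1 i, ← h.2 i, (Finset.mem_filter.mp hi).2]

lemma expect_mem_mem_wordCode_le {f : ι → I → J} (hf : IsNearlyEquidistributed f) (a b : I → A) :
    𝔼 s : I × A → J, (if a ∈ wordCode f s ∧ b ∈ wordCode f s then (1 : ℝ) else 0)
      ≤ (Fintype.card ι / (Fintype.card J : ℝ) ^ Fintype.card I) ^ 2
        + (Fintype.card ι / (Fintype.card J : ℝ) ^ Fintype.card I) *
          mismatchWeight (fun _ => (Fintype.card J : ℝ)⁻¹) a b := by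
  set p := (Fintype.card J : ℝ)
  have hp : 0 < p := Nat.cast_pos.mpr Fintype.card_pos
  have hcard : #{i | b i = a i} + #{i | b i ≠ a i} = Fintype.card I :=
    Finset.card_filter_add_card_filter_not (s := Finset.univ) fun i => b i = a i
  have hunion : ∀ s : I × A → J, (if a ∈ wordCode f s ∧ b ∈ wordCode f s then (1 : ℝ) else 0)
      ≤ ∑ x, ∑ y, if (∀ i, s (i, a i) = f x i) ∧ ∀ i, s (i, b i) = f y i then 1 else 0 := by
    intro s
    split_ifs with hab
    · obtain ⟨⟨x, hx⟩, y, hy⟩ := And.imp mem_wordCode.mp mem_wordCode.mp hab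
      rw [← Fintype.sum_prod_type']
      refine le_trans ?_ (Finset.single_le_sum (fun q _ => ?_) (Finset.mem_univ (x, y)))
      · rw [if_pos ⟨hx, hy⟩]
      · positivity
    · positivity
  have hrow : ∀ x, ∑ y, 𝔼 s : I × A → J,
      (if (∀ i, s (i, a i) = f x i) ∧ ∀ i, s (i, b i) = f y i then (1 : ℝ) else 0)
      ≤ (Fintype.card ι / p ^ #{i | b i = a i} + 1)
        * p⁻¹ ^ (Fintype.card I + #{i | b i ≠ a i}) := by
    intro x
    refine (Finset.sum_le_sum fun y _ => expect_forall_eq_and_forall_eq_le a b _ _).trans ?_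
    rw [← Finset.sum_mul, Finset.sum_boole]
    gcongr
    refine (hf.card_agree_le x {i | b i = a i}).trans' (le_of_eq ?_)
    congr!
  have hunion' := Finset.expect_le_expect fun s (_ : s ∈ Finset.univ) => hunion s
  simp only [Finset.expect_sum_comm] at hunion'
  have hrows := Finset.sum_le_sum fun x (_ : x ∈ Finset.univ) => hrow x
  refine (hunion'.trans hrows).trans_eq ?_
  rw [Finset.sum_const, Finset.card_univ, nsmul_eq_mul, mismatchWeight_const, ← hcard]
  simp only [inv_pow, pow_add]
  field_simp

end RandomSubstitution

/-- The Reed–Solomon code of dimension `D` with evaluation points `v`: the values at these points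
of the polynomial with coefficients `c`. -/
def reedSolomon {K I : Type*} [CommSemiring K] (v : I → K) (D : ℕ) (c : Fin D → K) (i : I) : K :=
  ∑ k : Fin D, c k * v i ^ (k : ℕ)

section ReedSolomon

open scoped Finset

-- Words agreeing on `E` are told apart by any `D - #E` further coordinates.
lemma IsNearlyEquidistributed.of_eq_of_agree {ι I J : Type*} [Fintype ι] [Fintype I] [Fintype J]
    [DecidableEq J] [Nonempty J] {f : ι → I → J} {D : ℕ}
    (hcard : Fintype.card ι = Fintype.card J ^ D) (hD : D ≤ Fintype.card I)
    (hdist : ∀ E : Finset I, D ≤ #E → ∀ x y, (∀ i ∈ E, f x i = f y i) → x = y) :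
    IsNearlyEquidistributed f := by
  refine ⟨fun x y h => hdist Finset.univ hD x y fun i _ => congrFun h i, fun x E => ?_⟩
  set B : Finset ι := {y | ∀ i ∈ E, f x i = f y i}
  have hB : ∀ y ∈ B, ∀ z ∈ B, ∀ i ∈ E, f y i = f z i := fun y hy z hz i hi =>
    ((Finset.mem_filter.mp hy).2 i hi).symm.trans ((Finset.mem_filter.mp hz).2 i hi)
  have hp : (0 : ℝ) < Fintype.card J := Nat.cast_pos.mpr Fintype.card_pos
  rcases le_total D #E with hE | hE
  · have hone : #B ≤ 1 := Finset.card_le_one.mpr fun y hy z hz => hdist E hE y z (hB y hy z hz)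
    exact le_add_of_nonneg_of_le (by positivity) (by exact_mod_cast hone)
  · classical
    obtain ⟨E', hEE', -, hE'⟩ := Finset.exists_subsuperset_card_eq (Finset.subset_univ E) hE hD
    have hrestrict : #B ≤ #(Finset.univ : Finset (↥(E' \ E) → J)) := by
      refine Finset.card_le_card_of_injOn (fun y i => f y i) (by simp) fun y hy z hz hyz => ?_
      refine hdist E' hE'.ge y z fun i hi => ?_
      by_cases hiE : i ∈ E
      · exact hB y hy z hz i hiE
      · exact congrFun hyz ⟨i, Finset.mem_sdiff.mpr ⟨hi, hiE⟩⟩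
    rw [Finset.card_univ, Fintype.card_fun, Fintype.card_coe, Finset.card_sdiff_of_subset hEE',
      hE'] at hrestrict
    have hcount : (Fintype.card ι : ℝ) / (Fintype.card J : ℝ) ^ #E
        = (Fintype.card J ^ (D - #E) : ℕ) := by
      rw [hcard, Nat.cast_pow, Nat.cast_pow, pow_sub₀ _ hp.ne' hE, div_eq_mul_inv]
    exact le_add_of_le_of_nonneg (hcount ▸ Nat.cast_le.mpr hrestrict) zero_le_one

lemma reedSolomon_eq_of_agree {K I : Type*} [CommRing K] [IsDomain K] {v : I → K}
    (hv : Function.Injective v) {D : ℕ} {E : Finset I} (hE : D ≤ #E) {c c' : Fin D → K}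
    (h : ∀ i ∈ E, reedSolomon v D c i = reedSolomon v D c' i) : c = c' := by
  obtain ⟨e⟩ := Function.Embedding.nonempty_of_card_le (α := Fin D) (β := E)
    (by rwa [Fintype.card_fin, Fintype.card_coe])
  refine sub_eq_zero.mp (Matrix.eq_zero_of_forall_index_sum_mul_pow_eq_zero
    (f := fun j => v (e j)) (fun i j hij => e.injective (Subtype.ext (hv hij))) fun j => ?_)
  simpa only [reedSolomon, Pi.sub_apply, sub_mul, Finset.sum_sub_distrib, sub_eq_zero]
    using h (e j) (e j).2

lemma isNearlyEquidistributed_reedSolomon {K I : Type*} [Field K] [Fintype K] [DecidableEq K]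
    [Fintype I] {v : I → K} (hv : Function.Injective v) {D : ℕ} (hD : D ≤ Fintype.card I) :
    IsNearlyEquidistributed (reedSolomon v D) :=
  .of_eq_of_agree (by rw [Fintype.card_fun, Fintype.card_fin]) hD
    fun _ hE _ _ => reedSolomon_eq_of_agree hv hE

lemma injective_natCast_zmod {n p : ℕ} (hnp : n ≤ p) :
    Function.Injective fun i : Fin n => ((i : ℕ) : ZMod p) := fun i j hij => Fin.ext <| by
  have h := (ZMod.natCast_eq_natCast_iff' i j p).mp hij
  rwa [Nat.mod_eq_of_lt (i.2.trans_le hnp), Nat.mod_eq_of_lt (j.2.trans_le hnp)] at h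

lemma NWpoly_eq_codePoly (F : Type*) [Field F] (μ : ℝ) (n p : ℕ) [NeZero p] :
    NWpoly F μ n p = codePoly F (reedSolomon (fun i : Fin n => ((i : ℕ) : ZMod p))
      ⌊nwDreal μ n (n * p)⌋₊) := rfl

end ReedSolomon

section SizeBound

open scoped Finset BigOperators

lemma card_filter_powerset_card_le {α : Type*} {Y : Finset α} {κ L : ℕ}
    (hκ : 0 < κ) (hκY : 2 * κ ≤ #Y) (hL : L ≤ κ) :
    (#{H ∈ Y.powerset | #H ≤ L} : ℝ)
      ≤ (L + 1) * ((#Y).choose κ * (κ / (#Y - κ)) ^ (κ - L)) := by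
  classical
  have hpos : (0 : ℝ) < #Y - κ := sub_pos.mpr (by exact_mod_cast (by omega : κ < #Y))
  have hratio : (κ : ℝ) / (#Y - κ) ≤ 1 := (div_le_one hpos).mpr <| by
    have : (2 * κ : ℝ) ≤ #Y := by exact_mod_cast hκY
    linarith
  have hlayers : {H ∈ Y.powerset | #H ≤ L}
      = (Finset.range (L + 1)).biUnion fun h => Y.powersetCard h := by
    ext H
    simp only [Finset.mem_filter, Finset.mem_powerset, Finset.mem_biUnion, Finset.mem_range,
      Finset.mem_powersetCard, Nat.lt_succ_iff]
    exact ⟨fun h => ⟨_, h.2, h.1, rfl⟩, fun ⟨_, h, hHY, hH⟩ => ⟨hHY, hH.trans_le h⟩⟩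
  have hlayer : ∀ h ∈ Finset.range (L + 1),
      (#(Y.powersetCard h) : ℝ) ≤ (#Y).choose κ * (κ / (#Y - κ)) ^ (κ - L) := by
    intro h hh
    have hhL : h ≤ L := Nat.lt_succ_iff.mp (Finset.mem_range.mp hh)
    have hchoose := choose_mul_sub_pow_le (M := #Y) (h := h) (j := κ - h) (by omega)
    rw [Nat.add_sub_cancel' (hhL.trans hL)] at hchoose
    rw [← Nat.cast_le (α := ℝ)] at hchoose
    push_cast [show κ ≤ #Y by omega] at hchoose
    calc (#(Y.powersetCard h) : ℝ) = (#Y).choose h := by rw [Finset.card_powersetCard]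
      _ ≤ (#Y).choose κ * (κ / (#Y - κ)) ^ (κ - h) := by
        rwa [div_pow, ← mul_div_assoc, le_div_iff₀ (by positivity)]
      _ ≤ (#Y).choose κ * (κ / (#Y - κ)) ^ (κ - L) := by
        gcongr ?_ * ?_
        exact pow_le_pow_of_le_one (by positivity) hratio (by omega)
  calc (#{H ∈ Y.powerset | #H ≤ L} : ℝ)
      ≤ ∑ h ∈ Finset.range (L + 1), (#(Y.powersetCard h) : ℝ) := by
        rw [hlayers]
        exact_mod_cast Finset.card_biUnion_le
    _ ≤ #(Finset.range (L + 1)) • _ := Finset.sum_le_card_nsmul _ _ _ hlayer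
    _ = _ := by rw [Finset.card_range, nsmul_eq_mul, Nat.cast_add_one]

lemma card_filter_powerset_product_card_le {I A : Type*} [Fintype A] {S : Finset I} {κ L : ℕ}
    (hS : S.Nonempty) {m y : ℝ} (hm : m = Fintype.card A) (hκ : 0 < κ)
    (hκA : 2 * κ ≤ #S * Fintype.card A) (hy : (κ : ℝ) = #S * y) (hL : L ≤ κ) :
    (#{H ∈ (S ×ˢ (Finset.univ : Finset A)).powerset | #H ≤ L} : ℝ) ≤
      (#S * Fintype.card A).choose κ * (#S * m * (y / (m - y)) ^ (κ - L)) := by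
  have hcard : #(S ×ˢ (Finset.univ : Finset A)) = #S * Fintype.card A := by
    rw [Finset.card_product, Finset.card_univ]
  have hS0 : (#S : ℝ) ≠ 0 := Nat.cast_ne_zero.mpr hS.card_pos.ne'
  have hratio : (κ : ℝ) / ((#S * Fintype.card A : ℕ) - κ) = y / (m - y) := by
    rw [Nat.cast_mul, ← hm, hy, ← mul_sub, mul_div_mul_left _ _ hS0]
  have hL' : (L + 1 : ℝ) ≤ #S * m := by
    rw [hm]
    exact_mod_cast (by omega : L + 1 ≤ #S * Fintype.card A)
  have hpos : 0 ≤ y / (m - y) := hratio ▸ div_nonneg (Nat.cast_nonneg _)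
    (sub_nonneg.mpr (Nat.cast_le.mpr (by omega)))
  have h := card_filter_powerset_card_le hκ (hκA.trans_eq hcard.symm) hL
  rw [hcard, hratio] at h
  calc _ ≤ _ := h
    _ = (#S * Fintype.card A).choose κ * ((L + 1) * (y / (m - y)) ^ (κ - L)) := by ring
    _ ≤ _ := by gcongr

lemma choose_mul_div_pow_le {R l : ℕ} (hl : l < R) (t : ℕ) :
    ((R + t).choose (l + t) : ℝ) * (l / R) ^ t ≤ R.choose l := by
  have hR : (0 : ℝ) < R := by exact_mod_cast (Nat.zero_le l).trans_lt hl
  rw [div_pow, ← mul_div_assoc, div_le_iff₀ (by positivity)]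
  exact_mod_cast choose_add_mul_pow_le hl.le t

variable {F ι I A J T D : Type*} [Field F] [Infinite F] [Fintype ι] [Fintype I] [DecidableEq I]
  [Fintype A] [DecidableEq A] [DecidableEq J] [Fintype T] [Fintype D]
  {f : ι → I → J} {Q : T → D → MvPolynomial (I × J) F} {S : Finset I} {κ r : ℕ}

lemma card_isolatingSets_le_choose_mul_add (hf : Function.Injective f)
    (hQ : codePoly F f = ∑ i, ∏ j, Q i j) (hκ : #S ≤ κ) (s : I × A → J) :
    (#(isolatingSets (wordCode f s) S κ) : ℝ) ≤
      (#S * Fintype.card A).choose κ *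
        ∑ i, ∑ j, (if r ≤ #{z : I × A | (z.1, s z) ∈ (Q i j).vars} then (1 : ℝ) else 0)
      + Fintype.card T *
        #{H ∈ (S ×ˢ (Finset.univ : Finset A)).powerset | #H ≤ κ - #S + r * #Sᶜ} := by
  set bad : T → D → ℝ := fun i j => if r ≤ #{z : I × A | (z.1, s z) ∈ (Q i j).vars} then 1 else 0
  have hbad0 : ∀ i j, 0 ≤ bad i j := fun i j => by positivity
  by_cases hbad : ∃ i j, r ≤ #{z : I × A | (z.1, s z) ∈ (Q i j).vars}
  · obtain ⟨i, j, hij⟩ := hbad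
    have hall : #(isolatingSets (wordCode f s) S κ) ≤ (#S * Fintype.card A).choose κ := by
      rw [← Finset.card_univ, ← Finset.card_product, ← Finset.card_powersetCard]
      exact Finset.card_le_card fun K hK =>
        Finset.mem_powersetCard.mpr (mem_isolatingSets.mp hK).1
    have hone : 1 ≤ ∑ i, ∑ j, bad i j :=
      calc 1 = bad i j := (if_pos hij).symm
        _ ≤ ∑ j, bad i j := Finset.single_le_sum (fun j _ => hbad0 i j) (Finset.mem_univ j)
        _ ≤ ∑ i, ∑ j, bad i j := Finset.single_le_sum (f := fun i => ∑ j, bad i j)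
          (fun i _ => Finset.sum_nonneg fun j _ => hbad0 i j) (Finset.mem_univ i)
    refine le_add_of_le_of_nonneg ?_ (by positivity)
    exact (Nat.cast_le.mpr hall).trans (le_mul_of_one_le_right (Nat.cast_nonneg _) hone)
  · push Not at hbad
    have hgood := card_isolatingSets_le (ℓ := κ - #S) (S := S) hf hQ fun i j => (hbad i j).le
    rw [Nat.sub_add_cancel hκ] at hgood
    exact le_add_of_nonneg_of_le (by positivity) (by exact_mod_cast hgood)

variable [Fintype J] [Nonempty J]

omit [DecidableEq J] in
lemma expect_card_isolatingSets_le (hf : Function.Injective f)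
    (hQ : codePoly F f = ∑ i, ∏ j, Q i j) (hκ : #S ≤ κ) {v : ℝ}
    (hv : ∀ i j, (#(Q i j).vars : ℝ) ≤ v) :
    𝔼 s : I × A → J, (#(isolatingSets (wordCode f s) S κ) : ℝ) ≤
      (#S * Fintype.card A).choose κ * (Fintype.card T * Fintype.card D *
        (Fintype.card A * v / Fintype.card J) ^ r)
      + Fintype.card T *
        #{H ∈ (S ×ˢ (Finset.univ : Finset A)).powerset | #H ≤ κ - #S + r * #Sᶜ} := by
  classical
  have hfactor : ∀ i j, 𝔼 s : I × A → J,
      (if r ≤ #{z : I × A | (z.1, s z) ∈ (Q i j).vars} then (1 : ℝ) else 0)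
      ≤ (Fintype.card A * v / Fintype.card J) ^ r := fun i j => by
    refine (expect_le_card_filter_mem_le (Q i j).vars r).trans ?_
    have := hv i j
    gcongr
  have hpoint := Finset.expect_le_expect fun (s : I × A → J) (_ : s ∈ Finset.univ) =>
    card_isolatingSets_le_choose_mul_add (r := r) hf hQ hκ s
  rw [Finset.expect_add_distrib, ← Finset.mul_expect, Fintype.expect_const] at hpoint
  refine hpoint.trans (add_le_add_left (mul_le_mul_of_nonneg_left ?_ (Nat.cast_nonneg _)) _)
  simp only [Finset.expect_sum_comm]
  calc _ ≤ ∑ _i : T, ∑ _j : D, (Fintype.card A * v / Fintype.card J : ℝ) ^ r :=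
        Finset.sum_le_sum fun i _ => Finset.sum_le_sum fun j _ => hfactor i j
    _ = _ := by simp only [Finset.sum_const, Finset.card_univ, nsmul_eq_mul, mul_assoc]

lemma choose_mul_le_expect_card_isolatingSets (hf : IsNearlyEquidistributed f) {m τ y : ℝ}
    (hm : m = Fintype.card A) (hτ : τ = Fintype.card ι / (Fintype.card J : ℝ) ^ Fintype.card I)
    (hS : S.Nonempty) (hκ : #S ≤ κ) (hκA : κ < #S * Fintype.card A) (hy : (κ : ℝ) = #S * y)
    (hhalf : 1 / 2 ≤ 1 - τ * m ^ #Sᶜ * y ^ #S - τ * (m + 1 - y) ^ #S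
      - 2 * ((1 + (m - 1) / Fintype.card J) ^ Fintype.card I - 1)) :
    (#S * Fintype.card A).choose κ * (m ^ Fintype.card I * τ * ((y - 1) / (m - 1)) ^ #S / 2) ≤
      𝔼 s : I × A → J, (#(isolatingSets (wordCode f s) S κ) : ℝ) := by
  obtain ⟨l, rfl⟩ := Nat.exists_eq_add_of_le' hκ
  obtain ⟨R, hR⟩ := Nat.exists_eq_add_of_le' (hκ.trans hκA.le)
  have hl : l < R := by omega
  have hm0 : 0 ≤ m := hm ▸ Nat.cast_nonneg _
  have hτ0 : 0 ≤ τ := hτ ▸ by positivity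
  have hS0 : (#S : ℝ) ≠ 0 := Nat.cast_ne_zero.mpr hS.card_pos.ne'
  have hRm : (#S : ℝ) * (m - 1) = R := by
    rw [hm, mul_sub_one, ← Nat.cast_mul, hR, Nat.cast_add, add_sub_cancel_right]
  have hly : (#S : ℝ) * (y - 1) = l := by
    rw [mul_sub_one, ← hy, Nat.cast_add, add_sub_cancel_right]
  have hq : (l : ℝ) / R = (y - 1) / (m - 1) := by rw [← hRm, ← hly, mul_div_mul_left _ _ hS0]
  have hm1 : m - 1 ≠ 0 := fun h => by
    rw [h, mul_zero] at hRm
    exact ((Nat.zero_le l).trans_lt hl).ne (by exact_mod_cast hRm)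
  have hchoose := choose_mul_div_pow_le hl #S
  have hexpect := le_expect_card_isolatingSets hR hl (θ := (Fintype.card J : ℝ)⁻¹)
    (hτ ▸ hτ0) (by positivity) (expect_mem_wordCode hf.injective) (expect_mem_mem_wordCode_le hf)
  rw [← hτ, ← hm, hq, mul_one_sub, mul_div_cancel₀ _ hm1, add_sub_cancel, ← div_eq_mul_inv,
    show 1 + (m - 1 - (y - 1)) = m + 1 - y by ring] at hexpect
  refine le_trans ?_ hexpect
  rw [hR, ← hq]
  calc ((R + #S).choose (l + #S) : ℝ) * (m ^ Fintype.card I * τ * (l / R) ^ #S / 2)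
      = m ^ Fintype.card I * τ * ((R + #S).choose (l + #S) * (l / R) ^ #S) * (1 / 2) := by ring
    _ ≤ _ := by gcongr

omit [DecidableEq A] in
theorem pow_mul_div_two_le_of_codePoly_eq (hf : IsNearlyEquidistributed f)
    (hQ : codePoly F f = ∑ i, ∏ j, Q i j) {v : ℝ}
    (hv : ∀ i j, (#(Q i j).vars : ℝ) ≤ v) {m τ y : ℝ} (hm : m = Fintype.card A)
    (hτ : τ = Fintype.card ι / (Fintype.card J : ℝ) ^ Fintype.card I) (hS : S.Nonempty)
    (hr : r * #Sᶜ ≤ #S) (hκ : #S ≤ κ) (hκA : 2 * κ ≤ #S * Fintype.card A) (hy : (κ : ℝ) = #S * y)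
    (hhalf : 1 / 2 ≤ 1 - τ * m ^ #Sᶜ * y ^ #S - τ * (m + 1 - y) ^ #S
      - 2 * ((1 + (m - 1) / Fintype.card J) ^ Fintype.card I - 1)) :
    m ^ Fintype.card I * τ * ((y - 1) / (m - 1)) ^ #S / 2 ≤
      Fintype.card T * Fintype.card D * (m * v / Fintype.card J) ^ r
      + Fintype.card T * (#S * m * (y / (m - y)) ^ (#S - r * #Sᶜ)) := by
  classical
  have hκ0 : 0 < κ := hS.card_pos.trans_le hκ
  have hchoose : (0 : ℝ) < (#S * Fintype.card A).choose κ :=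
    Nat.cast_pos.mpr (Nat.choose_pos (by omega))
  have hlower := choose_mul_le_expect_card_isolatingSets hf hm hτ hS hκ (by omega) hy hhalf
  have hupper := expect_card_isolatingSets_le (A := A) (r := r) hf.injective hQ hκ hv
  have hfew := card_filter_powerset_product_card_le (L := κ - #S + r * #Sᶜ) hS hm hκ0 hκA hy
    (by omega)
  rw [show κ - (κ - #S + r * #Sᶜ) = #S - r * #Sᶜ by omega] at hfew
  refine le_of_mul_le_mul_left (hlower.trans (hupper.trans ?_)) hchoose
  rw [mul_add, ← hm, mul_left_comm _ (Fintype.card T : ℝ) (#S * m * _)]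
  gcongr

end SizeBound

section SetSize

lemma pow_one_add_le_inv_one_sub {x : ℝ} (hx : -1 ≤ x) {N : ℕ} {y : ℝ} (hxy : N * x ≤ y)
    (hy : y < 1) : (1 + x) ^ N ≤ (1 - y)⁻¹ :=
  calc (1 + x) ^ N ≤ Real.exp x ^ N :=
        pow_le_pow_left₀ (by linarith) (by linarith [Real.add_one_le_exp x]) N
    _ = Real.exp (N * x) := (Real.exp_nat_mul x N).symm
    _ ≤ Real.exp y := Real.exp_le_exp.mpr hxy
    _ = (Real.exp (-y))⁻¹ := by rw [Real.exp_neg, inv_inv]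
    _ ≤ (1 - y)⁻¹ := inv_anti₀ (by linarith) (by linarith [Real.add_one_le_exp (-y)])

variable {m w g y : ℝ} {t : ℕ}

lemma exists_natCast_eq_mul (ht : 0 < t) (hw : 0 ≤ w) :
    ∃ (κ : ℕ) (y : ℝ), (κ : ℝ) = t * y ∧ w - 1 ≤ y ∧ y ≤ w := by
  have ht1 : (1 : ℝ) ≤ t := Nat.one_le_cast.mpr ht
  have ht0 : (0 : ℝ) < t := by linarith
  have hfloor : (⌊t * w⌋₊ : ℝ) ≤ t * w := Nat.floor_le (by positivity)
  have hlt : t * w < ⌊t * w⌋₊ + 1 := Nat.lt_floor_add_one _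
  refine ⟨⌊t * w⌋₊, ⌊t * w⌋₊ / t, (mul_div_cancel₀ _ ht0.ne').symm, ?_, ?_⟩
  · rw [le_div_iff₀ ht0]
    linarith
  · rwa [div_le_iff₀' ht0]

lemma pow_add_one_sub_le_two_mul_pow (hwg : w * (1 + g) = m) (hg : 1 ≤ g) (ht : 12 * (t : ℝ) ≤ m)
    (hw : 0 < w) (hy : w - 1 ≤ y) (hyw : y ≤ w) : (m + 1 - y) ^ t ≤ 2 * (w * g) ^ t := by
  have hm : 0 < m := hwg ▸ by positivity
  have hbase : m + 1 - y ≤ (1 + 4 / m) * (w * g) := by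
    have htwo : 2 ≤ 4 / m * (w * g) := by
      rw [div_mul_eq_mul_div, le_div_iff₀ hm]
      nlinarith
    linarith
  have hpow : (1 + 4 / m) ^ t ≤ 2 := by
    have hexp : t * (4 / m) ≤ 1 / 3 := by
      rw [← mul_div_assoc, div_le_iff₀ hm]
      linarith
    have hm4 : 0 ≤ 4 / m := by positivity
    exact (pow_one_add_le_inv_one_sub (by linarith) hexp (by norm_num)).trans (by norm_num)
  calc (m + 1 - y) ^ t ≤ ((1 + 4 / m) * (w * g)) ^ t :=
        pow_le_pow_left₀ (by nlinarith) hbase t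
    _ = (1 + 4 / m) ^ t * (w * g) ^ t := mul_pow _ _ _
    _ ≤ 2 * (w * g) ^ t := by gcongr

lemma pow_div_le_two_mul_pow_sub_one_div (hm : 12 ≤ m) (hw : m ≤ 3 * w) (ht : 12 * (t : ℝ) ≤ m)
    (hy : w - 1 ≤ y) : (w / m) ^ t ≤ 2 * ((y - 1) / (m - 1)) ^ t := by
  have hm0 : 0 < m := by linarith
  have hsix : 6 / m ≤ 1 / 2 := by rw [div_le_iff₀ hm0]; linarith
  have hbase : (1 + -(6 / m)) * (w / m) ≤ (y - 1) / (m - 1) := calc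
    (1 + -(6 / m)) * (w / m) = (w - 6 * w / m) / m := by field_simp; ring
    _ ≤ (y - 1) / m := by
      have : 2 ≤ 6 * w / m := by rw [le_div_iff₀ hm0]; linarith
      exact div_le_div_of_nonneg_right (by linarith) hm0.le
    _ ≤ (y - 1) / (m - 1) :=
      div_le_div_of_nonneg_left (by linarith) (by linarith) (by linarith)
  have hpow : 1 / 2 ≤ (1 + -(6 / m)) ^ t := by
    have hbernoulli := one_add_mul_le_pow (a := -(6 / m)) (by linarith) t
    have hsmall : t * (6 / m) ≤ 1 / 2 := by
      rw [← mul_div_assoc, div_le_iff₀ hm0]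
      linarith
    linarith
  have hw0 : 0 ≤ w / m := div_nonneg (by linarith) hm0.le
  have hb0 : 0 ≤ 1 + -(6 / m) := by linarith
  calc (w / m) ^ t = 2 * (1 / 2 * (w / m) ^ t) := by ring
    _ ≤ 2 * ((1 + -(6 / m)) ^ t * (w / m) ^ t) := by gcongr
    _ = 2 * ((1 + -(6 / m)) * (w / m)) ^ t := by rw [mul_pow]
    _ ≤ 2 * ((y - 1) / (m - 1)) ^ t := by gcongr

lemma pow_one_add_sub_one_div_le {n : ℕ} {p : ℝ} (hn : 10 ≤ n) (hm1 : 1 ≤ m) (hm : m ≤ n ^ 2)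
    (hp : (n : ℝ) ^ 5 ≤ p) : (1 + (m - 1) / p) ^ n ≤ 100 / 99 := by
  have hn' : (10 : ℝ) ≤ n := by exact_mod_cast hn
  have hp0 : 0 < p := lt_of_lt_of_le (by positivity) hp
  have hratio : 0 ≤ (m - 1) / p := div_nonneg (by linarith) hp0.le
  have hexp : n * ((m - 1) / p) ≤ 1 / 100 := by
    rw [← mul_div_assoc, div_le_iff₀ hp0]
    calc n * (m - 1) ≤ n * n ^ 2 := by gcongr; linarith
      _ = 1 / 100 * (10 ^ 2 * n ^ 3) := by ring
      _ ≤ 1 / 100 * (n ^ 2 * n ^ 3) := by gcongr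
      _ = 1 / 100 * n ^ 5 := by ring
      _ ≤ 1 / 100 * p := by gcongr
  exact (pow_one_add_le_inv_one_sub (by linarith) hexp (by norm_num)).trans (by norm_num)

lemma half_le_one_sub_sub_sub {n k : ℕ} {p τ : ℝ} (hn : 10 ≤ n) (htk : t + k = n)
    (hwg : w * (1 + g) = m) (hg : 1 ≤ g) (hgt : g ^ t = m ^ k) (hnm : 12 * (n : ℝ) ≤ m)
    (hm : m ≤ n ^ 2) (hp : (n : ℝ) ^ 5 ≤ p) (hτ : 0 ≤ τ) (hy0 : 0 ≤ y) (hy : w - 1 ≤ y)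
    (hyw : y ≤ w) (hmass : τ * m ^ n * (w / m) ^ t ≤ 1 / 12) :
    1 / 2 ≤ 1 - τ * m ^ k * y ^ t - τ * (m + 1 - y) ^ t - 2 * ((1 + (m - 1) / p) ^ n - 1) := by
  have hn' : (10 : ℝ) ≤ n := by exact_mod_cast hn
  have hm0 : 0 < m := by linarith
  have hw0 : 0 < w := pos_of_mul_pos_left (hwg.symm ▸ hm0) (by linarith)
  have hlam : τ * m ^ n * (w / m) ^ t = τ * m ^ k * w ^ t := by
    rw [div_pow, ← htk, pow_add]
    field_simp
  have hinside : τ * m ^ k * y ^ t ≤ 1 / 12 := by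
    rw [hlam] at hmass
    exact le_trans (by gcongr) hmass
  have houtside : τ * (m + 1 - y) ^ t ≤ 1 / 6 := by
    have htm : 12 * (t : ℝ) ≤ m := by
      have : (t : ℝ) ≤ n := by exact_mod_cast (by omega : t ≤ n)
      linarith
    calc τ * (m + 1 - y) ^ t ≤ τ * (2 * (w * g) ^ t) := by
          gcongr
          exact pow_add_one_sub_le_two_mul_pow hwg hg htm hw0 hy hyw
      _ = 2 * (τ * m ^ n * (w / m) ^ t) := by rw [hlam, mul_pow, hgt]; ring
      _ ≤ 1 / 6 := by linarith
  have hpair := pow_one_add_sub_one_div_le hn (by linarith) hm hp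
  linarith

end SetSize

section BalancedSizeBound

open scoped Finset BigOperators

variable {F ι I A J T D : Type*} [Field F] [Infinite F] [Fintype ι] [Fintype I] [DecidableEq I]
  [Fintype A] [Fintype J] [DecidableEq J] [Nonempty J] [Fintype T] [Fintype D]

/-- The choice `g ^ #S = m ^ #Sᶜ` balances the error terms `m ^ #Sᶜ * y ^ #S` and
`(m + 1 - y) ^ #S` of `pow_mul_div_two_le_of_codePoly_eq` at `y ≈ m / (1 + g)`. -/
theorem one_div_le_of_codePoly_eq {f : ι → I → J} {Q : T → D → MvPolynomial (I × J) F}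
    (hf : IsNearlyEquidistributed f) (hQ : codePoly F f = ∑ i, ∏ j, Q i j) {v : ℝ}
    (hv : ∀ i j, (#(Q i j).vars : ℝ) ≤ v) {S : Finset I} {n r : ℕ} {m τ g : ℝ}
    (hn : n = Fintype.card I) (hm : m = Fintype.card A)
    (hτ : τ = Fintype.card ι / (Fintype.card J : ℝ) ^ n) (hS : S.Nonempty) (hr : r * #Sᶜ ≤ #S)
    (hn10 : 10 ≤ n) (hnm : 12 * (n : ℝ) ≤ m) (hmn : m ≤ n ^ 2)
    (hJ : (n : ℝ) ^ 5 ≤ Fintype.card J) (hg1 : 1 ≤ g) (hg2 : g ≤ 2) (hgt : g ^ #S = m ^ #Sᶜ)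
    (hmass : τ * m ^ n / (1 + g) ^ #S ≤ 1 / 12) (hmass' : 1 / 36 ≤ τ * m ^ n / (1 + g) ^ #S) :
    1 / 144 ≤ Fintype.card T * Fintype.card D * (m * v / Fintype.card J) ^ r
      + Fintype.card T * (#S * m * (1 / g) ^ (#S - r * #Sᶜ)) := by
  have hn' : (10 : ℝ) ≤ n := by exact_mod_cast hn10
  have hm0 : 0 < m := by linarith
  have hτ0 : 0 ≤ τ := hτ ▸ by positivity
  have ht0 : (0 : ℝ) < #S := Nat.cast_pos.mpr hS.card_pos
  have htk : #S + #Sᶜ = n := hn ▸ Finset.card_add_card_compl S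
  have htn : (#S : ℝ) ≤ n := by exact_mod_cast htk ▸ Nat.le_add_right _ _
  obtain ⟨w, hw⟩ : ∃ w, w = m / (1 + g) := ⟨_, rfl⟩
  have hwg : w * (1 + g) = m := by rw [hw, div_mul_cancel₀ _ (by linarith)]
  have hw2 : 2 * w ≤ m := by nlinarith
  have hw3 : m ≤ 3 * w := by nlinarith
  have hwm : w / m = 1 / (1 + g) := by rw [hw]; field_simp
  rw [div_eq_mul_one_div _ ((1 + g) ^ _), ← one_div_pow, ← hwm] at hmass hmass'
  obtain ⟨κ, y, hy, hwy, hyw⟩ := exists_natCast_eq_mul hS.card_pos (w := w) (by linarith)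
  have hcard : #S ≤ κ := by rw [← Nat.cast_le (α := ℝ), hy]; nlinarith
  have hcard' : 2 * κ ≤ #S * Fintype.card A := by
    rw [← Nat.cast_le (α := ℝ)]
    push_cast
    rw [hy, ← hm, mul_left_comm]
    exact mul_le_mul_of_nonneg_left (by linarith) ht0.le
  have hbound := pow_mul_div_two_le_of_codePoly_eq (A := A) hf hQ hv hm (hn ▸ hτ) hS hr hcard
    hcard' hy (hn ▸ half_le_one_sub_sub_sub hn10 htk hwg hg1 hgt hnm hmn hJ hτ0 (by linarith) hwy
      hyw hmass)
  have hmain := pow_div_le_two_mul_pow_sub_one_div (t := #S) (by linarith) hw3 (by linarith) hwy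
  have hratio : y / (m - y) ≤ 1 / g := by
    rw [div_le_div_iff₀ (by nlinarith) (by linarith)]
    nlinarith
  have hratio0 : 0 ≤ y / (m - y) := div_nonneg (by linarith) (by nlinarith)
  calc (1 / 144 : ℝ) = 1 / 36 / 4 := by norm_num
    _ ≤ τ * m ^ n * (2 * ((y - 1) / (m - 1)) ^ #S) / 4 := by
      gcongr
      exact hmass'.trans (by gcongr)
    _ = m ^ Fintype.card I * τ * ((y - 1) / (m - 1)) ^ #S / 2 := by rw [hn]; ring
    _ ≤ _ := hbound.trans (by gcongr)

end BalancedSizeBound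

section AlphabetSize

/-- The expected fraction, up to constant factors, of isolating sets among the sets of the optimal
size over an alphabet of size `m`, where `t` and `k` are the numbers of positions in the tail and
outside of it, `n = t + k` and `exp (-L)` is the density of the code. -/
noncomputable def isolatingDensity (L : ℝ) (n k t m : ℕ) : ℝ :=
  Real.exp (-L) * (m : ℝ) ^ n / (1 + (m : ℝ) ^ ((k : ℝ) / t)) ^ t

variable {n k t m : ℕ} {L : ℝ}

lemma rpow_div_pow_eq_pow (ht : t ≠ 0) {x : ℝ} (hx : 0 ≤ x) (k : ℕ) :
    (x ^ ((k : ℝ) / t)) ^ t = x ^ k := by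
  rw [← Real.rpow_mul_natCast hx, div_mul_cancel₀ _ (Nat.cast_ne_zero.mpr ht), Real.rpow_natCast]

lemma rpow_div_le_two (ht : 0 < t) (hkt : 2 * k * Real.log n ≤ t * Real.log 2) (hm : 0 < m)
    (hmn : m ≤ n ^ 2) : (m : ℝ) ^ ((k : ℝ) / t) ≤ 2 := by
  have hm0 : (0 : ℝ) < m := Nat.cast_pos.mpr hm
  have hlog : Real.log m ≤ 2 * Real.log n := by
    have hle : Real.log m ≤ Real.log ((n : ℝ) ^ 2) := Real.log_le_log hm0 (by exact_mod_cast hmn)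
    rwa [Real.log_pow, Nat.cast_ofNat] at hle
  rw [← Real.log_le_log_iff (by positivity) two_pos, Real.log_rpow hm0, div_mul_eq_mul_div,
    div_le_iff₀' (Nat.cast_pos.mpr ht)]
  calc k * Real.log m ≤ k * (2 * Real.log n) := by gcongr
    _ = 2 * k * Real.log n := by ring
    _ ≤ t * Real.log 2 := hkt

lemma isolatingDensity_le_exp (hm : 0 < m) :
    isolatingDensity L n k t m ≤ Real.exp (n * Real.log m - L) := by
  have hm0 : (0 : ℝ) < m := Nat.cast_pos.mpr hm
  have hg : 0 ≤ (m : ℝ) ^ ((k : ℝ) / t) := by positivity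
  calc isolatingDensity L n k t m ≤ Real.exp (-L) * (m : ℝ) ^ n :=
        div_le_self (by positivity) (one_le_pow₀ (by linarith))
    _ = Real.exp (n * Real.log m - L) := by
      rw [sub_eq_neg_add, Real.exp_add, Real.exp_nat_mul, Real.exp_log hm0]

lemma exp_le_isolatingDensity (ht : 0 < t) (htn : t ≤ n) (hm : 0 < m) (hmn : m ≤ n ^ 2)
    (hkt : 2 * k * Real.log n ≤ t * Real.log 2) :
    Real.exp (n * Real.log m - L - 2 * n) ≤ isolatingDensity L n k t m := by
  have hm0 : (0 : ℝ) < m := Nat.cast_pos.mpr hm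
  have hg := rpow_div_le_two ht hkt hm hmn
  have hden : (1 + (m : ℝ) ^ ((k : ℝ) / t)) ^ t ≤ Real.exp (2 * n) := calc
    (1 + (m : ℝ) ^ ((k : ℝ) / t)) ^ t ≤ Real.exp 2 ^ t := by
      gcongr
      linarith [Real.add_one_le_exp (2 : ℝ)]
    _ ≤ Real.exp 2 ^ n := pow_le_pow_right₀ (Real.one_le_exp zero_le_two) htn
    _ = Real.exp (2 * n) := by rw [← Real.exp_nat_mul, mul_comm]
  calc Real.exp (n * Real.log m - L - 2 * n)
      = Real.exp (-L) * (m : ℝ) ^ n / Real.exp (2 * n) := by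
        rw [Real.exp_sub, sub_eq_neg_add, Real.exp_add, Real.exp_nat_mul, Real.exp_log hm0]
    _ ≤ isolatingDensity L n k t m := by
        unfold isolatingDensity
        gcongr

lemma isolatingDensity_succ_le (hn : 0 < n) (hnm : 12 * n ≤ m) :
    isolatingDensity L n k t (m + 1) ≤ 3 * isolatingDensity L n k t m := by
  have hnm' : 12 * (n : ℝ) ≤ m := by exact_mod_cast hnm
  have hm0 : (0 : ℝ) < m := Nat.cast_pos.mpr (by omega)
  have hpow : (1 + 1 / (m : ℝ)) ^ n ≤ 3 := by
    have hinv : 0 ≤ 1 / (m : ℝ) := by positivity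
    have hexp : n * (1 / (m : ℝ)) ≤ 1 / 12 := by
      rw [mul_one_div, div_le_iff₀ hm0]
      linarith
    exact (pow_one_add_le_inv_one_sub (by linarith) hexp (by norm_num)).trans (by norm_num)
  have hsucc : ((m + 1 : ℕ) : ℝ) = (1 + 1 / (m : ℝ)) * m := by
    push_cast
    field_simp
  calc isolatingDensity L n k t (m + 1)
      = Real.exp (-L) * ((1 + 1 / (m : ℝ)) ^ n * (m : ℝ) ^ n)
          / (1 + ((m + 1 : ℕ) : ℝ) ^ ((k : ℝ) / t)) ^ t := by
        rw [isolatingDensity, ← mul_pow, ← hsucc]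
    _ ≤ Real.exp (-L) * (3 * (m : ℝ) ^ n) / (1 + (m : ℝ) ^ ((k : ℝ) / t)) ^ t := by
        gcongr
        exact Nat.le_succ m
    _ = 3 * isolatingDensity L n k t m := by
        rw [isolatingDensity]
        ring

lemma isolatingDensity_twelve_mul_le (hn : 12 ≤ n) (hlog : 12 ≤ Real.log n)
    (hL : 3 / 2 * n * Real.log n - n ≤ L) : isolatingDensity L n k t (12 * n) ≤ 1 / 12 := by
  have hn' : (12 : ℝ) ≤ n := by exact_mod_cast hn
  have hlog12 : Real.log 12 ≤ 3 := by
    rw [Real.log_le_iff_le_exp (by norm_num), show (3 : ℝ) = (3 : ℕ) * 1 by norm_num,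
      Real.exp_nat_mul]
    calc (12 : ℝ) ≤ 2.7 ^ 3 := by norm_num
      _ ≤ Real.exp 1 ^ 3 := by gcongr; linarith [Real.exp_one_gt_d9]
  have hlogn : Real.log (12 * n : ℕ) ≤ 3 + Real.log n := by
    rw [Nat.cast_mul, Nat.cast_ofNat, Real.log_mul (by norm_num) (by linarith)]
    linarith
  calc isolatingDensity L n k t (12 * n) ≤ Real.exp (n * Real.log (12 * n : ℕ) - L) :=
        isolatingDensity_le_exp (by omega)
    _ ≤ Real.exp (-11) := Real.exp_le_exp.mpr (by nlinarith)
    _ ≤ 1 / 12 := by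
        rw [Real.exp_neg, ← one_div]
        exact one_div_le_one_div_of_le (by norm_num) (by linarith [Real.add_one_le_exp (11 : ℝ)])

lemma one_div_twelve_lt_isolatingDensity_sq {A : ℝ} (ht : 0 < t) (htn : t ≤ n) (hn : 12 ≤ n)
    (hlog : 12 ≤ Real.log n) (hkt : 2 * k * Real.log n ≤ t * Real.log 2) (hA : 4 * A ≤ n)
    (hL : L ≤ 3 / 2 * n * Real.log n + A * Real.log n + n + 1) :
    1 / 12 < isolatingDensity L n k t (n ^ 2) := by
  have : (12 : ℝ) ≤ n := by exact_mod_cast hn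
  have hlogsq : Real.log (n ^ 2 : ℕ) = 2 * Real.log n := by
    rw [Nat.cast_pow, Real.log_pow, Nat.cast_ofNat]
  calc (1 / 12 : ℝ) < Real.exp (-1) := by
        rw [Real.exp_neg, ← one_div]
        exact one_div_lt_one_div_of_lt (Real.exp_pos 1) (by linarith [Real.exp_one_lt_d9])
    _ ≤ Real.exp (n * Real.log (n ^ 2 : ℕ) - L - 2 * n) :=
        Real.exp_le_exp.mpr (by rw [hlogsq]; nlinarith)
    _ ≤ isolatingDensity L n k t (n ^ 2) :=
        exp_le_isolatingDensity ht htn (by positivity) le_rfl hkt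

/-- A discrete intermediate value argument: the density grows from below `1 / 12` to above `1 / 12`
in steps of factor at most `3`. -/
theorem exists_isolatingDensity_mem_Icc {A : ℝ} (ht : 0 < t) (htn : t ≤ n) (hn : 12 ≤ n)
    (hlog : 12 ≤ Real.log n) (hkt : 2 * k * Real.log n ≤ t * Real.log 2) (hA : 4 * A ≤ n)
    (hL₁ : 3 / 2 * n * Real.log n - n ≤ L)
    (hL₂ : L ≤ 3 / 2 * n * Real.log n + A * Real.log n + n + 1) :
    ∃ m ∈ Set.Icc (12 * n) (n ^ 2), isolatingDensity L n k t m ∈ Set.Icc (1 / 36) (1 / 12) := by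
  have hfirst := isolatingDensity_twelve_mul_le (k := k) (t := t) hn hlog hL₁
  have hlast := one_div_twelve_lt_isolatingDensity_sq ht htn hn hlog hkt hA hL₂
  obtain ⟨m, hm, hmn, hle, hlt⟩ : ∃ m, 12 * n ≤ m ∧ m < n ^ 2 ∧
      isolatingDensity L n k t m ≤ 1 / 12 ∧ 1 / 12 < isolatingDensity L n k t (m + 1) := by
    by_contra! hcon
    have hsmall : ∀ m, 12 * n ≤ m → m ≤ n ^ 2 → isolatingDensity L n k t m ≤ 1 / 12 := by
      intro m hm
      induction m, hm using Nat.le_induction with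
      | base => exact fun _ => hfirst
      | succ m hm ih => exact fun h => hcon m hm h (ih (Nat.le_of_succ_le h))
    exact hlast.not_ge (hsmall _ (by nlinarith) le_rfl)
  have hratio := isolatingDensity_succ_le (L := L) (k := k) (t := t) (by omega) hm
  exact ⟨m, ⟨hm, hmn.le⟩, by linarith, hle⟩

end AlphabetSize

section Numbers

variable {μ : ℝ}

lemma one_add_nwGamma_mul (hμ1 : μ < 1) : (1 + nwGamma μ) * (1 - μ) = 5 + μ := by
  have hne : 1 - (μ + (1 - μ) / 2) ≠ 0 := by linarith
  have hγ : nwGamma μ * (1 - (μ + (1 - μ) / 2)) = 2 * (μ + (1 - μ) / 2) + 1 :=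
    div_mul_cancel₀ _ hne
  linear_combination 2 * hγ

lemma five_le_one_add_nwGamma (hμ0 : 0 ≤ μ) (hμ1 : μ < 1) : 5 ≤ 1 + nwGamma μ := by
  have hmul := one_add_nwGamma_mul hμ1
  by_contra! hlt
  nlinarith

variable {n p : ℕ}

lemma pow_five_le_of_rpow_le (hμ0 : 0 ≤ μ) (hμ1 : μ < 1) (hn : 1 ≤ n)
    (hp : (n : ℝ) ^ (1 + nwGamma μ) ≤ p) : (n : ℝ) ^ 5 ≤ p := by
  refine le_trans ?_ hp
  rw [← Real.rpow_natCast]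
  exact Real.rpow_le_rpow_of_exponent_le (by exact_mod_cast hn)
    (by exact_mod_cast five_le_one_add_nwGamma hμ0 hμ1)

lemma natCast_pos_of_log_pos (hn : 0 < Real.log n) : (0 : ℝ) < n :=
  n.cast_nonneg.lt_of_ne fun h => hn.ne' (by rw [← h, Real.log_zero])

lemma sub_nwDreal_mul (hμ1 : μ < 1) (hγ : 1 + nwGamma μ ≠ 0) (hn : 0 < Real.log n)
    (hp : (p : ℝ) ≠ 0) :
    (n - nwDreal μ n (n * p)) * (1 + nwGamma μ) =
      (3 - (1 + μ) / 2 * (Real.log p / Real.log n - (1 + nwGamma μ))) * n / 2 := by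
  have hmul := one_add_nwGamma_mul hμ1
  have hn0 := natCast_pos_of_log_pos hn
  rw [nwDreal, Nat.cast_mul, Real.log_mul hn0.ne' hp]
  field_simp
  linear_combination Real.log n * hmul

lemma log_mem_Icc_of_rpow_le {x y a : ℝ} (hx : 0 < x) (hxy : x ^ a ≤ y) (hyx : y ≤ 2 * x ^ a) :
    Real.log y ∈ Set.Icc (a * Real.log x) (a * Real.log x + 1) := by
  have hpow : 0 < x ^ a := Real.rpow_pos_of_pos hx a
  rw [← Real.log_rpow hx]
  refine ⟨Real.log_le_log hpow hxy, (Real.log_le_log (hpow.trans_le hxy) hyx).trans ?_⟩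
  rw [Real.log_mul two_ne_zero hpow.ne']
  linarith [Real.log_two_lt_d9]

variable (hμ0 : 0 ≤ μ) (hμ1 : μ < 1) (hn : 1 ≤ Real.log n)
  (hp : (n : ℝ) ^ (1 + nwGamma μ) ≤ p) (hp' : (p : ℝ) ≤ 2 * (n : ℝ) ^ (1 + nwGamma μ))

include hμ0 hμ1 hn hp hp'

lemma exists_sub_nwDreal_mul_eq : ∃ u, 0 ≤ u ∧ u * Real.log n ≤ 1 ∧
    (n - nwDreal μ n (n * p)) * (1 + nwGamma μ) = (3 - u) * n / 2 := by
  have hA := five_le_one_add_nwGamma hμ0 hμ1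
  have hlog : 0 < Real.log n := by linarith
  have hn0 := natCast_pos_of_log_pos hlog
  have hp0 : (0 : ℝ) < p := (Real.rpow_pos_of_pos hn0 _).trans_le hp
  obtain ⟨hlower, hupper⟩ := log_mem_Icc_of_rpow_le hn0 hp hp'
  refine ⟨_, ?_, ?_, sub_nwDreal_mul hμ1 (by linarith) hlog hp0.ne'⟩
  · have : 1 + nwGamma μ ≤ Real.log p / Real.log n := by rwa [le_div_iff₀ hlog]
    exact mul_nonneg (by linarith) (by linarith)
  · rw [mul_assoc, sub_mul, div_mul_cancel₀ _ hlog.ne']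
    nlinarith

lemma nwDreal_mem_Icc : nwDreal μ n (n * p) ∈ Set.Icc 0 (n : ℝ) := by
  obtain ⟨u, hu0, hu1, hu⟩ := exists_sub_nwDreal_mul_eq hμ0 hμ1 hn hp hp'
  have hA := five_le_one_add_nwGamma hμ0 hμ1
  have hu_le : u ≤ 1 := by nlinarith
  have : (0 : ℝ) ≤ n := n.cast_nonneg
  constructor <;> nlinarith

lemma floor_nwDreal_le : ⌊nwDreal μ n (n * p)⌋₊ ≤ n :=
  Nat.floor_le_of_le (nwDreal_mem_Icc hμ0 hμ1 hn hp hp').2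

lemma le_sub_floor_nwDreal_mul_log :
    3 / 2 * n * Real.log n - n ≤ ((n : ℝ) - ⌊nwDreal μ n (n * p)⌋₊) * Real.log p := by
  obtain ⟨u, -, hu1, hu⟩ := exists_sub_nwDreal_mul_eq hμ0 hμ1 hn hp hp'
  obtain ⟨hD0, hDn⟩ := nwDreal_mem_Icc hμ0 hμ1 hn hp hp'
  have hn0 := natCast_pos_of_log_pos (zero_lt_one.trans_le hn)
  have hA := five_le_one_add_nwGamma hμ0 hμ1
  have hlog := (log_mem_Icc_of_rpow_le hn0 hp hp').1
  have hfloor := Nat.floor_le hD0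
  calc 3 / 2 * n * Real.log n - n ≤ (3 - u) * n / 2 * Real.log n := by nlinarith
    _ = (n - nwDreal μ n (n * p)) * ((1 + nwGamma μ) * Real.log n) := by rw [← hu, mul_assoc]
    _ ≤ (n - ⌊nwDreal μ n (n * p)⌋₊) * Real.log p := by
      gcongr
      linarith

lemma sub_floor_nwDreal_mul_log_le :
    ((n : ℝ) - ⌊nwDreal μ n (n * p)⌋₊) * Real.log p ≤
      3 / 2 * n * Real.log n + (1 + nwGamma μ) * Real.log n + n + 1 := by
  obtain ⟨u, hu0, -, hu⟩ := exists_sub_nwDreal_mul_eq hμ0 hμ1 hn hp hp'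
  obtain ⟨hD0, hDn⟩ := nwDreal_mem_Icc hμ0 hμ1 hn hp hp'
  have hn0 := natCast_pos_of_log_pos (zero_lt_one.trans_le hn)
  have := five_le_one_add_nwGamma hμ0 hμ1
  obtain ⟨-, hlog⟩ := log_mem_Icc_of_rpow_le hn0 hp hp'
  have hfloor := Nat.lt_floor_add_one (nwDreal μ n (n * p))
  calc ((n : ℝ) - ⌊nwDreal μ n (n * p)⌋₊) * Real.log p
      ≤ (n - nwDreal μ n (n * p) + 1) * ((1 + nwGamma μ) * Real.log n + 1) := by
        gcongr
        linarith
    _ = (3 - u) * n / 2 * Real.log n + (1 + nwGamma μ) * Real.log n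
          + (n - nwDreal μ n (n * p)) + 1 := by rw [← hu]; ring
    _ ≤ _ := by
        have : 0 ≤ u * n * Real.log n := by positivity
        linarith

end Numbers

section LargeIndex

variable {μ : ℝ} {n p : ℕ}

lemma eventually_le_log_and_le_sqrt (a : ℝ) : ∀ᶠ n : ℕ in Filter.atTop,
    12 ≤ Real.log n ∧ 74 ≤ √n ∧ Real.log n ≤ √n ∧ 4 * a ≤ n := by
  have hcast := tendsto_natCast_atTop_atTop (R := ℝ)
  have hlogsqrt : ∀ᶠ x : ℝ in Filter.atTop, Real.log x ≤ √x := by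
    filter_upwards [(isLittleO_log_rpow_atTop (r := 1 / 2) (by norm_num)).bound one_pos]
      with x hx
    rw [one_mul, ← Real.sqrt_eq_rpow, Real.norm_of_nonneg (Real.sqrt_nonneg x)] at hx
    exact (le_abs_self _).trans hx
  filter_upwards [(Real.tendsto_log_atTop.comp hcast).eventually_ge_atTop 12,
    (Real.tendsto_sqrt_atTop.comp hcast).eventually_ge_atTop 74, hcast.eventually hlogsqrt,
    hcast.eventually_ge_atTop (4 * a)] with n hlog hsqrt hlogsqrt ha
  exact ⟨hlog, hsqrt, hlogsqrt, ha⟩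

lemma mul_rpow_div_le_inv_pow (hμ1 : μ < 1) {m : ℝ} (hn : 0 < n) (hm : m ≤ n ^ 2)
    (hp : (n : ℝ) ^ (1 + nwGamma μ) ≤ p) : m * ((n * p : ℕ) : ℝ) ^ μ / p ≤ ((n : ℝ) ^ 3)⁻¹ := by
  have hn0 : (0 : ℝ) < n := Nat.cast_pos.mpr hn
  have hp0 : (0 : ℝ) < p := (Real.rpow_pos_of_pos hn0 _).trans_le hp
  have hsix : (n : ℝ) ^ 6 ≤ (n * p : ℝ) ^ (1 - μ) := calc
    (n : ℝ) ^ 6 = ((n : ℝ) ^ (1 + (1 + nwGamma μ))) ^ (1 - μ) := by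
      rw [← Real.rpow_mul hn0.le, ← Real.rpow_natCast]
      congr 1
      push_cast
      linarith [one_add_nwGamma_mul hμ1]
    _ ≤ (n * p : ℝ) ^ (1 - μ) := by
      refine Real.rpow_le_rpow (by positivity) ?_ (by linarith)
      rw [Real.rpow_add hn0, Real.rpow_one]
      gcongr
  have hsplit : (n * p : ℝ) ^ μ * (n * p : ℝ) ^ (1 - μ) = n * p := by
    rw [← Real.rpow_add (by positivity), add_sub_cancel, Real.rpow_one]
  rw [Nat.cast_mul, div_le_iff₀ hp0, ← div_eq_inv_mul, le_div_iff₀ (by positivity)]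
  refine le_of_mul_le_mul_left ?_ hn0
  calc n * (m * (n * p : ℝ) ^ μ * n ^ 3) ≤ n * (n ^ 2 * (n * p : ℝ) ^ μ * n ^ 3) := by gcongr
    _ = (n * p : ℝ) ^ μ * n ^ 6 := by ring
    _ ≤ (n * p : ℝ) ^ μ * (n * p : ℝ) ^ (1 - μ) := by gcongr
    _ = n * p := hsplit

lemma mul_rpow_div_pow_le_rpow_neg (hμ1 : μ < 1) {m : ℝ} (hn : 1 ≤ (n : ℝ)) (hm0 : 0 ≤ m)
    (hm : m ≤ n ^ 2) (hp : (n : ℝ) ^ (1 + nwGamma μ) ≤ p) {k r : ℕ} (hkr : k ≤ r) :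
    (m * ((n * p : ℕ) : ℝ) ^ μ / p) ^ r ≤ (n : ℝ) ^ (-(k / 2 : ℝ)) := by
  have hn0 : (0 : ℝ) < n := by linarith
  have hkr' : (k : ℝ) ≤ r := Nat.cast_le.mpr hkr
  have : (0 : ℝ) ≤ r := r.cast_nonneg
  calc (m * ((n * p : ℕ) : ℝ) ^ μ / p) ^ r ≤ (((n : ℝ) ^ 3)⁻¹) ^ r :=
        pow_le_pow_left₀ (by positivity)
          (mul_rpow_div_le_inv_pow hμ1 (Nat.cast_pos.mp hn0) hm hp) r
    _ = (n : ℝ) ^ (-((3 * r : ℕ) : ℝ)) := by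
        rw [Real.rpow_neg hn0.le, Real.rpow_natCast, inv_pow, ← pow_mul]
    _ ≤ (n : ℝ) ^ (-(k / 2 : ℝ)) :=
        Real.rpow_le_rpow_of_exponent_le hn (by push_cast; linarith)

lemma one_div_pow_le_rpow_neg {t k e : ℕ} {x m g : ℝ} (hx : 0 < x) (hxm : x ≤ m) (hg : 1 ≤ g)
    (hgt : g ^ t = m ^ k) (he : t ≤ 2 * e) : (1 / g) ^ e ≤ x ^ (-(k / 2 : ℝ)) := by
  have hg0 : 0 < g := by linarith
  have hsq : (x ^ (-(k / 2 : ℝ))) ^ 2 = (x ^ k)⁻¹ := by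
    rw [← Real.rpow_mul_natCast hx.le, Nat.cast_ofNat, neg_mul, div_mul_cancel₀ _ two_ne_zero,
      Real.rpow_neg hx.le, Real.rpow_natCast]
  refine le_of_sq_le_sq ?_ (by positivity)
  rw [hsq, ← pow_mul, mul_comm e]
  calc (1 / g) ^ (2 * e) ≤ (1 / g) ^ t :=
        pow_le_pow_of_le_one (by positivity) ((div_le_one hg0).mpr hg) he
    _ = (m ^ k)⁻¹ := by rw [one_div, inv_pow, hgt]
    _ ≤ (x ^ k)⁻¹ := by gcongr

lemma exists_threshold_and_prefix_length (n : ℕ) :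
    ∃ r k : ℕ, k ≤ r ∧ 4 * (r * k) ≤ n ∧ 4 * k ≤ n ∧ 4 * (k : ℝ) ≤ √n ∧ √n ≤ 4 * k + 4 := by
  have hfloor : (n.sqrt : ℝ) ≤ √n := Real.nat_sqrt_le_real_sqrt
  have hceil : √n ≤ n.sqrt + 1 := Real.real_sqrt_le_nat_sqrt_succ
  have hdiv : 4 * (n.sqrt / 4) ≤ n.sqrt := Nat.mul_div_le _ _
  have hdiv' : n.sqrt ≤ 4 * (n.sqrt / 4) + 3 := by omega
  have hle := n.sqrt_le_self
  refine ⟨n.sqrt, n.sqrt / 4, by omega, ?_, by omega, ?_, ?_⟩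
  · nlinarith [n.sqrt_le]
  · exact le_trans (by exact_mod_cast hdiv) hfloor
  · have : (n.sqrt : ℝ) ≤ 4 * (n.sqrt / 4 : ℕ) + 3 := by exact_mod_cast hdiv'
    linarith

lemma two_mul_mul_log_le {k t : ℕ} (htk : t + k = n) (hkn : 4 * k ≤ n) (hk : 4 * (k : ℝ) ≤ √n)
    (hlog : Real.log n ≤ √n) : 2 * k * Real.log n ≤ t * Real.log 2 := by
  have ht : 3 / 4 * (n : ℝ) ≤ t := by
    have : 3 * (n : ℝ) ≤ 4 * t := by exact_mod_cast (by omega : 3 * n ≤ 4 * t)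
    linarith
  calc 2 * k * Real.log n ≤ √n / 2 * √n := by gcongr; linarith
    _ = n / 2 := by rw [div_mul_eq_mul_div, Real.mul_self_sqrt n.cast_nonneg]
    _ ≤ 3 / 4 * n * 0.69 := by linarith [(n.cast_nonneg : (0 : ℝ) ≤ n)]
    _ ≤ t * Real.log 2 := by gcongr; linarith [Real.log_two_gt_d9]

lemma rpow_sqrt_mul_le_one {k : ℕ} (hsqrt : 74 ≤ √n) (hk : √n ≤ 4 * k + 4) :
    (n : ℝ) ^ (1 / 16 * √n) * (288 * (n ^ 3 * (n : ℝ) ^ (-(k / 2) : ℝ))) ≤ 1 := by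
  have hn : (288 : ℝ) ≤ n := by nlinarith [Real.mul_self_sqrt (n.cast_nonneg : (0 : ℝ) ≤ n)]
  have hn0 : (0 : ℝ) < n := by linarith
  calc (n : ℝ) ^ (1 / 16 * √n) * (288 * (n ^ 3 * (n : ℝ) ^ (-(k / 2) : ℝ)))
      ≤ n ^ (1 / 16 * √n) * (n * (n ^ 3 * (n : ℝ) ^ (-(k / 2) : ℝ))) := by gcongr
    _ = (n : ℝ) ^ (1 / 16 * √n + (4 : ℕ) + -(k / 2 : ℝ)) := by
      rw [Real.rpow_add hn0, Real.rpow_add hn0, Real.rpow_natCast]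
      ring
    _ ≤ 1 := Real.rpow_le_one_of_one_le_of_nonpos (by linarith) (by push_cast; linarith)

lemma exp_neg_sub_mul_log {D : ℕ} (hp : 0 < p) :
    Real.exp (-(((n : ℝ) - D) * Real.log p)) = (p : ℝ) ^ D / (p : ℝ) ^ n := by
  rw [show -(((n : ℝ) - D) * Real.log p) = D * Real.log p - n * Real.log p by ring, Real.exp_sub,
    Real.exp_nat_mul, Real.exp_nat_mul, Real.exp_log (Nat.cast_pos.mpr hp)]

end LargeIndex

section NisanWigderson

open scoped Finset

variable {F : Type*} [Field F] {μ : ℝ} {n p T d r k t : ℕ} [NeZero p]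

lemma exists_alphabet_size (hμ0 : 0 ≤ μ) (hμ1 : μ < 1) (hlog : 12 ≤ Real.log n)
    (hγ : 4 * (1 + nwGamma μ) ≤ n) (hp : (n : ℝ) ^ (1 + nwGamma μ) ≤ p)
    (hp' : (p : ℝ) ≤ 2 * (n : ℝ) ^ (1 + nwGamma μ)) (ht : 0 < t) (htn : t ≤ n)
    (hkt : 2 * k * Real.log n ≤ t * Real.log 2) :
    ∃ (m : ℕ) (g : ℝ), m ∈ Set.Icc (12 * n) (n ^ 2) ∧ g ∈ Set.Icc 1 2 ∧ g ^ t = m ^ k ∧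
      (p : ℝ) ^ ⌊nwDreal μ n (n * p)⌋₊ / p ^ n * m ^ n / (1 + g) ^ t ∈ Set.Icc (1 / 36) (1 / 12)
      := by
  have hn : 12 ≤ n := by exact_mod_cast hlog.trans (Real.log_le_self n.cast_nonneg)
  have hlog1 : 1 ≤ Real.log n := by linarith
  obtain ⟨m, hm, hmass⟩ := exists_isolatingDensity_mem_Icc ht htn hn hlog hkt hγ
    (le_sub_floor_nwDreal_mul_log hμ0 hμ1 hlog1 hp hp')
    (sub_floor_nwDreal_mul_log_le hμ0 hμ1 hlog1 hp hp')
  have hm0 : 0 < m := by have := hm.1; omega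
  rw [isolatingDensity, exp_neg_sub_mul_log (NeZero.pos p)] at hmass
  exact ⟨m, m ^ ((k : ℝ) / t), hm, ⟨Real.one_le_rpow (Nat.one_le_cast.mpr hm0) (by positivity),
    rpow_div_le_two ht hkt hm0 hm.2⟩, rpow_div_pow_eq_pow ht.ne' m.cast_nonneg k, hmass⟩

lemma exists_one_div_le_of_NWpoly_eq [Infinite F] (hμ0 : 0 ≤ μ) (hμ1 : μ < 1) (hprime : p.Prime)
    (hlog : 12 ≤ Real.log n) (hlogsqrt : Real.log n ≤ √n) (hγ : 4 * (1 + nwGamma μ) ≤ n)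
    (hp : (n : ℝ) ^ (1 + nwGamma μ) ≤ p) (hp' : (p : ℝ) ≤ 2 * (n : ℝ) ^ (1 + nwGamma μ))
    {Q : Fin T → Fin d → MvPolynomial (Fin n × ZMod p) F}
    (hv : ∀ i j, (#(Q i j).vars : ℝ) ≤ ((n * p : ℕ) : ℝ) ^ μ)
    (hQ : NWpoly F μ n p = ∑ i, ∏ j, Q i j) (htk : t + k = n) (hkn : 4 * k ≤ n)
    (hrk : r * k ≤ t) (hk : 4 * (k : ℝ) ≤ √n) :
    ∃ m g : ℝ, n ≤ m ∧ m ≤ n ^ 2 ∧ 1 ≤ g ∧ g ^ t = m ^ k ∧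
      1 / 144 ≤ T * d * (m * ((n * p : ℕ) : ℝ) ^ μ / p) ^ r
        + T * (t * m * (1 / g) ^ (t - r * k)) := by
  have : Fact p.Prime := ⟨hprime⟩
  have hn : 12 ≤ n := by exact_mod_cast hlog.trans (Real.log_le_self n.cast_nonneg)
  obtain ⟨m, g, ⟨hm, hmn⟩, ⟨hg1, hg2⟩, hgt, hmass', hmass⟩ := exists_alphabet_size hμ0 hμ1 hlog hγ
    hp hp' (by omega) (by omega) (two_mul_mul_log_le htk hkn hk hlogsqrt)
  have hm' : 12 * (n : ℝ) ≤ m := by exact_mod_cast hm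
  have hmn' : (m : ℝ) ≤ n ^ 2 := by exact_mod_cast hmn
  refine ⟨m, g, by linarith [(n.cast_nonneg : (0 : ℝ) ≤ n)], hmn', hg1, hgt, ?_⟩
  obtain ⟨S, -, rfl⟩ := Finset.exists_subset_card_eq
    (s := (Finset.univ : Finset (Fin n))) (n := t) (by rw [Finset.card_fin]; omega)
  obtain rfl : k = #Sᶜ := by rw [Finset.card_compl, Fintype.card_fin]; omega
  have hp5 := pow_five_le_of_rpow_le hμ0 hμ1 (by omega) hp
  have hnp : n ≤ p := by
    exact_mod_cast (le_self_pow₀ (by exact_mod_cast (by omega : 1 ≤ n)) (by norm_num)).trans hp5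
  have hD : ⌊nwDreal μ n (n * p)⌋₊ ≤ Fintype.card (Fin n) :=
    (floor_nwDreal_le hμ0 hμ1 (by linarith) hp hp').trans_eq (Fintype.card_fin n).symm
  have hcode := isNearlyEquidistributed_reedSolomon (injective_natCast_zmod hnp) hD
  rw [NWpoly_eq_codePoly] at hQ
  simpa only [Fintype.card_fin, ZMod.card] using one_div_le_of_codePoly_eq hcode hQ hv
    (Fintype.card_fin n).symm (congrArg Nat.cast (Fintype.card_fin m).symm)
    (by simp only [Fintype.card_pi_const, ZMod.card, Nat.cast_pow])
    (Finset.card_pos.mp (by omega)) hrk (by omega) hm' hmn' (by simpa only [ZMod.card] using hp5)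
    hg1 hg2 hgt hmass hmass'

/-- Both error terms are at most `n ^ (3 - k / 2)`, up to the factor `T * d`, where `k ≈ √n / 4`. -/
theorem rpow_sqrt_le_of_NWpoly_eq_of_infinite [Infinite F] (hμ0 : 0 ≤ μ) (hμ1 : μ < 1)
    (hprime : p.Prime) (hlog : 12 ≤ Real.log n) (hsqrt : 74 ≤ √n) (hlogsqrt : Real.log n ≤ √n)
    (hγ : 4 * (1 + nwGamma μ) ≤ n) (hp : (n : ℝ) ^ (1 + nwGamma μ) ≤ p)
    (hp' : (p : ℝ) ≤ 2 * (n : ℝ) ^ (1 + nwGamma μ)) (hd : 0 < d)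
    {Q : Fin T → Fin d → MvPolynomial (Fin n × ZMod p) F}
    (hv : ∀ i j, (#(Q i j).vars : ℝ) ≤ ((n * p : ℕ) : ℝ) ^ μ)
    (hQ : NWpoly F μ n p = ∑ i, ∏ j, Q i j) :
    (n : ℝ) ^ (1 / 16 * √n) ≤ (T * d : ℕ) := by
  have hn : (1 : ℝ) ≤ n := by linarith [Real.log_le_self (n.cast_nonneg : (0 : ℝ) ≤ n)]
  have hn0 : (0 : ℝ) < n := by linarith
  obtain ⟨r, k, hkr, hrk, hkn, hk, hk'⟩ := exists_threshold_and_prefix_length n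
  obtain ⟨t, htk⟩ : ∃ t, t + k = n := ⟨n - k, by omega⟩
  obtain ⟨m, g, hnm, hmn, hg, hgt, hbound⟩ := exists_one_div_le_of_NWpoly_eq hμ0 hμ1 hprime hlog
    hlogsqrt hγ hp hp' hv hQ htk hkn (by omega : r * k ≤ t) hk
  have hm0 : 0 ≤ m := hn0.le.trans hnm
  have : 0 ≤ g := zero_le_one.trans hg
  have hsmall := mul_rpow_div_pow_le_rpow_neg hμ1 hn hm0 hmn hp hkr
  have hsurvive := one_div_pow_le_rpow_neg hn0 hnm hg hgt (by omega : t ≤ 2 * (t - r * k))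
  have hcount : t * m ≤ (n : ℝ) ^ 3 := by
    have htn : (t : ℝ) ≤ n := by exact_mod_cast htk ▸ Nat.le_add_right t k
    exact (mul_le_mul htn hmn hm0 hn0.le).trans_eq (by ring)
  have hT : (T : ℝ) ≤ T * d := by exact_mod_cast Nat.le_mul_of_pos_right T hd
  set B : ℝ := (n : ℝ) ^ (-(k / 2) : ℝ)
  have : 0 < B := Real.rpow_pos_of_pos hn0 _
  have hn3 : (1 : ℝ) ≤ n ^ 3 := one_le_pow₀ hn
  have hTd : 1 ≤ T * d * (288 * (n ^ 3 * B)) := calc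
    (1 : ℝ) = 144 * (1 / 144) := by norm_num
    _ ≤ 144 * (T * d * (m * ((n * p : ℕ) : ℝ) ^ μ / p) ^ r
          + T * (t * m * (1 / g) ^ (t - r * k))) := by gcongr
    _ ≤ 144 * (T * d * (1 * B) + T * d * (n ^ 3 * B)) := by
      rw [one_mul]
      gcongr
    _ ≤ 144 * (T * d * (n ^ 3 * B) + T * d * (n ^ 3 * B)) := by gcongr
    _ = T * d * (288 * (n ^ 3 * B)) := by ring
  push_cast
  exact le_of_mul_le_mul_right ((rpow_sqrt_mul_le_one hsqrt hk').trans hTd) (by positivity)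

lemma map_NWpoly {K : Type*} [Field K] (φ : F →+* K) :
    map φ (NWpoly F μ n p) = NWpoly K μ n p := by
  simp only [NWpoly, map_sum, map_prod, map_X]

variable (hμ0 : 0 ≤ μ) (hμ1 : μ < 1) (hprime : p.Prime) (hlog : 12 ≤ Real.log n)
  (hsqrt : 74 ≤ √n) (hlogsqrt : Real.log n ≤ √n) (hγ : 4 * (1 + nwGamma μ) ≤ n)
  (hp : (n : ℝ) ^ (1 + nwGamma μ) ≤ p) (hp' : (p : ℝ) ≤ 2 * (n : ℝ) ^ (1 + nwGamma μ))

include hμ0 hμ1 hprime hlog hsqrt hlogsqrt hγ hp hp'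

lemma NWpoly_ne_C [Infinite F] (a : F) : NWpoly F μ n p ≠ C a := by
  intro h
  have hle := rpow_sqrt_le_of_NWpoly_eq_of_infinite hμ0 hμ1 hprime hlog hsqrt hlogsqrt hγ hp hp'
    one_pos (T := 1) (Q := fun _ _ => C a)
    (fun _ _ => by rw [vars_C, Finset.card_empty, Nat.cast_zero]; positivity) (by simpa using h)
  have hlt : 1 < (n : ℝ) ^ (1 / 16 * √n) :=
    Real.one_lt_rpow (by linarith [Real.log_le_self (n.cast_nonneg : (0 : ℝ) ≤ n)]) (by linarith)
  exact hlt.not_ge (by simpa using hle)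

/-- A finite field is replaced by its algebraic closure, which is infinite. -/
lemma rpow_sqrt_le_of_NWpoly_eq {Q : Fin T → Fin d → MvPolynomial (Fin n × ZMod p) F}
    (hv : ∀ i j, (#(Q i j).vars : ℝ) ≤ ((n * p : ℕ) : ℝ) ^ μ)
    (hQ : NWpoly F μ n p = ∑ i, ∏ j, Q i j) : (n : ℝ) ^ (1 / 16 * √n) ≤ (T * d : ℕ) := by
  let φ := algebraMap F (AlgebraicClosure F)
  have hQ' : NWpoly (AlgebraicClosure F) μ n p = ∑ i, ∏ j, map φ (Q i j) := by
    rw [← map_NWpoly φ, hQ]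
    simp only [map_sum, map_prod]
  rcases d.eq_zero_or_pos with rfl | hd
  · refine absurd ?_ (NWpoly_ne_C hμ0 hμ1 hprime hlog hsqrt hlogsqrt hγ hp hp'
      (T : AlgebraicClosure F))
    simpa using hQ'
  · refine rpow_sqrt_le_of_NWpoly_eq_of_infinite hμ0 hμ1 hprime hlog hsqrt hlogsqrt hγ hp hp' hd
      (fun i j => ?_) hQ'
    rw [vars_map_of_injective _ φ.injective]
    exact hv i j

end NisanWigderson

theorem stmt0_general (μ : ℝ) (hμ0 : 0 ≤ μ) (hμ1 : μ < 1) :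
    ∃ c : ℝ, 0 < c ∧ ∃ n₀ : ℕ, ∀ n : ℕ, n₀ ≤ n →
      ∀ (ψ : ℕ) [NeZero ψ], ψ.Prime →
        (n : ℝ) ^ (1 + nwGamma μ) ≤ (ψ : ℝ) →
        (ψ : ℝ) ≤ 2 * (n : ℝ) ^ (1 + nwGamma μ) →
        ∀ (F : Type*) [Field F] (T d : ℕ) (Q : Fin T → Fin d → MvPolynomial (Fin n × ZMod ψ) F),
          (∀ i j, ((Q i j).vars.card : ℝ) ≤ ((n * ψ : ℕ) : ℝ) ^ μ) →
          NWpoly F μ n ψ = ∑ i, ∏ j, Q i j →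
          (n : ℝ) ^ (c * Real.sqrt n) ≤ ((T * d : ℕ) : ℝ) := by
  obtain ⟨n₀, hn₀⟩ :=
    Filter.eventually_atTop.mp (eventually_le_log_and_le_sqrt (1 + nwGamma μ))
  refine ⟨1 / 16, by norm_num, n₀, fun n hn ψ _ hψ hlower hupper F _ T d Q hv hQ => ?_⟩
  obtain ⟨hlog, hsqrt, hlogsqrt, hγ⟩ := hn₀ n hn
  exact rpow_sqrt_le_of_NWpoly_eq hμ0 hμ1 hψ hlog hsqrt hlogsqrt hγ hlower hupper hv hQ

/-- Over a field of characteristic zero, for every constant `0 ≤ μ < 1`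
there are constants `c > 0` and `n₀` (depending only on `μ`) such that for every `n ≥ n₀`,
with `ψ` the smallest prime in `[n^{1+γ}, 2n^{1+γ}]` and `N = n·ψ` the number of variables,
any representation `NW_{n,μ} = ∑_{i=1}^T ∏_{j=1}^d Q_{ij}` in which every `Q_{ij}` depends
on at most `N^μ` variables satisfies `T·d ≥ n^{c·√n}`. -/
theorem stmt0 (F : Type*) [Field F] [CharZero F] (μ : ℝ) (hμ0 : 0 ≤ μ) (hμ1 : μ < 1) :
    ∃ c : ℝ, 0 < c ∧ ∃ n₀ : ℕ, ∀ n : ℕ, n₀ ≤ n →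
      ∀ (ψ : ℕ) [NeZero ψ], ψ.Prime →
        (n : ℝ) ^ (1 + nwGamma μ) ≤ (ψ : ℝ) →
        (ψ : ℝ) ≤ 2 * (n : ℝ) ^ (1 + nwGamma μ) →
        (∀ ψ' : ℕ, ψ'.Prime → (n : ℝ) ^ (1 + nwGamma μ) ≤ (ψ' : ℝ) →
          (ψ' : ℝ) ≤ 2 * (n : ℝ) ^ (1 + nwGamma μ) → ψ ≤ ψ') →
        ∀ (T d : ℕ) (Q : Fin T → Fin d → MvPolynomial (Fin n × ZMod ψ) F),
          (∀ i j, ((Q i j).vars.card : ℝ) ≤ ((n * ψ : ℕ) : ℝ) ^ μ) →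
          NWpoly F μ n ψ = ∑ i, ∏ j, Q i j →
          (n : ℝ) ^ (c * Real.sqrt n) ≤ ((T * d : ℕ) : ℝ) := by
  obtain ⟨c, hc, n₀, h⟩ := stmt0_general μ hμ0 hμ1
  exact ⟨c, hc, n₀, fun n hn ψ _ hψ hlower hupper _ => h n hn ψ hψ hlower hupper F⟩
end

section
/- Let c > 0 and 0 ≤ μ < 1/2 be constants and let F be a field of characteristic zero. For each N, let C_N be the set of polynomials P in N variables over F with individual degree at most k in every variable that can be written as P = ∑_{i=1}^{T} ∏_{j=1}^{d} Q_{ij} with T < (log N)^c, k < (log N)^c, d < N^c, and each Q_{ij} depending on at most N^μ variables. Then there exists a constant ε < 1, depending only on c and μ, such that for all sufficiently large N there is a finite set H ⊆ F^N with |H| ≤ exp(N^ε) such that for every nonzero P ∈ C_N there is a point p ∈ H with P(p) ≠ 0. -/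
open MvPolynomial

/-! The proof is by counting zero patterns. On a finite grid `S ^ N`, each factor `Q i j` is given
by the table of its values at the `|S| ^ s` readings of the `s` coordinates it depends on. With one
table for every factor and every choice of coordinates, `T d (N |S|) ^ s` parameters describe all
sums `∑ i, ∏ j, Q i j` on the grid, and the value at each grid point is a polynomial of low degree
in the parameters. A family of low degree polynomials has few zero patterns (Rónyai, Babai and
Ganapathy). By Schwartz–Zippel, each pattern of interest covers at most half of the grid, so
repeatedly choosing the grid point that avoids the most remaining patterns yields a hitting set
whose size is about the logarithm of the number of patterns. -/

open Filter Finset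

theorem exists_two_mul_card_filter_mem_le {G : Type*} [Fintype G] [DecidableEq G] [Nonempty G]
    {𝒵 : Finset (Finset G)} (h𝒵 : ∀ Z ∈ 𝒵, 2 * #Z ≤ Fintype.card G) :
    ∃ p : G, 2 * #{Z ∈ 𝒵 | p ∈ Z} ≤ #𝒵 := by
  have double_count : ∑ p : G, #{Z ∈ 𝒵 | p ∈ Z} = ∑ Z ∈ 𝒵, #Z := by
    simpa [bipartiteAbove, bipartiteBelow] using
      sum_card_bipartiteAbove_eq_sum_card_bipartiteBelow (s := univ) (t := 𝒵)
        fun (p : G) (Z : Finset G) => p ∈ Z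
  have average : ∑ p : G, 2 * #{Z ∈ 𝒵 | p ∈ Z} ≤ ∑ _p : G, #𝒵 :=
    calc ∑ p : G, 2 * #{Z ∈ 𝒵 | p ∈ Z}
      _ = ∑ Z ∈ 𝒵, 2 * #Z := by rw [← mul_sum, double_count, mul_sum]
      _ ≤ ∑ _Z ∈ 𝒵, Fintype.card G := sum_le_sum h𝒵
      _ = ∑ _p : G, #𝒵 := by simp [mul_comm]
  obtain ⟨p, -, hp⟩ := exists_le_of_sum_le univ_nonempty average
  exact ⟨p, hp⟩

theorem exists_card_le_forall_exists_notMem {G : Type*} [Fintype G] [Nonempty G] (t : ℕ)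
    {𝒵 : Finset (Finset G)} (h𝒵 : ∀ Z ∈ 𝒵, 2 * #Z ≤ Fintype.card G) (ht : #𝒵 < 2 ^ t) :
    ∃ H : Finset G, #H ≤ t ∧ ∀ Z ∈ 𝒵, ∃ p ∈ H, p ∉ Z := by
  classical
  induction t generalizing 𝒵 with
  | zero =>
    obtain rfl : 𝒵 = ∅ := by simpa using ht
    exact ⟨∅, by simp⟩
  | succ t ih =>
    obtain ⟨p, hp⟩ := exists_two_mul_card_filter_mem_le h𝒵
    obtain ⟨H, hH, hit⟩ := ih (𝒵 := {Z ∈ 𝒵 | p ∈ Z})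
      (fun Z hZ => h𝒵 Z (mem_of_mem_filter Z hZ)) (by rw [pow_succ] at ht; lia)
    refine ⟨insert p H, (card_insert_le p H).trans (by lia), fun Z hZ => ?_⟩
    by_cases hpZ : p ∈ Z
    · obtain ⟨q, hq, hqZ⟩ := hit Z (mem_filter.2 ⟨hZ, hpZ⟩)
      exact ⟨q, mem_insert_of_mem hq, hqZ⟩
    · exact ⟨p, mem_insert_self p H, hpZ⟩

theorem linearIndependent_of_dual_triangular {R M ι : Type*} [CommRing R] [NoZeroDivisors R]
    [AddCommGroup M] [Module R M] [PartialOrder ι] {v : ι → M} (φ : ι → Module.Dual R M)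
    (diag : ∀ i, φ i (v i) ≠ 0) (upper : ∀ i j, φ i (v j) ≠ 0 → i ≤ j) :
    LinearIndependent R v := by
  classical
  rw [linearIndependent_iff']
  intro s c hc
  by_contra! hne
  obtain ⟨m, hm⟩ := {i ∈ s | c i ≠ 0}.exists_maximal (by simpa [Finset.Nonempty] using hne)
  obtain ⟨hms, hcm⟩ := mem_filter.1 hm.prop
  have hφ : ∑ i ∈ s, c i * φ m (v i) = 0 := by simpa using congrArg (φ m) hc
  rw [sum_eq_single_of_mem m hms] at hφ
  · exact mul_ne_zero hcm (diag m) hφ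
  · intro i his him
    by_contra hi
    have hmi : m ≤ i := upper m i (right_ne_zero_of_mul hi)
    exact him (hm.eq_of_ge (mem_filter.2 ⟨his, left_ne_zero_of_mul hi⟩) hmi)

theorem finrank_restrictDegree (σ R : Type*) [Fintype σ] [CommRing R] [StrongRankCondition R]
    (D : ℕ) : Module.finrank R (restrictDegree σ R D) = (D + 1) ^ Fintype.card σ := by
  classical
  let exponents : {m : σ →₀ ℕ | ∀ i, m i ≤ D} ≃ (σ → Fin (D + 1)) :=
    { toFun := fun m i => ⟨m.1 i, Nat.lt_succ_of_le (m.2 i)⟩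
      invFun := fun e =>
        ⟨Finsupp.equivFunOnFinite.symm fun i => e i, fun i => Nat.le_of_lt_succ (e i).2⟩
      left_inv := fun m => by ext; simp
      right_inv := fun e => by ext; simp }
  rw [restrictDegree, Module.finrank_eq_nat_card_basis (basisRestrictSupport R _),
    Nat.card_congr exponents]
  simp

section ZeroPatterns

variable {τ R G : Type*} [CommRing R] [Fintype G]

open scoped Classical in
/-- The zero pattern of a family of polynomials `f p` at the parameter `a`: the set of those
indices `p` for which `f p` vanishes at `a`. -/
noncomputable def zeroPattern (f : G → MvPolynomial τ R) (a : τ → R) : Finset G :=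
  {p | eval a (f p) = 0}

theorem mem_zeroPattern {f : G → MvPolynomial τ R} {a : τ → R} {p : G} :
    p ∈ zeroPattern f a ↔ eval a (f p) = 0 := by
  simp [zeroPattern]

theorem ncard_range_zeroPattern_le [IsDomain R] [Fintype τ] {D : ℕ} {f : G → MvPolynomial τ R}
    (hf : ∀ p x, (f p).degreeOf x ≤ D) :
    (Set.range (zeroPattern f)).ncard ≤ (Fintype.card G * D + 1) ^ Fintype.card τ := by
  classical
  choose a ha using fun Z : Set.range (zeroPattern f) => Z.2
  let nonvanishing (Z : Set.range (zeroPattern f)) : MvPolynomial τ R := ∏ p ∈ Z.1ᶜ, f p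
  have eval_ne_zero_iff (Y Z : Set.range (zeroPattern f)) :
      eval (a Y) (nonvanishing Z) ≠ 0 ↔ Y ≤ Z := by
    simp only [nonvanishing, map_prod, prod_ne_zero_iff, mem_compl, ne_eq, ← mem_zeroPattern, ha,
      not_imp_not]
    rfl
  have degree_le (Z : Set.range (zeroPattern f)) :
      nonvanishing Z ∈ restrictDegree τ R (Fintype.card G * D) := by
    have hdeg (x : τ) : (nonvanishing Z).degreeOf x ≤ Fintype.card G * D :=
      calc (nonvanishing Z).degreeOf x
        _ ≤ ∑ p ∈ Z.1ᶜ, (f p).degreeOf x := degreeOf_prod_le _ _ _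
        _ ≤ #Z.1ᶜ * D := sum_le_card_nsmul _ _ _ fun p _ => hf p x
        _ ≤ Fintype.card G * D := Nat.mul_le_mul_right D (card_le_univ _)
    exact (mem_restrictDegree τ _ _).2 fun m hm x => degreeOf_le_iff.1 (hdeg x) m hm
  have independent : LinearIndependent R nonvanishing :=
    linearIndependent_of_dual_triangular (fun Z => (aeval (a Z)).toLinearMap)
      (fun Z => (eval_ne_zero_iff Z Z).2 le_rfl) fun Y Z => (eval_ne_zero_iff Y Z).1
  have independent' : LinearIndependent R
      fun Z => (⟨nonvanishing Z, degree_le Z⟩ : restrictDegree τ R (Fintype.card G * D)) :=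
    .of_comp (Submodule.subtype _) independent
  calc (Set.range (zeroPattern f)).ncard
    _ = Fintype.card (Set.range (zeroPattern f)) := Fintype.card_eq_nat_card.symm
    _ ≤ _ := independent'.fintype_card_le_finrank
    _ = _ := finrank_restrictDegree τ R _

theorem exists_card_le_forall_eval_ne_zero [IsDomain R] [Fintype τ] [Nonempty G] {D t : ℕ}
    {f : G → MvPolynomial τ R} (hf : ∀ p x, (f p).degreeOf x ≤ D)
    (ht : (Fintype.card G * D + 1) ^ Fintype.card τ < 2 ^ t) :
    ∃ H : Finset G, #H ≤ t ∧
      ∀ a, 2 * #(zeroPattern f a) ≤ Fintype.card G → ∃ p ∈ H, eval a (f p) ≠ 0 := by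
  classical
  let patterns : Finset (Finset G) := (Set.toFinite (Set.range (zeroPattern f))).toFinset
  have hpatterns : #{Z ∈ patterns | 2 * #Z ≤ Fintype.card G} < 2 ^ t :=
    calc #{Z ∈ patterns | 2 * #Z ≤ Fintype.card G}
      _ ≤ #patterns := card_filter_le _ _
      _ = (Set.range (zeroPattern f)).ncard := (Set.ncard_eq_toFinset_card _).symm
      _ ≤ (Fintype.card G * D + 1) ^ Fintype.card τ := ncard_range_zeroPattern_le hf
      _ < 2 ^ t := ht
  obtain ⟨H, hH, hit⟩ :=
    exists_card_le_forall_exists_notMem t (fun Z hZ => (mem_filter.1 hZ).2) hpatterns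
  refine ⟨H, hH, fun a ha => ?_⟩
  obtain ⟨p, hp, hpa⟩ := hit (zeroPattern f a) (by simp [patterns, ha])
  exact ⟨p, hp, mt mem_zeroPattern.2 hpa⟩

end ZeroPatterns

theorem two_mul_card_zeros_le {R : Type*} [CommRing R] [IsDomain R] [DecidableEq R] {N k : ℕ}
    {S : Finset R} (hS : 2 * (N * k) < #S) {P : MvPolynomial (Fin N) R} (hP : P ≠ 0)
    (hk : ∀ v, P.degreeOf v ≤ k) :
    2 * #{p : Fin N → S | eval (fun x => (p x : R)) P = 0} ≤ Fintype.card (Fin N → S) := by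
  have zeros_le : #{p : Fin N → S | eval (fun x => (p x : R)) P = 0} ≤
      #{x ∈ Fintype.piFinset fun _ => S | eval x P = 0} := by
    refine card_le_card_of_injOn (fun p x => (p x : R)) (fun p hp => ?_) fun p _ q _ hpq => ?_
    · simpa using hp
    · exact funext fun x => Subtype.ext (congrFun hpq x)
  have hS0 : (0 : ℚ≥0) < #S := by exact_mod_cast (Nat.zero_le _).trans_lt hS
  have degree_sum_le : ∑ v, (P.degreeOf v / #S : ℚ≥0) ≤ 1 / 2 :=
    calc ∑ v, (P.degreeOf v / #S : ℚ≥0)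
      _ ≤ ∑ _v : Fin N, (k / #S : ℚ≥0) := by gcongr with v; exact hk v
      _ = (N * k : ℕ) / #S := by simp [mul_div_assoc]
      _ ≤ 1 / 2 := by
        rw [div_le_div_iff₀ hS0 two_pos]
        exact_mod_cast (by lia : N * k * 2 ≤ 1 * #S)
  have schwartz_zippel := (schwartz_zippel_sum_degreeOf hP fun _ => S).trans degree_sum_le
  rw [prod_const, card_univ, Fintype.card_fin,
    div_le_div_iff₀ (pow_pos hS0 N) two_pos] at schwartz_zippel
  norm_cast at schwartz_zippel
  simp only [Fintype.card_pi_const, Fintype.card_coe]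
  lia

theorem exists_subset_range_of_card_le {α : Type*} [Nonempty α] {A : Finset α} {s : ℕ}
    (hA : #A ≤ s) : ∃ v : Fin s → α, (A : Set α) ⊆ Set.range v := by
  obtain ⟨e⟩ : Nonempty (A ↪ Fin s) := Function.Embedding.nonempty_of_card_le (by simpa using hA)
  refine ⟨Function.extend e (↑) fun _ => Classical.arbitrary α, fun x hx => ⟨e ⟨x, hx⟩, ?_⟩⟩
  exact e.injective.extend_apply _ _ _

theorem pow_mul_add_one_le_two_pow {n : ℕ} (hn : 0 < n) (N d : ℕ) :
    n ^ N * d + 1 ≤ 2 ^ (n * N + d) :=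
  calc n ^ N * d + 1 ≤ n ^ N * (d + 1) := by nlinarith [Nat.pow_pos (n := N) hn]
    _ ≤ (2 ^ n) ^ N * 2 ^ d := by gcongr; exacts [Nat.lt_two_pow_self.le, Nat.lt_two_pow_self]
    _ = 2 ^ (n * N + d) := by rw [← pow_mul, pow_add]

section SumProd

variable {σ R : Type*} [CommRing R]

/-- `H` is a hitting set for the class `𝒞`: every nonzero member of `𝒞` is nonzero at some point
of `H`. -/
def IsHittingSet (H : Set (σ → R)) (𝒞 : Set (MvPolynomial σ R)) : Prop :=
  ∀ P, P ≠ 0 → P ∈ 𝒞 → ∃ p ∈ H, eval p P ≠ 0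

theorem IsHittingSet.mono {H : Set (σ → R)} {𝒞 𝒟 : Set (MvPolynomial σ R)}
    (hH : IsHittingSet H 𝒟) (h : 𝒞 ⊆ 𝒟) : IsHittingSet H 𝒞 :=
  fun P hP hPC => hH P hP (h hPC)

/-- `P` is a sum of `T` products of `d` polynomials, each depending on at most `s` variables. -/
def IsSumProd (T d s : ℕ) (P : MvPolynomial σ R) : Prop :=
  ∃ Q : Fin T → Fin d → MvPolynomial σ R, (∀ i j, #(Q i j).vars ≤ s) ∧ P = ∑ i, ∏ j, Q i j

theorem exists_eval_eq_comp_of_card_vars_le [Nonempty σ] {s : ℕ} {q : MvPolynomial σ R}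
    (hq : #q.vars ≤ s) (S : Finset R) :
    ∃ (v : Fin s → σ) (g : (Fin s → S) → R),
      ∀ p : σ → S, eval (fun x => (p x : R)) q = g (p ∘ v) := by
  obtain ⟨v, hv⟩ := exists_subset_range_of_card_le hq
  have factors : (fun p : σ → S => eval (fun x => (p x : R)) q).FactorsThrough (· ∘ v) := by
    intro p p' hpp'
    refine eval₂Hom_congr' rfl (fun x hx _ => ?_) rfl
    obtain ⟨y, rfl⟩ := hv hx
    exact congrArg Subtype.val (congrFun hpp' y)
  obtain ⟨g, hg⟩ := (Function.factorsThrough_iff _).1 factors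
  exact ⟨v, g, congrFun hg⟩

/-- The value at the grid point `p` of an unspecified sum of `T` products of `d` factors, as a
polynomial in the tables of values of the factors: the parameter `(i, j, v, y)` is the contribution
to the factor `Q i j` of a function that reads the coordinates `v`, at the reading `y`. -/
noncomputable def universalSumProd [Fintype σ] {S : Finset R} (T d s : ℕ) (p : σ → S) :
    MvPolynomial (Fin T × Fin d × (Fin s → σ) × (Fin s → S)) R :=
  ∑ i, ∏ j, ∑ v : Fin s → σ, X (i, j, v, p ∘ v)

theorem degreeOf_universalSumProd_le [Fintype σ] [Nontrivial R] {S : Finset R} (T d s : ℕ)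
    (p : σ → S) (x : Fin T × Fin d × (Fin s → σ) × (Fin s → S)) :
    (universalSumProd T d s p).degreeOf x ≤ d := by
  have factor_le (i : Fin T) (j : Fin d) :
      (∑ v : Fin s → σ, X (i, j, v, p ∘ v) : MvPolynomial _ R).degreeOf x ≤ 1 := by
    classical
    refine (degreeOf_sum_le _ _ _).trans (Finset.sup_le fun v _ => ?_)
    rw [degreeOf_X]
    split_ifs <;> simp
  refine (degreeOf_sum_le _ _ _).trans (Finset.sup_le fun i _ => ?_)
  calc _ ≤ ∑ j : Fin d, _ := degreeOf_prod_le _ _ _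
    _ ≤ #(univ : Finset (Fin d)) • 1 := sum_le_card_nsmul _ _ _ fun j _ => factor_le i j
    _ = d := by simp

theorem IsSumProd.exists_eval_universalSumProd [Fintype σ] [Nonempty σ] {T d s : ℕ}
    {P : MvPolynomial σ R} (hP : IsSumProd T d s P) (S : Finset R) :
    ∃ a, ∀ p : σ → S, eval a (universalSumProd T d s p) = eval (fun x => (p x : R)) P := by
  classical
  obtain ⟨Q, hQ, rfl⟩ := hP
  choose v g hg using fun i j => exists_eval_eq_comp_of_card_vars_le (hQ i j) S
  refine ⟨fun (i, j, w, y) => if w = v i j then g i j y else 0, fun p => ?_⟩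
  simp [universalSumProd, hg]

theorem exists_isHittingSet_card_le [IsDomain R] [Infinite R] {N n k : ℕ} (hN : 0 < N)
    (hn : 2 * (N * k) < n) (T d s : ℕ) :
    ∃ H : Finset (Fin N → R), #H ≤ (n * N + d) * (T * d * (N * n) ^ s) + 1 ∧
      IsHittingSet (H : Set (Fin N → R)) {P | (∀ v, P.degreeOf v ≤ k) ∧ IsSumProd T d s P} := by
  classical
  obtain ⟨S, rfl⟩ := Infinite.exists_subset_card_eq R n
  have : Nonempty (Fin N) := ⟨⟨0, hN⟩⟩
  have hS : 0 < #S := (Nat.zero_le _).trans_lt hn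
  have : Nonempty S := (card_pos.1 hS).to_subtype
  have patterns_lt : (Fintype.card (Fin N → S) * d + 1) ^
      Fintype.card (Fin T × Fin d × (Fin s → Fin N) × (Fin s → S)) <
        2 ^ ((#S * N + d) * (T * d * (N * #S) ^ s) + 1) := by
    simp only [Fintype.card_prod, Fintype.card_pi_const, Fintype.card_fin, Fintype.card_coe]
    calc (#S ^ N * d + 1) ^ (T * (d * (N ^ s * #S ^ s)))
      _ ≤ (2 ^ (#S * N + d)) ^ (T * (d * (N ^ s * #S ^ s))) := by
        gcongr; exact pow_mul_add_one_le_two_pow hS N d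
      _ = 2 ^ ((#S * N + d) * (T * d * (N * #S) ^ s)) := by rw [← pow_mul, mul_pow, mul_assoc T]
      _ < _ := Nat.pow_lt_pow_succ one_lt_two
  obtain ⟨H, hH, hit⟩ :=
    exists_card_le_forall_eval_ne_zero (degreeOf_universalSumProd_le T d s) patterns_lt
  refine ⟨H.image fun p x => (p x : R), card_image_le.trans hH, fun P hP ⟨hk, hsum⟩ => ?_⟩
  obtain ⟨a, ha⟩ := hsum.exists_eval_universalSumProd S
  obtain ⟨p, hp, hpa⟩ := hit a (by simpa [zeroPattern, ha] using two_mul_card_zeros_le hn hP hk)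
  exact ⟨_, mem_coe.2 (mem_image_of_mem _ hp), ha p ▸ hpa⟩

end SumProd

theorem add_le_pow_succ {N m x y : ℕ} (hN : 2 ≤ N) (hx : x ≤ N ^ m) (hy : y ≤ N ^ m) :
    x + y ≤ N ^ (m + 1) :=
  calc x + y ≤ N ^ m * 2 := by lia
    _ ≤ N ^ m * N := by gcongr
    _ = N ^ (m + 1) := (pow_succ N m).symm

theorem hittingSet_bound_le_pow {N C T d : ℕ} (hN : 2 ≤ N) (hT : T ≤ N ^ C) (hd : d ≤ N ^ C)
    (s : ℕ) :
    ((2 * (N * N ^ C) + 1) * N + d) * (T * d * (N * (2 * (N * N ^ C) + 1)) ^ s) + 1 ≤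
      N ^ (3 * C + 6 + (C + 4) * s) := by
  have one_le (m : ℕ) : 1 ≤ N ^ m := Nat.one_le_pow _ _ (by lia)
  have side_le : 2 * (N * N ^ C) + 1 ≤ N ^ (C + 3) := by
    refine add_le_pow_succ hN ?_ (one_le _)
    calc 2 * (N * N ^ C) ≤ N * (N * N ^ C) := by gcongr
      _ = N ^ (C + 2) := by ring
  have base_le : (2 * (N * N ^ C) + 1) * N + d ≤ N ^ (C + 5) :=
    add_le_pow_succ hN (Nat.mul_le_mul_right N side_le)
      (hd.trans (Nat.pow_le_pow_right (by lia) (by lia)))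
  rw [show 3 * C + 6 + (C + 4) * s = 3 * C + 5 + (C + 4) * s + 1 by ring]
  refine add_le_pow_succ hN ?_ (one_le _)
  calc _ ≤ N ^ (C + 5) * (N ^ C * N ^ C * (N * N ^ (C + 3)) ^ s) := by gcongr
    _ = N ^ (3 * C + 5 + (C + 4) * s) := by rw [← pow_succ', ← pow_mul]; ring

theorem exists_isHittingSet_card_le_pow (R : Type*) [CommRing R] [IsDomain R] [Infinite R]
    {N : ℕ} (hN : 2 ≤ N) (C s : ℕ) :
    ∃ H : Finset (Fin N → R), #H ≤ N ^ (5 * C + 8 + (C + 4) * s) ∧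
      IsHittingSet (H : Set (Fin N → R)) {P | (∀ v, P.degreeOf v ≤ N ^ C) ∧
        ∃ T ≤ N ^ C, ∃ d ≤ N ^ C, IsSumProd T d s P} := by
  classical
  choose H hcard hit using fun T d => exists_isHittingSet_card_le (R := R) (N := N) (k := N ^ C)
    (by lia) (Nat.lt_succ_self _) T d s
  have sizes_le : N ^ C + 1 ≤ N ^ (C + 1) :=
    add_le_pow_succ hN le_rfl (Nat.one_le_pow C N (by lia))
  refine ⟨(range (N ^ C + 1) ×ˢ range (N ^ C + 1)).biUnion fun x => H x.1 x.2, ?_, ?_⟩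
  · calc _ ≤ #(range (N ^ C + 1) ×ˢ range (N ^ C + 1)) * N ^ (3 * C + 6 + (C + 4) * s) := by
          refine card_biUnion_le_card_mul _ _ _ fun x hx => (hcard x.1 x.2).trans ?_
          simp only [mem_product, mem_range_succ_iff] at hx
          exact hittingSet_bound_le_pow hN hx.1 hx.2 s
      _ ≤ (N ^ (C + 1) * N ^ (C + 1)) * N ^ (3 * C + 6 + (C + 4) * s) := by
          rw [card_product, card_range]
          gcongr
      _ = N ^ (5 * C + 8 + (C + 4) * s) := by ring
  · rintro P hP ⟨hdeg, T, hT, d, hd, hsum⟩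
    obtain ⟨p, hp, hpP⟩ := hit T d P hP ⟨hdeg, hsum⟩
    refine ⟨p, mem_coe.2 (mem_biUnion.2 ⟨(T, d), ?_, hp⟩), hpP⟩
    simp only [mem_product, mem_range_succ_iff]
    exact ⟨hT, hd⟩

open Real in
theorem eventually_pow_le_exp_rpow (A B : ℕ) {μ ε : ℝ} (hμ : μ < ε) (hε : 0 < ε) :
    ∀ᶠ N : ℕ in atTop, (N : ℝ) ^ (A + B * ⌊(N : ℝ) ^ μ⌋₊) ≤ exp ((N : ℝ) ^ ε) := by
  have log_rpow_mul : (fun x : ℝ => x ^ μ * log x) =o[atTop] fun x => x ^ ε := by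
    refine ((Asymptotics.isBigO_refl (fun x : ℝ => x ^ μ) atTop).mul_isLittleO
      (isLittleO_log_rpow_atTop (sub_pos.2 hμ))).congr' .rfl ?_
    filter_upwards [eventually_gt_atTop 0] with x hx
    rw [← rpow_add hx, add_sub_cancel]
  have exponent : (fun x : ℝ => A * log x + B * (x ^ μ * log x)) =o[atTop] fun x => x ^ ε :=
    ((isLittleO_log_rpow_atTop hε).const_mul_left _).add (log_rpow_mul.const_mul_left _)
  filter_upwards [tendsto_natCast_atTop_atTop.eventually (exponent.bound one_pos),
    eventually_gt_atTop 0] with N hbound hN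
  rw [one_mul, norm_of_nonneg (rpow_nonneg N.cast_nonneg ε)] at hbound
  rw [← exp_log (Nat.cast_pos.2 hN), ← exp_nat_mul, exp_log (Nat.cast_pos.2 hN), exp_le_exp]
  calc ((A + B * ⌊(N : ℝ) ^ μ⌋₊ : ℕ) : ℝ) * log N
    _ ≤ (A + B * (N : ℝ) ^ μ) * log N := by
      push_cast
      gcongr
      exact Nat.floor_le (by positivity)
    _ = A * log N + B * ((N : ℝ) ^ μ * log N) := by ring
    _ ≤ (N : ℝ) ^ ε := (le_norm_self _).trans hbound

/-- The class `C_N` of the theorem with the bounds `(log N) ^ c` on the number of summands and on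
the individual degree relaxed to `N ^ c`. -/
def sumProdClass (R : Type*) [CommRing R] (N : ℕ) (c μ : ℝ) : Set (MvPolynomial (Fin N) R) :=
  {P | (∀ v, (P.degreeOf v : ℝ) ≤ (N : ℝ) ^ c) ∧
    ∃ T d : ℕ, (T : ℝ) ≤ (N : ℝ) ^ c ∧ (d : ℝ) ≤ (N : ℝ) ^ c ∧ IsSumProd T d ⌊(N : ℝ) ^ μ⌋₊ P}

theorem setOf_log_bounds_subset_sumProdClass {R : Type*} [CommRing R] {N : ℕ} {c μ : ℝ}
    (hc : 0 ≤ c) :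
    {P | ∃ (T d k : ℕ) (Q : Fin T → Fin d → MvPolynomial (Fin N) R),
      (T : ℝ) < Real.log N ^ c ∧ (k : ℝ) < Real.log N ^ c ∧ (d : ℝ) < (N : ℝ) ^ c ∧
      (∀ v, P.degreeOf v ≤ k) ∧ (∀ i j, (#(Q i j).vars : ℝ) ≤ (N : ℝ) ^ μ) ∧
      P = ∑ i, ∏ j, Q i j} ⊆ sumProdClass R N c μ := by
  rintro P ⟨T, d, k, Q, hT, hk, hd, hdeg, hvars, hP⟩
  have log_rpow_le : Real.log N ^ c ≤ (N : ℝ) ^ c :=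
    Real.rpow_le_rpow (Real.log_natCast_nonneg N) (Real.log_le_self N.cast_nonneg) hc
  exact ⟨fun v => (Nat.cast_le.2 (hdeg v)).trans (hk.le.trans log_rpow_le), T, d,
    hT.le.trans log_rpow_le, hd.le, Q, fun i j => Nat.le_floor (hvars i j), hP⟩

theorem stmt1_general (c : ℝ) {μ : ℝ} (hμ : μ < 1) :
    ∃ ε : ℝ, ε < 1 ∧ ∀ᶠ N : ℕ in atTop,
      ∀ (R : Type*) [CommRing R] [IsDomain R] [Infinite R], ∃ H : Finset (Fin N → R),
        (#H : ℝ) ≤ Real.exp ((N : ℝ) ^ ε) ∧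
        IsHittingSet (H : Set (Fin N → R)) (sumProdClass R N c μ) := by
  obtain ⟨ε, hε, hε1⟩ := exists_between (max_lt hμ zero_lt_one)
  obtain ⟨hμε, hε0⟩ := max_lt_iff.1 hε
  let C := ⌈c⌉₊
  refine ⟨ε, hε1, ?_⟩
  filter_upwards [eventually_pow_le_exp_rpow (5 * C + 8) (C + 4) hμε hε0,
    eventually_ge_atTop 2] with N hexp hN R _ _ _
  obtain ⟨H, hcard, hit⟩ := exists_isHittingSet_card_le_pow R hN C ⌊(N : ℝ) ^ μ⌋₊
  have le_pow {m : ℕ} (hm : (m : ℝ) ≤ (N : ℝ) ^ c) : m ≤ N ^ C := by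
    have rpow_le : (N : ℝ) ^ c ≤ (N : ℝ) ^ (C : ℝ) :=
      Real.rpow_le_rpow_of_exponent_le (by exact_mod_cast (by lia : 1 ≤ N)) (Nat.le_ceil c)
    exact_mod_cast hm.trans (rpow_le.trans_eq (Real.rpow_natCast _ _))
  refine ⟨H, le_trans (by exact_mod_cast hcard) hexp, hit.mono ?_⟩
  rintro P ⟨hdeg, T, d, hT, hd, hsum⟩
  exact ⟨fun v => le_pow (hdeg v), T, le_pow hT, d, le_pow hd, hsum⟩

/-- For constants `c > 0` and `0 ≤ μ < 1/2` there exists a constant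
`ε < 1` (depending only on `c` and `μ`) such that for all sufficiently large `N` there is a
set `H ⊆ F^N` of size at most `exp(N^ε)` that is a hitting set for the class of nonzero
polynomials `P` in `N` variables, of individual degree at most `k`, expressible as
`P = ∑_{i=1}^T ∏_{j=1}^d Q_{ij}` with `T < (log N)^c`, `k < (log N)^c`, `d < N^c` and each
`Q_{ij}` depending on at most `N^μ` variables. -/
theorem stmt1 (F : Type*) [Field F] [CharZero F] (c μ : ℝ)
    (hc : 0 < c) (hμ0 : 0 ≤ μ) (hμ : μ < 1 / 2) :
    ∃ ε : ℝ, ε < 1 ∧ ∃ N₀ : ℕ, ∀ N : ℕ, N₀ ≤ N →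
      ∃ H : Finset (Fin N → F),
        (H.card : ℝ) ≤ Real.exp ((N : ℝ) ^ ε) ∧
        ∀ P : MvPolynomial (Fin N) F, P ≠ 0 →
          (∃ (T d k : ℕ) (Q : Fin T → Fin d → MvPolynomial (Fin N) F),
            (T : ℝ) < Real.log N ^ c ∧
            (k : ℝ) < Real.log N ^ c ∧
            (d : ℝ) < (N : ℝ) ^ c ∧
            (∀ v : Fin N, P.degreeOf v ≤ k) ∧
            (∀ i j, ((Q i j).vars.card : ℝ) ≤ (N : ℝ) ^ μ) ∧
            P = ∑ i, ∏ j, Q i j) →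
          ∃ p ∈ H, eval p P ≠ 0 := by
  obtain ⟨ε, hε, h⟩ := stmt1_general c (hμ.trans one_half_lt_one)
  exact ⟨ε, hε, (eventually_atTop.1 h).imp fun N₀ hN₀ N hN => (hN₀ N hN F).imp fun H hH =>
    ⟨hH.1, hH.2.mono (setOf_log_bounds_subset_sumProdClass hc.le)⟩⟩
end
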